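/- arXiv:cs/9811019 — 2 statements merged into one kernel-verified Lean document; each statement's English description precedes it below -/
import Mathlib

section
/- There exists a simple closed polygonal chain in ℝ³ that is unknotted — its image (the union of its edges) is the boundary of an embedded topological disk, i.e., there is a continuous injective map from the closed unit disk into ℝ³ mapping the unit circle onto the union of the edges — yet is locked, i.e., cannot be convexified by any motion. -/
noncomputable section

/-- Three-dimensional Euclidean space. -/
abbrev E3 := EuclideanSpace ℝ (Fin 3)

/-- `v 0, …, v (n-1)` is a simple closed polygonal chain (polygon) in ℝ³: `n ≥ 3`,
the vertices are pairwise distinct, and two edges `[v i, v ((i+1) % n)]`,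
`[v j, v ((j+1) % n)]` (for `i < j < n`) are disjoint unless they are cyclically
consecutive, in which case they meet exactly in their common vertex. -/
def IsSimpleClosedChain (n : ℕ) (v : ℕ → E3) : Prop :=
  3 ≤ n ∧
  (∀ i j, i < n → j < n → i ≠ j → v i ≠ v j) ∧
  (∀ i j, i < j → j < n →
    segment ℝ (v i) (v ((i + 1) % n)) ∩ segment ℝ (v j) (v ((j + 1) % n)) =
      if i + 1 = j then {v j}
      else if i = 0 ∧ j = n - 1 then {v 0}
      else ∅)

/-- A motion of the closed chain `v 0, …, v (n-1)`: a continuous family of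
configurations over `[0,1]`, starting at `v`, remaining a simple closed chain at
all times, and preserving all edge lengths. -/
def IsClosedChainMotion (n : ℕ) (v : ℕ → E3) (γ : ℝ → ℕ → E3) : Prop :=
  (∀ i, i < n → ContinuousOn (fun t => γ t i) (Set.Icc 0 1)) ∧
  (∀ i, i < n → γ 0 i = v i) ∧
  (∀ t ∈ Set.Icc (0 : ℝ) 1, IsSimpleClosedChain n (γ t)) ∧
  (∀ t ∈ Set.Icc (0 : ℝ) 1, ∀ i, i < n →
    ‖γ t ((i + 1) % n) - γ t i‖ = ‖v ((i + 1) % n) - v i‖)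

/-- The configuration `w 0, …, w (n-1)` is a planar convex polygon: all vertices lie
in a common plane (2-dimensional affine subspace), they are in strictly convex
position (no vertex is in the convex hull of the others), and the cyclic order of
the chain agrees with the order of the vertices along the boundary of their convex
hull: each edge lies on a supporting line of the configuration, with all other
vertices strictly on one side. -/
def IsConvexConfiguration (n : ℕ) (w : ℕ → E3) : Prop :=
  (∃ S : AffineSubspace ℝ E3, Module.finrank ℝ S.direction = 2 ∧
    ∀ i, i < n → w i ∈ S) ∧
  (∀ i, i < n → w i ∉ convexHull ℝ {x | ∃ j, j < n ∧ j ≠ i ∧ x = w j}) ∧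
  (∀ i, i < n → ∃ f : E3 →ₗ[ℝ] ℝ,
    f (w i) = f (w ((i + 1) % n)) ∧
    ∀ j, j < n → j ≠ i → j ≠ (i + 1) % n → f (w j) < f (w i))

/-- The closed chain `v 0, …, v (n-1)` can be convexified: there is a motion whose
final configuration is a planar convex polygon. -/
def CanBeConvexified (n : ℕ) (v : ℕ → E3) : Prop :=
  ∃ γ : ℝ → ℕ → E3, IsClosedChainMotion n v γ ∧ IsConvexConfiguration n (γ 1)

/-- The closed chain `v 0, …, v (n-1)` is unknotted: the union of its edges bounds an
embedded topological disk, i.e. there is a continuous injective map `φ` from the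
closed unit disk of ℝ² into ℝ³ mapping the unit circle onto the union of the edges.
(Since the disk is compact, the restriction of such a `φ` to the unit circle is
automatically a homeomorphism onto its image.) -/
def IsUnknotted (n : ℕ) (v : ℕ → E3) : Prop :=
  ∃ φ : EuclideanSpace ℝ (Fin 2) → E3,
    ContinuousOn φ (Metric.closedBall 0 1) ∧
    Set.InjOn φ (Metric.closedBall 0 1) ∧
    φ '' Metric.sphere 0 1 =
      {x | ∃ i, i < n ∧ x ∈ segment ℝ (v i) (v ((i + 1) % n))}

/-- The determinant of three vectors of `ℝ³`. -/
def det3 (x y z : E3) : ℝ :=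
  x 0 * (y 1 * z 2 - y 2 * z 1) - x 1 * (y 0 * z 2 - y 2 * z 0) + x 2 * (y 0 * z 1 - y 1 * z 0)

lemma det3_add_left (x x' y z : E3) : det3 (x + x') y z = det3 x y z + det3 x' y z := by
  simp only [det3, PiLp.add_apply]; ring

lemma det3_smul_left (a : ℝ) (x y z : E3) : det3 (a • x) y z = a * det3 x y z := by
  simp only [det3, PiLp.smul_apply, smul_eq_mul]; ring

lemma det3_rotate (x y z : E3) : det3 x y z = det3 y z x := by
  simp only [det3]; ring

lemma det3_swap (x y z : E3) : det3 x y z = - det3 y x z := by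
  simp only [det3]; ring

lemma det3_plucker (a b c d : E3) :
    det3 b c d • a - det3 a c d • b + det3 a b d • c - det3 a b c • d = 0 := by
  ext i
  fin_cases i <;> simp [det3] <;> ring

lemma continuous_det3 {X : Type*} [TopologicalSpace X] {f g h : X → E3}
    (hf : Continuous f) (hg : Continuous g) (hh : Continuous h) :
    Continuous fun t => det3 (f t) (g t) (h t) := by
  unfold det3
  fun_prop

/-- Linear dependence of three vectors with vanishing determinant. -/
lemma exists_dependence_of_det3_eq_zero {x y z : E3} (h : det3 x y z = 0) :
    ∃ c : Fin 3 → ℝ, c ≠ 0 ∧ c 0 • x + c 1 • y + c 2 • z = 0 := by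
  let M : Matrix (Fin 3) (Fin 3) ℝ := ![fun i => x i, fun i => y i, fun i => z i]
  have hM : M.det = 0 := by
    rw [← h, Matrix.det_fin_three]
    simp [M, det3]
    ring
  obtain ⟨c, hc, hcM⟩ := Matrix.exists_vecMul_eq_zero_iff.2 hM
  refine ⟨c, hc, ?_⟩
  ext i
  have := congrFun hcM i
  simp only [Matrix.vecMul, dotProduct, Fin.sum_univ_three, Pi.zero_apply] at this
  simpa [M] using this

/-- The segments `[p, q]` and `[r, s]` do not meet. -/
def SegmentsAvoid (p q r s : E3) : Prop :=
  ∀ a ∈ Set.Icc (0 : ℝ) 1, ∀ b ∈ Set.Icc (0 : ℝ) 1,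
    (1 - a) • p + a • q ≠ (1 - b) • r + b • s

/-- The trap, relative to the vertex `A` (placed at the origin): seen from `A`, the edges
`u₁u₂` and `u₃u₄` cross, with the second one in front, and the long edges `b` and `c` pass
through the triangle cut out by this crossing and `u₂`, `u₃`; moreover `u₁u₂` passes through
the triangle spanned by the origin, `u₄` and `b`. -/
def IsCaught (u₁ u₂ u₃ u₄ b c : E3) : Prop :=
  ∃ α β l τ p₁ p₂ p₃ τ' q₁ q₂ q₃ g ρ σ : unitInterval,
    (1 - β : ℝ) • u₃ + (β : ℝ) • u₄ = (l : ℝ) • ((1 - α : ℝ) • u₁ + (α : ℝ) • u₂) ∧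
    (τ : ℝ) • b = (p₁ : ℝ) • ((1 - α : ℝ) • u₁ + (α : ℝ) • u₂) + (p₂ : ℝ) • u₂ + (p₃ : ℝ) • u₃ ∧
    (p₁ + p₂ + p₃ : ℝ) = 1 ∧
    (τ' : ℝ) • c = (q₁ : ℝ) • ((1 - α : ℝ) • u₁ + (α : ℝ) • u₂) + (q₂ : ℝ) • u₂ + (q₃ : ℝ) • u₃ ∧
    (q₁ + q₂ + q₃ : ℝ) = 1 ∧
    (1 - g : ℝ) • u₁ + (g : ℝ) • u₂ = (ρ : ℝ) • u₄ + (σ : ℝ) • b ∧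
    (ρ + σ : ℝ) ≤ 1 ∧
    0 ≤ det3 ((1 - α : ℝ) • u₁ + (α : ℝ) • u₂) u₂ u₃

/-- The segment from the origin to `b` crosses the trap triangle in its interior, in terms of
signs of determinants. -/
def Pierces (u₁ u₂ u₃ u₄ b : E3) : Prop :=
  0 < det3 u₁ u₂ b ∧ 0 < det3 u₂ u₃ b ∧ 0 < det3 u₃ u₄ b ∧
    det3 u₁ u₂ u₃ < det3 u₂ u₃ b - det3 u₁ u₃ b + det3 u₁ u₂ b

/-- The open counterpart of `IsCaught`, in terms of signs of determinants. -/
def IsStrictlyCaught (u₁ u₂ u₃ u₄ b c : E3) : Prop :=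
  0 < det3 u₁ u₂ u₃ ∧ 0 < det3 u₂ u₃ u₄ ∧ det3 u₁ u₂ u₄ < 0 ∧ det3 u₁ u₃ u₄ < 0 ∧
    det3 u₂ u₃ u₄ - det3 u₁ u₃ u₄ < det3 u₁ u₂ u₃ - det3 u₁ u₂ u₄ ∧
    Pierces u₁ u₂ u₃ u₄ b ∧ Pierces u₁ u₂ u₃ u₄ c ∧
    0 < det3 u₁ u₄ b ∧ det3 u₂ u₄ b < 0 ∧
    det3 u₁ u₂ b - det3 u₁ u₂ u₄ < det3 u₁ u₄ b - det3 u₂ u₄ b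

/-! ### Strictly caught configurations are caught -/

lemma Pierces.exists_crossing {u₁ u₂ u₃ u₄ b : E3} (hb : Pierces u₁ u₂ u₃ u₄ b)
    (h123 : 0 < det3 u₁ u₂ u₃) {α β l : ℝ} (hα1 : α < 1)
    (hβ0 : 0 < β) (hl : 0 < l)
    (hX : (1 - β) • u₃ + β • u₄ = l • ((1 - α) • u₁ + α • u₂)) :
    ∃ τ p₁ p₂ p₃ : unitInterval,
      (τ : ℝ) • b = (p₁ : ℝ) • ((1 - α) • u₁ + α • u₂) + (p₂ : ℝ) • u₂ + (p₃ : ℝ) • u₃ ∧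
      (p₁ + p₂ + p₃ : ℝ) = 1 := by
  obtain ⟨h12, h23, h34, hs⟩ := hb
  set s := det3 u₂ u₃ b - det3 u₁ u₃ b + det3 u₁ u₂ b with hsdef
  have hs0 : 0 < s := h123.trans hs
  have hα' : 0 < 1 - α := by linarith
  have hp2 : 0 ≤ -((1 - α) * det3 u₁ u₃ b) - α * det3 u₂ u₃ b := by
    have : l * (-((1 - α) * det3 u₁ u₃ b) - α * det3 u₂ u₃ b) = β * det3 u₃ u₄ b := by
      have h := congrArg (fun x => det3 x u₃ b) hX
      simp only [det3_add_left, det3_smul_left] at h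
      have h0 : det3 u₃ u₃ b = 0 := by simp only [det3]; ring
      rw [h0, det3_swap u₄ u₃ b] at h
      linarith
    have h2 : 0 < l * (-((1 - α) * det3 u₁ u₃ b) - α * det3 u₂ u₃ b) := by
      rw [this]; positivity
    exact (pos_of_mul_pos_right h2 hl.le).le
  have hpl := det3_plucker u₁ u₂ u₃ b
  set D := det3 u₁ u₂ u₃
  set d12 := det3 u₁ u₂ b
  set d23 := det3 u₂ u₃ b
  set d13 := det3 u₁ u₃ b
  have e1 : 0 ≤ d23 / ((1 - α) * s) := by positivity
  have e2 : 0 ≤ (-((1 - α) * d13) - α * d23) / ((1 - α) * s) := by positivity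
  have e3 : 0 ≤ d12 / s := by positivity
  have esum : d23 / ((1 - α) * s) + (-((1 - α) * d13) - α * d23) / ((1 - α) * s) + d12 / s = 1 := by
    field_simp
    rw [hsdef]; ring
  refine ⟨⟨D / s, by positivity, (div_le_one hs0).2 hs.le⟩,
    ⟨_, e1, by linarith⟩, ⟨_, e2, by linarith⟩, ⟨_, e3, by linarith⟩, ?_, esum⟩
  have hb : D • b = d23 • u₁ - d13 • u₂ + d12 • u₃ := (sub_eq_zero.1 hpl).symm
  have : (D / s) • b = s⁻¹ • (D • b) := by rw [smul_smul]; congr 1; field_simp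
  simp only
  rw [this, hb]
  match_scalars <;> field_simp
  ring

lemma IsStrictlyCaught.isCaught {u₁ u₂ u₃ u₄ b c : E3}
    (h : IsStrictlyCaught u₁ u₂ u₃ u₄ b c) : IsCaught u₁ u₂ u₃ u₄ b c := by
  obtain ⟨h123, h234, h124, h134, hl, hb, hc, h14, h24, hσ⟩ := h
  have hpl := det3_plucker u₁ u₂ u₃ u₄
  have hplb := det3_plucker u₁ u₂ u₄ b
  have h12b := hb.1
  set A := det3 u₂ u₃ u₄ - det3 u₁ u₃ u₄ with hA
  set B := det3 u₁ u₂ u₃ - det3 u₁ u₂ u₄ with hB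
  set G := det3 u₁ u₄ b - det3 u₂ u₄ b with hG
  have hA0 : 0 < A := by linarith
  have hB0 : 0 < B := by linarith
  have hG0 : 0 < G := by linarith
  have hα0 : 0 < -det3 u₁ u₃ u₄ / A := div_pos (by linarith) hA0
  have hα1 : -det3 u₁ u₃ u₄ / A < 1 := (div_lt_one hA0).2 (by linarith)
  have hβ0 : 0 < det3 u₁ u₂ u₃ / B := div_pos (by linarith) hB0
  have hβ1 : det3 u₁ u₂ u₃ / B < 1 := (div_lt_one hB0).2 (by linarith)
  have hl0 : 0 < A / B := div_pos hA0 hB0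
  have hl1 : A / B ≤ 1 := (div_le_one hB0).2 hl.le
  have hX : (1 - det3 u₁ u₂ u₃ / B) • u₃ + (det3 u₁ u₂ u₃ / B) • u₄ =
      (A / B) • ((1 - -det3 u₁ u₃ u₄ / A) • u₁ + (-det3 u₁ u₃ u₄ / A) • u₂) := by
    rw [← sub_eq_zero]
    have : (-B⁻¹) • (det3 u₂ u₃ u₄ • u₁ - det3 u₁ u₃ u₄ • u₂ + det3 u₁ u₂ u₄ • u₃ -
        det3 u₁ u₂ u₃ • u₄) = 0 := by rw [hpl, smul_zero]
    rw [← this]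
    match_scalars <;> field_simp <;> simp only [hA, hB] <;> ring
  obtain ⟨τ, p₁, p₂, p₃, hp, hps⟩ := hb.exists_crossing h123 hα1 hβ0 hl0 hX
  obtain ⟨τ', q₁, q₂, q₃, hq, hqs⟩ := hc.exists_crossing h123 hα1 hβ0 hl0 hX
  have hg0 : 0 < det3 u₁ u₄ b / G := by positivity
  have hg1 : det3 u₁ u₄ b / G ≤ 1 := (div_le_one hG0).2 (by linarith)
  have hρ0 : 0 ≤ det3 u₁ u₂ b / G := by positivity
  have hσ0 : 0 ≤ -det3 u₁ u₂ u₄ / G := div_nonneg (by linarith) hG0.le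
  have hρσ : det3 u₁ u₂ b / G + -det3 u₁ u₂ u₄ / G ≤ 1 := by
    rw [← add_div, div_le_one hG0]; linarith
  refine ⟨⟨_, hα0.le, hα1.le⟩, ⟨_, hβ0.le, hβ1.le⟩, ⟨_, hl0.le, hl1⟩, τ, p₁, p₂, p₃, τ', q₁, q₂, q₃,
    ⟨_, hg0.le, hg1⟩, ⟨_, hρ0, by linarith⟩, ⟨_, hσ0, by linarith⟩,
    hX, hp, hps, hq, hqs, ?_, hρσ, ?_⟩
  · rw [← sub_eq_zero]
    have : (-G⁻¹) • (det3 u₂ u₄ b • u₁ - det3 u₁ u₄ b • u₂ + det3 u₁ u₂ b • u₄ -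
        det3 u₁ u₂ u₄ • b) = 0 := by rw [hplb, smul_zero]
    rw [← this]
    match_scalars <;> field_simp
    simp only [hG]
    ring
  · simp only [det3_add_left, det3_smul_left]
    have h0 : det3 u₂ u₂ u₃ = 0 := by simp only [det3]; ring
    rw [h0, mul_zero, add_zero]
    exact mul_nonneg (by linarith) h123.le

/-! ### Caught configurations of a simple chain with the prescribed lengths are strictly caught -/

lemma norm_sub_combination_le {y x₁ x₂ x₃ : E3} {R p₁ p₂ p₃ : ℝ} (h₁ : 0 ≤ p₁) (h₂ : 0 ≤ p₂)
    (h₃ : 0 ≤ p₃) (hs : p₁ + p₂ + p₃ = 1) (hx₁ : ‖y - x₁‖ ≤ R) (hx₂ : ‖y - x₂‖ ≤ R)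
    (hx₃ : ‖y - x₃‖ ≤ R) : ‖y - (p₁ • x₁ + p₂ • x₂ + p₃ • x₃)‖ ≤ R := by
  have e : y - (p₁ • x₁ + p₂ • x₂ + p₃ • x₃) =
      p₁ • (y - x₁) + p₂ • (y - x₂) + p₃ • (y - x₃) := by
    have hy : y = (p₁ + p₂ + p₃) • y := by rw [hs, one_smul]
    nth_rewrite 1 [hy]
    module
  rw [e]
  calc ‖p₁ • (y - x₁) + p₂ • (y - x₂) + p₃ • (y - x₃)‖
      ≤ ‖p₁ • (y - x₁)‖ + ‖p₂ • (y - x₂)‖ + ‖p₃ • (y - x₃)‖ := norm_add₃_le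
    _ = p₁ * ‖y - x₁‖ + p₂ * ‖y - x₂‖ + p₃ * ‖y - x₃‖ := by
        rw [norm_smul, norm_smul, norm_smul, Real.norm_of_nonneg h₁, Real.norm_of_nonneg h₂,
          Real.norm_of_nonneg h₃]
    _ ≤ p₁ * R + p₂ * R + p₃ * R := by gcongr
    _ = R := by rw [← add_mul, ← add_mul, hs, one_mul]

lemma norm_sub_lineCombination_le {y x₁ x₂ : E3} {R a : ℝ} (h₀ : 0 ≤ a) (h₁ : a ≤ 1)
    (hx₁ : ‖y - x₁‖ ≤ R) (hx₂ : ‖y - x₂‖ ≤ R) : ‖y - ((1 - a) • x₁ + a • x₂)‖ ≤ R := by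
  simpa using norm_sub_combination_le (sub_nonneg.2 h₁) h₀ le_rfl (by ring) hx₁ hx₂ hx₂

/-- If the segment `[0, b]` avoids the three sides of the trap triangle, then a combination
expressing a point of it with total weight at least one has positive weights. -/
lemma weights_pos_of_avoid {u₁ u₂ u₃ u₄ b : E3} {α β l τ p₁ p₂ p₃ : ℝ}
    (h12 : SegmentsAvoid u₁ u₂ 0 b) (h23 : SegmentsAvoid u₂ u₃ 0 b) (h34 : SegmentsAvoid u₃ u₄ 0 b)
    (hα : α ∈ Set.Icc (0 : ℝ) 1) (hβ : β ∈ Set.Icc (0 : ℝ) 1) (hτ : τ ∈ Set.Icc (0 : ℝ) 1)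
    (hl0 : 0 < l) (hl1 : l ≤ 1)
    (hX : (1 - β) • u₃ + β • u₄ = l • ((1 - α) • u₁ + α • u₂))
    (hp₁ : 0 ≤ p₁) (hp₂ : 0 ≤ p₂) (hp₃ : 0 ≤ p₃) (hs : 1 ≤ p₁ + p₂ + p₃)
    (hb : τ • b = p₁ • ((1 - α) • u₁ + α • u₂) + p₂ • u₂ + p₃ • u₃) :
    0 < p₁ ∧ 0 < p₂ ∧ 0 < p₃ := by
  obtain ⟨hα0, hα1⟩ := hα
  obtain ⟨hβ0, hβ1⟩ := hβ
  obtain ⟨hτ0, hτ1⟩ := hτ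
  have scaled : ∀ s : ℝ, 1 ≤ s → τ / s ∈ Set.Icc (0 : ℝ) 1 := fun s hs =>
    ⟨by positivity, (div_le_one (by linarith)).2 (by linarith)⟩
  have unscale : ∀ s : ℝ, 1 ≤ s → (1 - τ / s) • (0 : E3) + (τ / s) • b = s⁻¹ • (τ • b) := by
    intro s _
    rw [smul_zero, zero_add, smul_smul, div_eq_inv_mul]
  refine ⟨hp₁.lt_of_ne' ?_, hp₂.lt_of_ne' ?_, hp₃.lt_of_ne' ?_⟩
  · rintro rfl
    have hs' : 1 ≤ p₂ + p₃ := by linarith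
    refine h23 (p₃ / (p₂ + p₃)) ⟨by positivity, (div_le_one (by linarith)).2 (by linarith)⟩
      _ (scaled _ hs') ?_
    rw [unscale _ hs', hb]
    match_scalars <;> field_simp <;> ring
  · rintro rfl
    have hl' : p₁ ≤ p₁ / l := by rw [le_div_iff₀ hl0]; nlinarith
    have hs' : 1 ≤ p₁ / l + p₃ := by linarith
    have hs0 : 0 < p₁ / l + p₃ := by linarith
    have hle : (p₁ / l) / (p₁ / l + p₃) ≤ 1 := (div_le_one hs0).2 (by linarith)
    have hge : 0 ≤ (p₁ / l) / (p₁ / l + p₃) := by positivity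
    refine h34 ((p₁ / l) / (p₁ / l + p₃) * β) ⟨by positivity, by nlinarith⟩ _ (scaled _ hs') ?_
    have hX' : (1 - α) • u₁ + α • u₂ = l⁻¹ • ((1 - β) • u₃ + β • u₄) := by
      rw [hX, smul_smul, inv_mul_cancel₀ hl0.ne', one_smul]
    rw [unscale _ hs', hb, hX']
    have hs1 : p₁ + l * p₃ ≠ 0 := by
      have : p₁ + l * p₃ = (p₁ / l + p₃) * l := by field_simp
      rw [this]; positivity
    match_scalars <;> field_simp <;> ring
  · rintro rfl
    have hs' : 1 ≤ p₁ + p₂ := by linarith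
    have hs0 : 0 < p₁ + p₂ := by linarith
    have hα' : (p₁ * α + p₂) / (p₁ + p₂) ≤ 1 := (div_le_one hs0).2 (by nlinarith)
    refine h12 ((p₁ * α + p₂) / (p₁ + p₂)) ⟨by positivity, hα'⟩ _ (scaled _ hs') ?_
    rw [unscale _ hs', hb]
    match_scalars <;> field_simp <;> ring

/-- Subtracting a suitable multiple of `c` from a positive vector `p` annihilates a coordinate
while keeping the others nonnegative, provided `c` has a positive coordinate. -/
lemma exists_sub_mul_eq_zero {p c : Fin 3 → ℝ} (hp : ∀ i, 0 < p i) (hc : ∃ i, 0 < c i) :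
    ∃ t : ℝ, 0 ≤ t ∧ (∀ i, 0 ≤ p i - t * c i) ∧ ∃ i, p i - t * c i = 0 := by
  obtain ⟨i₀, hi₀⟩ := hc
  obtain ⟨i, hi, hmin⟩ := Finset.exists_min_image (Finset.univ.filter fun i => 0 < c i)
    (fun i => p i / c i) ⟨i₀, by simpa using hi₀⟩
  have hi : 0 < c i := by simpa using hi
  have ht : 0 < p i / c i := div_pos (hp i) hi
  refine ⟨p i / c i, ht.le, fun j => ?_, i, by field_simp; ring⟩
  rcases lt_or_ge 0 (c j) with hj | hj
  · have := hmin j (by simpa using hj)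
    rw [le_div_iff₀ hj] at this
    linarith
  · nlinarith [hp j]

/-- The trap triangle is nondegenerate. -/
lemma det3_ne_zero_of_avoid {u₁ u₂ u₃ u₄ b : E3} {α β l τ p₁ p₂ p₃ : ℝ}
    (h12 : SegmentsAvoid u₁ u₂ 0 b) (h23 : SegmentsAvoid u₂ u₃ 0 b) (h34 : SegmentsAvoid u₃ u₄ 0 b)
    (hα : α ∈ Set.Icc (0 : ℝ) 1) (hβ : β ∈ Set.Icc (0 : ℝ) 1) (hτ : τ ∈ Set.Icc (0 : ℝ) 1)
    (hl0 : 0 < l) (hl1 : l ≤ 1)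
    (hX : (1 - β) • u₃ + β • u₄ = l • ((1 - α) • u₁ + α • u₂))
    (hp₁ : 0 ≤ p₁) (hp₂ : 0 ≤ p₂) (hp₃ : 0 ≤ p₃) (hs : 1 ≤ p₁ + p₂ + p₃)
    (hb : τ • b = p₁ • ((1 - α) • u₁ + α • u₂) + p₂ • u₂ + p₃ • u₃)
    (hfar : ∀ a₁ a₂ a₃ : ℝ, 0 ≤ a₁ → 0 ≤ a₂ → 0 ≤ a₃ → a₁ + a₂ + a₃ = 1 →
      a₁ • ((1 - α) • u₁ + α • u₂) + a₂ • u₂ + a₃ • u₃ ≠ 0) :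
    det3 ((1 - α) • u₁ + α • u₂) u₂ u₃ ≠ 0 := by
  intro hD
  have pos := @weights_pos_of_avoid u₁ u₂ u₃ u₄ b α β l τ
  obtain ⟨k₁, k₂, k₃⟩ := pos h12 h23 h34 hα hβ hτ hl0 hl1 hX hp₁ hp₂ hp₃ hs hb
  set X := (1 - α) • u₁ + α • u₂
  have main : ∀ c : Fin 3 → ℝ, c ≠ 0 → c 0 • X + c 1 • u₂ + c 2 • u₃ = 0 →
      c 0 + c 1 + c 2 ≤ 0 → False := by
    intro c hc0 hc hcs
    by_cases hpos : ∃ i, 0 < c i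
    · obtain ⟨t, ht, htn, i, hi⟩ := exists_sub_mul_eq_zero (p := ![p₁, p₂, p₃])
        (by intro i; fin_cases i <;> assumption) hpos
      have hb' : τ • b = (p₁ - t * c 0) • X + (p₂ - t * c 1) • u₂ + (p₃ - t * c 2) • u₃ := by
        have e : (p₁ - t * c 0) • X + (p₂ - t * c 1) • u₂ + (p₃ - t * c 2) • u₃ =
          (p₁ • X + p₂ • u₂ + p₃ • u₃) - t • (c 0 • X + c 1 • u₂ + c 2 • u₃) := by module
        rw [e, hc, smul_zero, sub_zero, hb]
      obtain ⟨m₁, m₂, m₃⟩ := pos h12 h23 h34 hα hβ hτ hl0 hl1 hX (by simpa using htn 0)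
        (by simpa using htn 1) (by simpa using htn 2) (by nlinarith) hb'
      fin_cases i <;> simp at hi <;> linarith
    · push Not at hpos
      have hneg : c 0 + c 1 + c 2 < 0 := by
        refine lt_of_le_of_ne hcs fun h => hc0 ?_
        have := hpos 0
        have := hpos 1
        have := hpos 2
        ext i
        fin_cases i <;> simp <;> linarith
      set S := c 0 + c 1 + c 2
      refine hfar (c 0 / S) (c 1 / S) (c 2 / S) (div_nonneg_of_nonpos (hpos 0) hneg.le)
        (div_nonneg_of_nonpos (hpos 1) hneg.le) (div_nonneg_of_nonpos (hpos 2) hneg.le)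
        (by rw [← add_div, ← add_div, div_self hneg.ne]) ?_
      have e : (c 0 / S) • X + (c 1 / S) • u₂ + (c 2 / S) • u₃ =
          S⁻¹ • (c 0 • X + c 1 • u₂ + c 2 • u₃) := by
        simp only [div_eq_inv_mul]; module
      rw [e, hc, smul_zero]
  obtain ⟨c, hc0, hc⟩ := exists_dependence_of_det3_eq_zero hD
  rcases le_total (c 0 + c 1 + c 2) 0 with h | h
  · exact main c hc0 hc h
  · refine main (-c) (neg_ne_zero.2 hc0) ?_ (by simp only [Pi.neg_apply]; linarith)
    have e : (-c) 0 • X + (-c) 1 • u₂ + (-c) 2 • u₃ = -(c 0 • X + c 1 • u₂ + c 2 • u₃) := by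
      simp only [Pi.neg_apply]; module
    rw [e, hc, neg_zero]

lemma pierces_of_combination {u₁ u₂ u₃ u₄ b : E3} {α β l τ p₁ p₂ p₃ : ℝ}
    (hτ0 : 0 ≤ τ) (hτ1 : τ < 1) (hl0 : 0 < l)
    (hX : (1 - β) • u₃ + β • u₄ = l • ((1 - α) • u₁ + α • u₂))
    (hp₁ : 0 < p₁) (hp₂ : 0 < p₂) (hp₃ : 0 < p₃) (hs : p₁ + p₂ + p₃ = 1)
    (hb : τ • b = p₁ • ((1 - α) • u₁ + α • u₂) + p₂ • u₂ + p₃ • u₃)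
    (h123 : 0 < det3 u₁ u₂ u₃) (h234 : 0 < det3 u₂ u₃ u₄)
    (hD : 0 < det3 ((1 - α) • u₁ + α • u₂) u₂ u₃) :
    Pierces u₁ u₂ u₃ u₄ b := by
  have b12 : τ * det3 u₁ u₂ b = p₃ * det3 u₁ u₂ u₃ := by
    rw [det3_rotate, det3_rotate, ← det3_smul_left, hb]
    simp only [det3, PiLp.add_apply, PiLp.smul_apply, smul_eq_mul]
    ring
  have b23 : τ * det3 u₂ u₃ b = p₁ * det3 ((1 - α) • u₁ + α • u₂) u₂ u₃ := by
    rw [det3_rotate, det3_rotate, ← det3_smul_left, hb]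
    simp only [det3, PiLp.add_apply, PiLp.smul_apply, smul_eq_mul]
    ring
  have X34 : det3 ((1 - α) • u₁ + α • u₂) u₃ u₄ = 0 := by
    have : l * det3 ((1 - α) • u₁ + α • u₂) u₃ u₄ = 0 := by
      rw [← det3_smul_left, ← hX]
      simp only [det3, PiLp.add_apply, PiLp.smul_apply, smul_eq_mul]
      ring
    exact (mul_eq_zero.1 this).resolve_left hl0.ne'
  have b34 : τ * det3 u₃ u₄ b = p₂ * det3 u₂ u₃ u₄ := by
    rw [det3_rotate, det3_rotate, ← det3_smul_left, hb, det3_add_left, det3_add_left,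
      det3_smul_left, X34]
    simp only [det3, PiLp.smul_apply, smul_eq_mul]
    ring
  have bs : τ * (det3 u₂ u₃ b - det3 u₁ u₃ b + det3 u₁ u₂ b) = det3 u₁ u₂ u₃ := by
    have b13 : τ * det3 u₁ u₃ b = -(p₁ * α + p₂) * det3 u₁ u₂ u₃ := by
      rw [det3_rotate, det3_rotate, ← det3_smul_left, hb]
      simp only [det3, PiLp.add_apply, PiLp.smul_apply, smul_eq_mul]
      ring
    have hDe : det3 ((1 - α) • u₁ + α • u₂) u₂ u₃ = (1 - α) * det3 u₁ u₂ u₃ := by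
      simp only [det3, PiLp.add_apply, PiLp.smul_apply, smul_eq_mul]
      ring
    rw [hDe] at b23
    linear_combination b23 - b13 + b12 + det3 u₁ u₂ u₃ * hs
  have hτpos : 0 < τ := pos_of_mul_pos_left (b12 ▸ mul_pos hp₃ h123 : 0 < τ * _) (by
    by_contra! h
    nlinarith [mul_pos hp₃ h123])
  refine ⟨pos_of_mul_pos_right (b12 ▸ mul_pos hp₃ h123 : 0 < τ * _) hτ0,
    pos_of_mul_pos_right (b23 ▸ mul_pos hp₁ hD : 0 < τ * _) hτ0,
    pos_of_mul_pos_right (b34 ▸ mul_pos hp₂ h234 : 0 < τ * _) hτ0, ?_⟩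
  nlinarith

/-- The metric constraints and the non-crossing conditions on the chain, relative to the vertex
placed at the origin, which keep it in the trap. -/
structure IsTrapGeometry (u₁ u₂ u₃ u₄ b c : E3) : Prop where
  norm_u₂_sub_u₁ : ‖u₂ - u₁‖ ≤ 21
  norm_u₃_sub_u₂ : ‖u₃ - u₂‖ ≤ 15
  norm_u₄_sub_u₃ : ‖u₄ - u₃‖ ≤ 9 / 2
  norm_b_sub_u₄_le : ‖b - u₄‖ ≤ 29994 + 1 / 2
  le_norm_b_sub_u₄ : 29994 ≤ ‖b - u₄‖
  norm_u₁_sub_c : ‖u₁ - c‖ ^ 2 = 900000009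
  norm_b : 40000 ≤ ‖b‖
  norm_c : ‖c‖ ^ 2 = 1600000001
  avoid_12_34 : SegmentsAvoid u₁ u₂ u₃ u₄
  avoid_12_4b : SegmentsAvoid u₁ u₂ u₄ b
  avoid_12_b : SegmentsAvoid u₁ u₂ 0 b
  avoid_23_b : SegmentsAvoid u₂ u₃ 0 b
  avoid_34_b : SegmentsAvoid u₃ u₄ 0 b
  avoid_12_c : SegmentsAvoid u₁ u₂ 0 c
  avoid_23_c : SegmentsAvoid u₂ u₃ 0 c
  avoid_34_c : SegmentsAvoid u₃ u₄ 0 c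

/-- The theorem of Stewart bounds the distance of `u` from the origin when `u` is near the segment
`[0, c]` and its distance to `c` is prescribed. -/
lemma norm_lt_of_near_segment {u c : E3} {τ : ℝ} (hτ1 : τ < 1)
    (huc : ‖u - c‖ ^ 2 = 900000009) (hc : ‖c‖ ^ 2 = 1600000001) (hS : ‖u - τ • c‖ ≤ 36) :
    ‖u‖ < 10001 := by
  have hS2 : ‖u - τ • c‖ ^ 2 ≤ 36 ^ 2 := by gcongr
  rw [norm_sub_sq_real] at huc hS2
  rw [inner_smul_right, norm_smul, mul_pow, Real.norm_eq_abs, sq_abs] at hS2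
  rw [hc] at huc hS2
  set i := inner ℝ u c
  have h : (1 - τ) * ‖u‖ ^ 2 ≤ (1 - τ) * 100008010 := by
    nlinarith [sq_nonneg ((1 - τ) * 40000 - (299999 / 10)), sq_nonneg (1 - τ)]
  have h' := le_of_mul_le_mul_left h (by linarith)
  nlinarith [norm_nonneg u]

set_option maxHeartbeats 1000000 in
lemma IsCaught.isStrictlyCaught {u₁ u₂ u₃ u₄ b c : E3} (h : IsCaught u₁ u₂ u₃ u₄ b c)
    (H : IsTrapGeometry u₁ u₂ u₃ u₄ b c) : IsStrictlyCaught u₁ u₂ u₃ u₄ b c := by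
  obtain ⟨⟨α, hα⟩, ⟨β, hβ⟩, ⟨l, hl⟩, ⟨τ, hτ⟩, ⟨p₁, hp₁⟩, ⟨p₂, hp₂⟩, ⟨p₃, hp₃⟩, ⟨τ', hτ'⟩, ⟨q₁, hq₁⟩,
    ⟨q₂, hq₂⟩, ⟨q₃, hq₃⟩, ⟨g, hg⟩, ⟨ρ, hρ⟩, ⟨σ, hσ⟩, hX, hb, hps, hc, hqs, hZ, hρσ, hD⟩ := h
  simp only at hX hb hps hc hqs hZ hρσ hD
  have l12 := H.norm_u₂_sub_u₁
  have l23 := H.norm_u₃_sub_u₂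
  have l34 := H.norm_u₄_sub_u₃
  have l13 : ‖u₁ - u₃‖ ≤ 36 := by
    have := norm_sub_le_norm_sub_add_norm_sub u₁ u₂ u₃
    rw [norm_sub_rev u₁ u₂, norm_sub_rev u₂ u₃] at this
    linarith
  have l24 : ‖u₄ - u₂‖ ≤ 41 := by
    have := norm_sub_le_norm_sub_add_norm_sub u₄ u₃ u₂
    linarith
  have l14 : ‖u₄ - u₁‖ ≤ 41 := by
    have := norm_sub_le_norm_sub_add_norm_sub u₄ u₃ u₁
    rw [norm_sub_rev u₃ u₁] at this
    linarith
  have lX4 : ‖u₄ - ((1 - α) • u₁ + α • u₂)‖ ≤ 41 :=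
    norm_sub_lineCombination_le hα.1 hα.2 l14 l24
  have lX1 : ‖u₁ - ((1 - α) • u₁ + α • u₂)‖ ≤ 36 :=
    norm_sub_lineCombination_le hα.1 hα.2 (by simp) (by rw [norm_sub_rev]; linarith)
  have far4 : 10005 + 1 / 2 ≤ ‖u₄‖ := by
    have := norm_sub_norm_le b (b - u₄)
    rw [sub_sub_cancel] at this
    linarith [H.norm_b, H.norm_b_sub_u₄_le]
  have farY : 10001 ≤ ‖(1 - β) • u₃ + β • u₄‖ := by
    have h1 : ‖u₄ - ((1 - β) • u₃ + β • u₄)‖ ≤ 9 / 2 :=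
      norm_sub_lineCombination_le hβ.1 hβ.2 l34 (by norm_num)
    have h2 := norm_sub_norm_le u₄ (u₄ - ((1 - β) • u₃ + β • u₄))
    rw [sub_sub_cancel] at h2
    linarith
  have hl0 : 0 < l := hl.1.lt_of_ne' fun h0 => by
    rw [hX, h0, zero_smul, norm_zero] at farY
    linarith
  have hl1 : l < 1 := hl.2.lt_of_ne fun h1 => by
    rw [h1, one_smul] at hX
    exact H.avoid_12_34 α hα β hβ hX.symm
  have hτ1 : τ < 1 := hτ.2.lt_of_ne fun h1 => by
    have : ‖u₄ - b‖ ≤ 41 := by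
      rw [← one_smul ℝ b, ← h1, hb]
      exact norm_sub_combination_le hp₁.1 hp₂.1 hp₃.1 hps lX4 l24 (by linarith)
    rw [norm_sub_rev] at this
    linarith [H.le_norm_b_sub_u₄]
  have lQ : ‖u₁ - τ' • c‖ ≤ 36 := by
    rw [hc]
    exact norm_sub_combination_le hq₁.1 hq₂.1 hq₃.1 hqs lX1 (by rw [norm_sub_rev]; linarith) l13
  have hτ'1 : τ' < 1 := hτ'.2.lt_of_ne fun h1 => by
    rw [h1, one_smul] at lQ
    nlinarith [H.norm_u₁_sub_c, norm_nonneg (u₁ - c)]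
  obtain ⟨kp₁, kp₂, kp₃⟩ := weights_pos_of_avoid H.avoid_12_b H.avoid_23_b H.avoid_34_b hα hβ hτ
    hl0 hl1.le hX hp₁.1 hp₂.1 hp₃.1 hps.ge hb
  obtain ⟨kq₁, kq₂, kq₃⟩ := weights_pos_of_avoid H.avoid_12_c H.avoid_23_c H.avoid_34_c hα hβ hτ'
    hl0 hl1.le hX hq₁.1 hq₂.1 hq₃.1 hqs.ge hc
  have hDne : det3 ((1 - α) • u₁ + α • u₂) u₂ u₃ ≠ 0 := by
    refine det3_ne_zero_of_avoid H.avoid_12_b H.avoid_23_b H.avoid_34_b hα hβ hτ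
      hl0 hl1.le hX hp₁.1 hp₂.1 hp₃.1 hps.ge hb fun a₁ a₂ a₃ h₁ h₂ h₃ hs h0 => ?_
    have := norm_sub_combination_le h₁ h₂ h₃ hs lX4 l24 (l34.trans (by norm_num))
    rw [h0, sub_zero] at this
    linarith
  have hDpos := hD.lt_of_ne' hDne
  have D123 : det3 ((1 - α) • u₁ + α • u₂) u₂ u₃ = (1 - α) * det3 u₁ u₂ u₃ := by
    simp only [det3, PiLp.add_apply, PiLp.smul_apply, smul_eq_mul]
    ring
  have D234 : l * det3 ((1 - α) • u₁ + α • u₂) u₂ u₃ = β * det3 u₂ u₃ u₄ := by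
    rw [← det3_smul_left, ← hX]
    simp only [det3, PiLp.add_apply, PiLp.smul_apply, smul_eq_mul]
    ring
  have h123 : 0 < det3 u₁ u₂ u₃ :=
    pos_of_mul_pos_right (D123 ▸ hDpos) (by linarith [hα.2])
  have h234 : 0 < det3 u₂ u₃ u₄ :=
    pos_of_mul_pos_right (D234 ▸ mul_pos hl0 hDpos) hβ.1
  have hα1 : 0 < 1 - α := pos_of_mul_pos_left (D123 ▸ hDpos) h123.le
  have hβ0 : 0 < β := pos_of_mul_pos_left (D234 ▸ mul_pos hl0 hDpos) h234.le
  have hα0 : 0 < α := hα.1.lt_of_ne' fun h0 => by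
    have := norm_lt_of_near_segment hτ'1 H.norm_u₁_sub_c H.norm_c lQ
    rw [hX, h0, sub_zero, one_smul, zero_smul, add_zero, norm_smul, Real.norm_of_nonneg hl.1]
      at farY
    linarith [mul_le_of_le_one_left (norm_nonneg u₁) hl.2]
  have pb := pierces_of_combination hτ.1 hτ1 hl0 hX kp₁ kp₂ kp₃ hps hb h123 h234 hDpos
  have pc := pierces_of_combination hτ'.1 hτ'1 hl0 hX kq₁ kq₂ kq₃ hqs hc h123 h234 hDpos
  have hτ0 : 0 < τ := hτ.1.lt_of_ne' fun h0 => by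
    have e := congrArg (fun x => det3 x u₁ u₂) hb
    simp only [h0, zero_smul, det3_add_left, det3_smul_left] at e
    have : p₃ * det3 u₁ u₂ u₃ = 0 := by
      simp only [det3, PiLp.zero_apply] at e ⊢
      linear_combination -e
    exact (mul_pos kp₃ h123).ne' this
  have D12X : (1 - β) * det3 u₁ u₂ u₃ + β * det3 u₁ u₂ u₄ = 0 := by
    have e := congrArg (fun x => det3 x u₁ u₂) hX
    simp only [det3, PiLp.add_apply, PiLp.smul_apply, smul_eq_mul] at e
    simp only [det3]
    linear_combination e
  have D34X : (1 - α) * det3 u₁ u₃ u₄ + α * det3 u₂ u₃ u₄ = 0 := by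
    have e := congrArg (fun x => det3 x u₃ u₄) hX
    simp only [det3, PiLp.add_apply, PiLp.smul_apply, smul_eq_mul] at e
    have : l * ((1 - α) * det3 u₁ u₃ u₄ + α * det3 u₂ u₃ u₄) = 0 := by
      simp only [det3]
      linear_combination -e
    exact (mul_eq_zero.1 this).resolve_left hl0.ne'
  have Z12 : ρ * det3 u₁ u₂ u₄ + σ * det3 u₁ u₂ b = 0 := by
    have e := congrArg (fun x => det3 x u₁ u₂) hZ
    simp only [det3, PiLp.add_apply, PiLp.smul_apply, smul_eq_mul] at e
    simp only [det3]
    linear_combination -e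
  have hβ1 : β < 1 := hβ.2.lt_of_ne fun h1 => by
    have h124 : det3 u₁ u₂ u₄ = 0 := by
      rw [h1] at D12X
      linarith
    have hσ0 : σ = 0 := by
      rw [h124, mul_zero, zero_add] at Z12
      exact (mul_eq_zero.1 Z12).resolve_right pb.1.ne'
    rw [h1, sub_self, zero_smul, zero_add, one_smul] at hX
    rw [hσ0, zero_smul, add_zero, hX] at hZ
    have e1 := congrArg (fun x => det3 x u₂ u₃) hZ
    have e2 := congrArg (fun x => det3 x u₃ u₁) hZ
    have e3 : (1 - ρ * l) * det3 u₁ u₂ u₃ = 0 := by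
      simp only [det3, PiLp.add_apply, PiLp.smul_apply, smul_eq_mul] at e1 e2 ⊢
      linear_combination e1 + e2
    have := (mul_eq_zero.1 e3).resolve_right h123.ne'
    linarith [mul_le_of_le_one_left hl.1 hρ.2]
  have h124 : det3 u₁ u₂ u₄ < 0 := by
    by_contra! hn
    linarith [mul_nonneg hβ0.le hn, mul_pos (sub_pos.2 hβ1) h123]
  have h134 : det3 u₁ u₃ u₄ < 0 := by
    by_contra! hn
    linarith [mul_nonneg hα1.le hn, mul_pos hα0 h234]
  have Y4 : β • u₄ = l • ((1 - α) • u₁ + α • u₂) - (1 - β) • u₃ := by rw [← hX]; abel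
  have D24b : β * (τ * det3 u₂ u₄ b) =
      -(l * p₃ + (1 - β) * p₁) * det3 ((1 - α) • u₁ + α • u₂) u₂ u₃ := by
    have : β * (τ * det3 u₂ u₄ b) = det3 (β • u₄) (τ • b) u₂ := by
      simp only [det3, PiLp.smul_apply, smul_eq_mul]; ring
    rw [this, Y4, hb]
    simp only [det3, PiLp.add_apply, PiLp.sub_apply, PiLp.smul_apply, smul_eq_mul]
    ring
  have DX4b : β * (τ * det3 ((1 - α) • u₁ + α • u₂) u₄ b) =
      (1 - β) * p₂ * det3 ((1 - α) • u₁ + α • u₂) u₂ u₃ := by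
    have : β * (τ * det3 ((1 - α) • u₁ + α • u₂) u₄ b) =
        det3 ((1 - α) • u₁ + α • u₂) (β • u₄) (τ • b) := by
      simp only [det3, PiLp.smul_apply, smul_eq_mul]; ring
    rw [this, Y4, hb]
    simp only [det3, PiLp.add_apply, PiLp.sub_apply, PiLp.smul_apply, smul_eq_mul]
    ring
  have hβτ : 0 < β * τ := mul_pos hβ0 hτ0
  have h1β : 0 < 1 - β := by linarith
  have h24b : det3 u₂ u₄ b < 0 := by
    have : 0 < (l * p₃ + (1 - β) * p₁) * det3 ((1 - α) • u₁ + α • u₂) u₂ u₃ := by positivity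
    by_contra! hn
    have : 0 ≤ β * (τ * det3 u₂ u₄ b) := by positivity
    linarith
  have h14b : 0 < det3 u₁ u₄ b := by
    have hpos : 0 < (1 - β) * p₂ * det3 ((1 - α) • u₁ + α • u₂) u₂ u₃ := by positivity
    rw [← DX4b, ← mul_assoc, det3_add_left, det3_smul_left, det3_smul_left] at hpos
    have := pos_of_mul_pos_right hpos hβτ.le
    by_contra! hn
    linarith [mul_nonneg_of_nonpos_of_nonpos hn (neg_nonpos.2 hα1.le), mul_neg_of_pos_of_neg hα0 h24b]
  have Z4b : (1 - g) * det3 u₁ u₄ b + g * det3 u₂ u₄ b = 0 := by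
    have e := congrArg (fun x => det3 x u₄ b) hZ
    simp only [det3, PiLp.add_apply, PiLp.smul_apply, smul_eq_mul] at e
    simp only [det3]
    linear_combination e
  have Z1b : g * det3 u₁ u₂ b = ρ * det3 u₁ u₄ b := by
    have e := congrArg (fun x => det3 x b u₁) hZ
    simp only [det3, PiLp.add_apply, PiLp.smul_apply, smul_eq_mul] at e
    simp only [det3]
    linear_combination e
  have Z14 : -(g * det3 u₁ u₂ u₄) = σ * det3 u₁ u₄ b := by
    have e := congrArg (fun x => det3 x u₁ u₄) hZ
    simp only [det3, PiLp.add_apply, PiLp.smul_apply, smul_eq_mul] at e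
    simp only [det3]
    linear_combination e
  have hg0 : 0 < g := hg.1.lt_of_ne' fun h0 => by
    rw [h0] at Z4b
    linarith
  have hρσ1 : ρ + σ < 1 := hρσ.lt_of_ne fun h1 => by
    refine H.avoid_12_4b g hg σ hσ ?_
    rw [hZ, ← h1, add_sub_cancel_right]
  refine ⟨h123, h234, h124, h134, ?_, pb, pc, h14b, h24b, ?_⟩
  · have e : β * ((1 - α) * (det3 u₂ u₃ u₄ - det3 u₁ u₃ u₄)) =
        l * (β * ((1 - α) * (det3 u₁ u₂ u₃ - det3 u₁ u₂ u₄))) := by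
      rw [D123] at D234
      linear_combination -β * D34X - D234 + l * (1 - α) * D12X
    have hpos : 0 < β * (1 - α) := mul_pos hβ0 hα1
    have : 0 < det3 u₁ u₂ u₃ - det3 u₁ u₂ u₄ := by linarith
    have : β * (1 - α) * (det3 u₂ u₃ u₄ - det3 u₁ u₃ u₄) <
        β * (1 - α) * (det3 u₁ u₂ u₃ - det3 u₁ u₂ u₄) := by
      rw [mul_assoc, e, ← mul_assoc β]
      exact mul_lt_of_lt_one_left (mul_pos hpos this) hl1
    exact lt_of_mul_lt_mul_left this hpos.le
  · have e : g * (det3 u₁ u₂ b - det3 u₁ u₂ u₄) =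
        (ρ + σ) * (g * (det3 u₁ u₄ b - det3 u₂ u₄ b)) := by
      linear_combination Z1b + Z14 + (ρ + σ) * Z4b
    have : 0 < det3 u₁ u₄ b - det3 u₂ u₄ b := by linarith
    have : g * (det3 u₁ u₂ b - det3 u₁ u₂ u₄) < g * (det3 u₁ u₄ b - det3 u₂ u₄ b) := by
      rw [e]
      exact mul_lt_of_lt_one_left (mul_pos hg0 this) hρσ1
    exact lt_of_mul_lt_mul_left this hg0.le

/-! ### The chain and its motions -/

/-- The point of `ℝ³` with the given coordinates. -/
def pt (a b c : ℝ) : E3 := !₂[a, b, c]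

@[simp] lemma pt_apply_zero (a b c : ℝ) : pt a b c 0 = a := rfl
@[simp] lemma pt_apply_one (a b c : ℝ) : pt a b c 1 = b := rfl
@[simp] lemma pt_apply_two (a b c : ℝ) : pt a b c 2 = c := rfl

/-- The vertices of the locked heptagon. -/
def trapChain : ℕ → E3
  | 0 => pt 10000 1 3
  | 1 => pt 10020 (-1) (-1)
  | 2 => pt 10006 1 (-1)
  | 3 => pt 10006 (-1) 3
  | 4 => pt 40000 (-1) 0
  | 5 => pt 0 0 0
  | _ => pt 40000 1 0

/-- A chain is caught if it is so relative to its vertex of index `5`. -/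
def IsCaughtChain (w : ℕ → E3) : Prop :=
  IsCaught (w 0 - w 5) (w 1 - w 5) (w 2 - w 5) (w 3 - w 5) (w 4 - w 5) (w 6 - w 5)

/-- A chain is strictly caught if it is so relative to its vertex of index `5`. -/
def IsStrictlyCaughtChain (w : ℕ → E3) : Prop :=
  IsStrictlyCaught (w 0 - w 5) (w 1 - w 5) (w 2 - w 5) (w 3 - w 5) (w 4 - w 5) (w 6 - w 5)

lemma isStrictlyCaughtChain_trapChain : IsStrictlyCaughtChain trapChain := by
  simp only [IsStrictlyCaughtChain, IsStrictlyCaught, Pierces, det3, trapChain, PiLp.sub_apply]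
  norm_num

lemma segmentsAvoid_sub {p q r s : E3} (o : E3) (h : segment ℝ p q ∩ segment ℝ r s = ∅) :
    SegmentsAvoid (p - o) (q - o) (r - o) (s - o) := by
  intro a ha b hb hab
  refine (Set.eq_empty_iff_forall_notMem.1 h) ((1 - a) • p + a • q)
    ⟨⟨1 - a, a, sub_nonneg.2 ha.2, ha.1, by ring, rfl⟩,
      ⟨1 - b, b, sub_nonneg.2 hb.2, hb.1, by ring, ?_⟩⟩
  have e : ∀ (t : ℝ) (x y : E3), (1 - t) • (x - o) + t • (y - o) = (1 - t) • x + t • y - o := by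
    intro t x y; module
  rw [e, e] at hab
  exact (sub_left_injective hab).symm

lemma norm_sq_eq_three (x : E3) : ‖x‖ ^ 2 = x 0 ^ 2 + x 1 ^ 2 + x 2 ^ 2 := by
  rw [EuclideanSpace.real_norm_sq_eq, Fin.sum_univ_three]

lemma isTrapGeometry_of_lengths {w : ℕ → E3} (hw : IsSimpleClosedChain 7 w)
    (hl : ∀ i < 7, ‖w ((i + 1) % 7) - w i‖ = ‖trapChain ((i + 1) % 7) - trapChain i‖) :
    IsTrapGeometry (w 0 - w 5) (w 1 - w 5) (w 2 - w 5) (w 3 - w 5) (w 4 - w 5) (w 6 - w 5) := by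
  have hs := hw.2.2
  have hsq : ∀ i < 7, ‖w ((i + 1) % 7) - w i‖ ^ 2 =
      (trapChain ((i + 1) % 7) 0 - trapChain i 0) ^ 2 +
      (trapChain ((i + 1) % 7) 1 - trapChain i 1) ^ 2 +
      (trapChain ((i + 1) % 7) 2 - trapChain i 2) ^ 2 := by
    intro i hi
    rw [hl i hi, norm_sq_eq_three]
    rfl
  have l0 : ‖w 1 - w 0‖ ^ 2 = 420 := by
    rw [hsq 0 (by norm_num)]; norm_num [trapChain]
  have l1 : ‖w 2 - w 1‖ ^ 2 = 200 := by
    rw [hsq 1 (by norm_num)]; norm_num [trapChain]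
  have l2 : ‖w 3 - w 2‖ ^ 2 = 20 := by
    rw [hsq 2 (by norm_num)]; norm_num [trapChain]
  have l3 : ‖w 4 - w 3‖ ^ 2 = 899640045 := by
    rw [hsq 3 (by norm_num)]; norm_num [trapChain]
  have l4 : ‖w 5 - w 4‖ ^ 2 = 1600000001 := by
    rw [hsq 4 (by norm_num)]; norm_num [trapChain]
  have l5 : ‖w 6 - w 5‖ ^ 2 = 1600000001 := by
    rw [hsq 5 (by norm_num)]; norm_num [trapChain]
  have l6 : ‖w 0 - w 6‖ ^ 2 = 900000009 := by
    rw [hsq 6 (by norm_num)]; norm_num [trapChain]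
  rw [norm_sub_rev] at l4
  have avoid_b : ∀ {p q : E3}, segment ℝ p q ∩ segment ℝ (w 4) (w 5) = ∅ →
      SegmentsAvoid (p - w 5) (q - w 5) 0 (w 4 - w 5) := by
    intro p q h
    rw [segment_symm ℝ (w 4)] at h
    simpa using segmentsAvoid_sub (w 5) h
  have avoid_c : ∀ {p q : E3}, segment ℝ p q ∩ segment ℝ (w 5) (w 6) = ∅ →
      SegmentsAvoid (p - w 5) (q - w 5) 0 (w 6 - w 5) := by
    intro p q h
    simpa using segmentsAvoid_sub (w 5) h
  constructor
  case norm_u₂_sub_u₁ => rw [sub_sub_sub_cancel_right]; nlinarith [norm_nonneg (w 1 - w 0)]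
  case norm_u₃_sub_u₂ => rw [sub_sub_sub_cancel_right]; nlinarith [norm_nonneg (w 2 - w 1)]
  case norm_u₄_sub_u₃ => rw [sub_sub_sub_cancel_right]; nlinarith [norm_nonneg (w 3 - w 2)]
  case norm_b_sub_u₄_le => rw [sub_sub_sub_cancel_right]; nlinarith [norm_nonneg (w 4 - w 3)]
  case le_norm_b_sub_u₄ => rw [sub_sub_sub_cancel_right]; nlinarith [norm_nonneg (w 4 - w 3)]
  case norm_u₁_sub_c => rw [sub_sub_sub_cancel_right]; exact l6
  case norm_b => nlinarith [norm_nonneg (w 4 - w 5)]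
  case norm_c => exact l5
  case avoid_12_34 => exact segmentsAvoid_sub _ (by simpa using hs 0 2)
  case avoid_12_4b => exact segmentsAvoid_sub _ (by simpa using hs 0 3)
  case avoid_12_b => exact avoid_b (by simpa using hs 0 4)
  case avoid_23_b => exact avoid_b (by simpa using hs 1 4)
  case avoid_34_b => exact avoid_b (by simpa using hs 2 4)
  case avoid_12_c => exact avoid_c (by simpa using hs 0 5)
  case avoid_23_c => exact avoid_c (by simpa using hs 1 5)
  case avoid_34_c => exact avoid_c (by simpa using hs 2 5)

lemma not_isConvexConfiguration_of_isCaughtChain {w : ℕ → E3} (h : IsCaughtChain w) :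
    ¬ IsConvexConfiguration 7 w := by
  rintro ⟨-, -, hf⟩
  obtain ⟨f, hf23, hf⟩ := hf 2 (by norm_num)
  obtain ⟨⟨α, hα0, hα1⟩, ⟨β, hβ⟩, ⟨l, hl0, hl1⟩, -, -, -, -, -, -, -, -, -, -, -, hX, -⟩ := h
  have h0 := hf 0 (by norm_num) (by norm_num) (by norm_num)
  have h1 := hf 1 (by norm_num) (by norm_num) (by norm_num)
  have h5 := hf 5 (by norm_num) (by norm_num) (by norm_num)
  have e := congrArg f hX
  norm_num at hf23
  simp only [map_add, map_smul, map_sub, smul_eq_mul, ← hf23] at e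
  have hX1 : (1 - α) * f (w 0) + α * f (w 1) < f (w 2) := by
    nlinarith [mul_nonneg (sub_nonneg.2 hα1) (sub_pos.2 h0).le, mul_nonneg hα0 (sub_pos.2 h1).le]
  nlinarith [mul_nonneg hl0 (sub_pos.2 hX1).le, mul_nonneg (sub_nonneg.2 hl1) (sub_pos.2 h5).le]

lemma isClosed_setOf_exists_unitInterval {X : Type*} [TopologicalSpace X]
    {P : X → unitInterval → Prop} (h : IsClosed {y : X × unitInterval | P y.1 y.2}) :
    IsClosed {x | ∃ s, P x s} := by
  convert isClosedMap_fst_of_compactSpace _ h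
  ext x
  simp

lemma isClosed_setOf_isCaught {X : Type*} [TopologicalSpace X] {u₁ u₂ u₃ u₄ b c : X → E3}
    (h₁ : Continuous u₁) (h₂ : Continuous u₂) (h₃ : Continuous u₃) (h₄ : Continuous u₄)
    (hb : Continuous b) (hc : Continuous c) :
    IsClosed {t | IsCaught (u₁ t) (u₂ t) (u₃ t) (u₄ t) (b t) (c t)} := by
  unfold IsCaught
  iterate 14 refine isClosed_setOf_exists_unitInterval ?_
  simp only [Set.ofPred_and]
  refine .inter (isClosed_eq ?_ ?_) <| .inter (isClosed_eq ?_ ?_) <| .inter (isClosed_eq ?_ ?_) <|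
    .inter (isClosed_eq ?_ ?_) <| .inter (isClosed_eq ?_ ?_) <| .inter (isClosed_eq ?_ ?_) <|
    .inter (isClosed_le ?_ ?_) (isClosed_le ?_ (continuous_det3 ?_ ?_ ?_))
  all_goals fun_prop

lemma isOpen_setOf_isStrictlyCaught {X : Type*} [TopologicalSpace X] {u₁ u₂ u₃ u₄ b c : X → E3}
    (h₁ : Continuous u₁) (h₂ : Continuous u₂) (h₃ : Continuous u₃) (h₄ : Continuous u₄)
    (hb : Continuous b) (hc : Continuous c) :
    IsOpen {t | IsStrictlyCaught (u₁ t) (u₂ t) (u₃ t) (u₄ t) (b t) (c t)} := by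
  have h123 := continuous_det3 h₁ h₂ h₃
  have h124 := continuous_det3 h₁ h₂ h₄
  have h134 := continuous_det3 h₁ h₃ h₄
  have h234 := continuous_det3 h₂ h₃ h₄
  have h14b := continuous_det3 h₁ h₄ hb
  have h24b := continuous_det3 h₂ h₄ hb
  have h12b := continuous_det3 h₁ h₂ hb
  have pierce : ∀ {x : X → E3}, Continuous x →
      IsOpen {t | Pierces (u₁ t) (u₂ t) (u₃ t) (u₄ t) (x t)} := by
    intro x hx
    have h12 := continuous_det3 h₁ h₂ hx
    have h13 := continuous_det3 h₁ h₃ hx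
    have h23 := continuous_det3 h₂ h₃ hx
    have h34 := continuous_det3 h₃ h₄ hx
    simp only [Pierces, Set.ofPred_and]
    refine .inter (isOpen_lt ?_ ?_) <| .inter (isOpen_lt ?_ ?_) <| .inter (isOpen_lt ?_ ?_)
      (isOpen_lt ?_ ?_)
    all_goals fun_prop
  simp only [IsStrictlyCaught, Set.ofPred_and]
  refine .inter (isOpen_lt ?_ ?_) <| .inter (isOpen_lt ?_ ?_) <| .inter (isOpen_lt ?_ ?_) <|
    .inter (isOpen_lt ?_ ?_) <| .inter (isOpen_lt ?_ ?_) <| .inter (pierce hb) <|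
    .inter (pierce hc) <| .inter (isOpen_lt ?_ ?_) <| .inter (isOpen_lt ?_ ?_) (isOpen_lt ?_ ?_)
  all_goals fun_prop

theorem not_canBeConvexified_trapChain : ¬ CanBeConvexified 7 trapChain := by
  rintro ⟨γ, ⟨hcont, h0, hsimple, hlen⟩, hconv⟩
  have hc : ∀ i < 7, Continuous fun t : unitInterval => γ t i := fun i hi =>
    continuousOn_iff_continuous_domRestrict.1 (hcont i hi)
  have hsub : ∀ i < 7, Continuous fun t : unitInterval => γ t i - γ t 5 := fun i hi =>
    (hc i hi).sub (hc 5 (by norm_num))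
  have hiff : ∀ t : unitInterval, IsCaughtChain (γ t) ↔ IsStrictlyCaughtChain (γ t) := fun t =>
    ⟨fun h => h.isStrictlyCaught (isTrapGeometry_of_lengths (hsimple t t.2) (hlen t t.2)),
      fun h => h.isCaught⟩
  have hclopen : IsClopen {t : unitInterval | IsStrictlyCaughtChain (γ t)} := by
    constructor
    · simp only [← hiff]
      exact isClosed_setOf_isCaught (hsub 0 (by norm_num)) (hsub 1 (by norm_num))
        (hsub 2 (by norm_num)) (hsub 3 (by norm_num)) (hsub 4 (by norm_num)) (hsub 6 (by norm_num))
    · exact isOpen_setOf_isStrictlyCaught (hsub 0 (by norm_num)) (hsub 1 (by norm_num))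
        (hsub 2 (by norm_num)) (hsub 3 (by norm_num)) (hsub 4 (by norm_num)) (hsub 6 (by norm_num))
  have huniv := hclopen.eq_univ ⟨0, by
    have e : ∀ i < 7, γ ((0 : unitInterval) : ℝ) i = trapChain i := fun i hi => by simpa using h0 i hi
    have := isStrictlyCaughtChain_trapChain
    simp only [IsStrictlyCaughtChain, Set.mem_ofPred_eq] at this ⊢
    rwa [e 0 (by norm_num), e 1 (by norm_num), e 2 (by norm_num), e 3 (by norm_num),
      e 4 (by norm_num), e 5 (by norm_num), e 6 (by norm_num)]⟩
  have h1 : IsStrictlyCaughtChain (γ ((1 : unitInterval) : ℝ)) := by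
    have : (1 : unitInterval) ∈ {t : unitInterval | IsStrictlyCaughtChain (γ t)} := by
      rw [huniv]; trivial
    exact this
  exact not_isConvexConfiguration_of_isCaughtChain ((hiff 1).2 h1) (by simpa using hconv)

/-! ### The chain is simple -/

/-- The linear functional on `ℝ³` with the given coefficients. -/
def lin (a b c : ℝ) : E3 →ₗ[ℝ] ℝ where
  toFun x := a * x 0 + b * x 1 + c * x 2
  map_add' x y := by simp only [PiLp.add_apply]; ring
  map_smul' t x := by simp only [PiLp.smul_apply, smul_eq_mul, RingHom.id_apply]; ring

@[simp] lemma lin_apply (a b c : ℝ) (x : E3) : lin a b c x = a * x 0 + b * x 1 + c * x 2 := rfl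

lemma segment_inter_segment_eq_empty (f : E3 →ₗ[ℝ] ℝ) {p q r s : E3}
    (h : max (f p) (f q) < min (f r) (f s)) :
    segment ℝ p q ∩ segment ℝ r s = ∅ := by
  rw [Set.eq_empty_iff_forall_notMem]
  rintro _ ⟨⟨a, b, ha, hb, hab, rfl⟩, c, d, hc, hd, hcd, h'⟩
  have e := congrArg f h'
  simp only [map_add, map_smul, smul_eq_mul] at e
  have h₁ : a * f p + b * f q ≤ a * max (f p) (f q) + b * max (f p) (f q) := by
    gcongr
    · exact le_max_left _ _
    · exact le_max_right _ _
  have h₂ : c * min (f r) (f s) + d * min (f r) (f s) ≤ c * f r + d * f s := by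
    gcongr
    · exact min_le_left _ _
    · exact min_le_right _ _
  rw [← add_mul, hab, one_mul] at h₁
  rw [← add_mul, hcd, one_mul] at h₂
  linarith

lemma segment_inter_segment_eq_singleton (f : E3 →ₗ[ℝ] ℝ) {p q r : E3}
    (hpq : f p < f q) (hqr : f q < f r) : segment ℝ p q ∩ segment ℝ q r = {q} := by
  refine Set.Subset.antisymm ?_ (Set.singleton_subset_iff.2
    ⟨right_mem_segment ℝ p q, left_mem_segment ℝ q r⟩)
  rintro _ ⟨⟨a, b, ha, hb, hab, rfl⟩, c, d, hc, hd, hcd, h'⟩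
  have e := congrArg f h'
  simp only [map_add, map_smul, smul_eq_mul] at e
  have ha0 : a = 0 := by
    by_contra hne
    have := mul_pos (ha.lt_of_ne' hne) (sub_pos.2 hpq)
    have := mul_nonneg hd (sub_pos.2 hqr).le
    have : b = 1 - a := by linarith
    have : c = 1 - d := by linarith
    subst b c
    linarith
  have hb1 : b = 1 := by linarith
  simp [ha0, hb1]

lemma isSimpleClosedChain_trapChain : IsSimpleClosedChain 7 trapChain := by
  have ne_of_lt : ∀ i j, i < j → j < 7 → trapChain i ≠ trapChain j := by
    intro i j hij hj h
    have h' : trapChain i 0 = trapChain j 0 ∧ trapChain i 1 = trapChain j 1 ∧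
        trapChain i 2 = trapChain j 2 := by simp [h]
    interval_cases j <;> interval_cases i <;> norm_num [trapChain] at h'
  refine ⟨by norm_num, fun i j hi hj hij => ?_, fun i j hij hj => ?_⟩
  · rcases lt_or_gt_of_ne hij with h | h
    · exact ne_of_lt i j h hj
    · exact (ne_of_lt j i h hi).symm
  interval_cases j <;> interval_cases i
  · exact segment_inter_segment_eq_singleton (lin 0 1 (-1)) (by norm_num [trapChain])
      (by norm_num [trapChain])
  · exact segment_inter_segment_eq_empty (lin (-1) (-4) (-2)) (by norm_num [trapChain])
  · exact segment_inter_segment_eq_singleton (lin 0 1 1) (by norm_num [trapChain])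
      (by norm_num [trapChain])
  · exact segment_inter_segment_eq_empty (lin 0 (-2) 1) (by norm_num [trapChain])
  · exact segment_inter_segment_eq_empty (lin 0 0 1) (by norm_num [trapChain])
  · exact segment_inter_segment_eq_singleton (lin 0 (-3) (-1)) (by norm_num [trapChain])
      (by norm_num [trapChain])
  · exact segment_inter_segment_eq_empty (lin 1 20044 (-10022)) (by norm_num [trapChain])
  · exact segment_inter_segment_eq_empty (lin 0 0 1) (by norm_num [trapChain])
  · exact segment_inter_segment_eq_empty (lin 0 (-2) (-1)) (by norm_num [trapChain])
  · exact segment_inter_segment_eq_singleton (lin 0 1 (-1)) (by norm_num [trapChain])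
      (by norm_num [trapChain])
  · exact segment_inter_segment_eq_empty (lin 0 2 (-1)) (by norm_num [trapChain])
  · exact segment_inter_segment_eq_empty (lin 0 0 1) (by norm_num [trapChain])
  · exact segment_inter_segment_eq_empty (lin 1 (-20016) (-10008)) (by norm_num [trapChain])
  · exact segment_inter_segment_eq_empty (lin 0 1 0) (by norm_num [trapChain])
  · exact segment_inter_segment_eq_singleton (lin 0 1 0) (by norm_num [trapChain])
      (by norm_num [trapChain])
  · rw [Set.inter_comm]
    exact segment_inter_segment_eq_singleton (lin 0 (-3) 1) (by norm_num [trapChain])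
      (by norm_num [trapChain])
  · exact segment_inter_segment_eq_empty (lin 0 0 1) (by norm_num [trapChain])
  · exact segment_inter_segment_eq_empty (lin 0 2 1) (by norm_num [trapChain])
  · exact segment_inter_segment_eq_empty (lin 0 1 0) (by norm_num [trapChain])
  · exact segment_inter_segment_eq_empty (lin 0 1 0) (by norm_num [trapChain])
  · exact segment_inter_segment_eq_singleton (lin 0 1 1) (by norm_num [trapChain])
      (by norm_num [trapChain])

/-! ### The chain is unknotted -/

/-- The set `S` is the boundary curve of an embedded topological disk. -/
def IsDiskBoundary (S : Set E3) : Prop :=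
  ∃ φ : EuclideanSpace ℝ (Fin 2) → E3,
    ContinuousOn φ (Metric.closedBall 0 1) ∧ Set.InjOn φ (Metric.closedBall 0 1) ∧
      φ '' Metric.sphere 0 1 = S

lemma IsDiskBoundary.image {S : Set E3} (hS : IsDiskBoundary S) {h : E3 → E3}
    (hc : Continuous h) (hi : Function.Injective h) : IsDiskBoundary (h '' S) := by
  obtain ⟨φ, hφc, hφi, rfl⟩ := hS
  exact ⟨h ∘ φ, hc.comp_continuousOn hφc, hi.comp_injOn hφi, Set.image_comp h φ _⟩

/-- The map which pushes the open unit ball of the gauge `g`, centred at `m`, in the direction of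
`d`, and fixes the complement of this ball. -/
def push (g : E3 → ℝ) (m d x : E3) : E3 := x + max 0 (1 - g (x - m)) • d

lemma continuous_push {g : E3 → ℝ} (hg : Continuous g) (m d : E3) : Continuous (push g m d) := by
  unfold push
  fun_prop

lemma injective_push {g : E3 → ℝ} {m d : E3}
    (hg : ∀ x, ∀ s : ℝ, 0 ≤ s → g (x + s • d) ≤ g x + s * g d) (hd : g d < 1) :
    Function.Injective (push g m d) := by
  have key : ∀ x y, push g m d x = push g m d y →
      max 0 (1 - g (y - m)) ≤ max 0 (1 - g (x - m)) := by
    intro x y h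
    by_contra! hlt
    unfold push at h
    set a := max 0 (1 - g (x - m)) with ha
    set b := max 0 (1 - g (y - m)) with hb
    have hb0 : 0 < b := (le_max_left _ _).trans_lt hlt
    have hbe : b = 1 - g (y - m) := by
      rcases max_choice 0 (1 - g (y - m)) with h' | h'
      · rw [← hb] at h'; linarith
      · rw [hb, h']
    have hx : x - m = (y - m) + (b - a) • d := by
      rw [eq_sub_of_add_eq h]; module
    have h1 := hg (y - m) (b - a) (by linarith)
    rw [← hx] at h1
    have h2 : 1 - g (x - m) ≤ a := le_max_right _ _
    nlinarith
  intro x y h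
  have e := le_antisymm (key x y h) (key y x h.symm)
  unfold push at h
  rw [e] at h
  exact add_right_cancel h

lemma push_eq_self {g : E3 → ℝ} {m d x : E3} (h : 1 ≤ g (x - m)) : push g m d x = x := by
  rw [push, max_eq_left (by linarith), zero_smul, add_zero]

/-- The map `push` sends the segment `[m, p]` linearly onto `[m + d, p]` if `p` is on the unit
sphere of `g`. -/
lemma image_push_segment {g : E3 → ℝ} {m q p : E3}
    (hg : ∀ x, ∀ s : ℝ, 0 ≤ s → g (s • x) = s * g x) (hp : g (p - m) = 1) :
    push g m (q - m) '' segment ℝ m p = segment ℝ q p := by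
  have key : ∀ a b : ℝ, 0 ≤ a → 0 ≤ b → a + b = 1 →
      push g m (q - m) (a • m + b • p) = a • q + b • p := by
    intro a b ha hb hab
    obtain rfl : a = 1 - b := by linarith
    have e : (1 - b) • m + b • p - m = b • (p - m) := by module
    rw [push, e, hg _ _ hb, hp, mul_one, max_eq_right ha]
    module
  ext z
  constructor
  · rintro ⟨_, ⟨a, b, ha, hb, hab, rfl⟩, rfl⟩
    exact ⟨a, b, ha, hb, hab, (key a b ha hb hab).symm⟩
  · rintro ⟨a, b, ha, hb, hab, rfl⟩
    exact ⟨_, ⟨a, b, ha, hb, hab, rfl⟩, key a b ha hb hab⟩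

lemma segment_eq_union_midpoint (p r : E3) :
    segment ℝ p r = segment ℝ (midpoint ℝ p r) p ∪ segment ℝ (midpoint ℝ p r) r := by
  have hm : midpoint ℝ p r = (1 / 2 : ℝ) • p + (1 / 2 : ℝ) • r := by
    rw [midpoint_eq_smul_add, smul_add, one_div, invOf_eq_inv]
  have hmem : midpoint ℝ p r ∈ segment ℝ p r := midpoint_mem_segment p r
  refine Set.Subset.antisymm ?_ (Set.union_subset
    ((convex_segment p r).segment_subset hmem (left_mem_segment ℝ p r))
    ((convex_segment p r).segment_subset hmem (right_mem_segment ℝ p r)))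
  rintro _ ⟨a, b, ha, hb, hab, rfl⟩
  obtain rfl : a = 1 - b := by linarith
  rcases le_total b (1 / 2) with h | h
  · refine Or.inl ⟨2 * b, 1 - 2 * b, by linarith, by linarith, by ring, ?_⟩
    rw [hm]; module
  · refine Or.inr ⟨2 - 2 * b, 2 * b - 1, by linarith, by linarith, by ring, ?_⟩
    rw [hm]; module

/-- An edge `[p, r]` of a curve bounding a disk may be replaced by the two edges `[p, q]` and
`[q, r]` if finitely many half-spaces disjoint from the interior of the triangle `pqr` cover the
rest of the curve. -/
lemma IsDiskBoundary.subdivide_edge {R : Set E3} {p r : E3} (h : IsDiskBoundary (R ∪ segment ℝ p r))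
    (q : E3) {ι : Type*} [Fintype ι] [Nonempty ι] (f : ι → E3 →ₗ[ℝ] ℝ) (k : ι → ℝ)
    (hR : ∀ x ∈ R, ∃ i, k i ≤ f i x) (hp : ∀ i, f i p ≤ k i) (hr : ∀ i, f i r ≤ k i)
    (hpr : ∀ i, f i p + f i r < 2 * k i) (hq : ∀ i, f i q < k i)
    (hpk : ∃ i, f i p = k i) (hrk : ∃ i, f i r = k i) :
    IsDiskBoundary (R ∪ (segment ℝ p q ∪ segment ℝ q r)) := by
  set m := midpoint ℝ p r with hm
  have hfm : ∀ i, f i m < k i := by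
    intro i
    rw [hm, midpoint_eq_smul_add, map_smul, map_add, smul_eq_mul, invOf_eq_inv]
    linarith [hpr i]
  let F : ι → E3 → ℝ := fun i x => f i x / (k i - f i m)
  let g : E3 → ℝ := fun x => Finset.univ.sup' Finset.univ_nonempty fun i => F i x
  have le_g : ∀ i x, F i x ≤ g x := fun i x =>
    Finset.le_sup' (fun i => F i x) (Finset.mem_univ i)
  have g_le : ∀ {x c}, (∀ i, F i x ≤ c) → g x ≤ c := fun hx =>
    Finset.sup'_le _ _ fun i _ => hx i
  have hgc : Continuous g := by
    refine Continuous.finset_sup'_apply _ fun i _ => ?_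
    exact ((f i).continuous_of_finiteDimensional).div_const _
  have F_smul : ∀ i x, ∀ s : ℝ, F i (s • x) = s * F i x := by
    intro i x s
    simp only [F, map_smul, smul_eq_mul, mul_div_assoc]
  have F_add : ∀ i x y, F i (x + y) = F i x + F i y := by
    intro i x y
    simp only [F, map_add, add_div]
  have F_sub : ∀ i x, F i (x - m) = (f i x - f i m) / (k i - f i m) := by
    intro i x
    simp only [F, map_sub]
  have hg_smul : ∀ x, ∀ s : ℝ, 0 ≤ s → g (s • x) = s * g x := by
    intro x s hs
    simp only [g, F_smul]
    exact (Finset.mul₀_sup' hs _ _ _).symm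
  have hg_add : ∀ x y, g (x + y) ≤ g x + g y := by
    intro x y
    refine g_le fun i => ?_
    rw [F_add]
    exact add_le_add (le_g i x) (le_g i y)
  have one_le : ∀ {x}, (∃ i, k i ≤ f i x) → 1 ≤ g (x - m) := by
    rintro x ⟨i, hi⟩
    refine le_trans ?_ (le_g i _)
    rw [F_sub, one_le_div (sub_pos.2 (hfm i))]
    linarith
  have le_one : ∀ {x}, (∀ i, f i x ≤ k i) → g (x - m) ≤ 1 := by
    refine fun hx => g_le fun i => ?_
    rw [F_sub, div_le_one (sub_pos.2 (hfm i))]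
    linarith [hx i]
  have hgp : g (p - m) = 1 := le_antisymm (le_one hp) (one_le (hpk.imp fun i hi => hi.ge))
  have hgr : g (r - m) = 1 := le_antisymm (le_one hr) (one_le (hrk.imp fun i hi => hi.ge))
  have hgq : g (q - m) < 1 := by
    refine (Finset.sup'_lt_iff _).2 fun i _ => ?_
    rw [F_sub, div_lt_one (sub_pos.2 (hfm i))]
    linarith [hq i]
  have himg := h.image (continuous_push hgc m (q - m)) (injective_push (fun x s hs => by
    rw [← hg_smul _ _ hs]; exact hg_add _ _) hgq)
  rw [segment_eq_union_midpoint p r, Set.image_union, Set.image_union, ← hm,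
    image_push_segment hg_smul hgp, image_push_segment hg_smul hgr, segment_symm ℝ q p] at himg
  have hRid : push g m (q - m) '' R = R := by
    rw [Set.image_congr fun x hx => push_eq_self (one_le (hR x hx)), Set.image_id']
  rwa [hRid] at himg

/-- The standard triangle in the plane. -/
def stdTriangle : Set (EuclideanSpace ℝ (Fin 2)) :=
  {x | 0 ≤ x 0} ∩ {x | 0 ≤ x 1} ∩ {x | x 0 + x 1 ≤ 1}

lemma interior_stdTriangle :
    interior stdTriangle = {x | 0 < x 0} ∩ {x | 0 < x 1} ∩ {x | x 0 + x 1 < 1} := by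
  have key : ∀ (f : EuclideanSpace ℝ (Fin 2) →L[ℝ] ℝ) (v : EuclideanSpace ℝ (Fin 2)), f v = 1 →
      ∀ s : Set ℝ, interior (f ⁻¹' s) = f ⁻¹' interior s := by
    intro f v hv s
    have hsurj : Function.Surjective f := fun t => ⟨t • v, by simp [hv]⟩
    exact ((f.isOpenMap hsurj).preimage_interior_eq_interior_preimage f.continuous s).symm
  have h0 := key (EuclideanSpace.proj 0) !₂[1, 0] (by simp) (Set.Ici 0)
  have h1 := key (EuclideanSpace.proj 1) !₂[0, 1] (by simp) (Set.Ici 0)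
  have h2 := key (EuclideanSpace.proj 0 + EuclideanSpace.proj 1) !₂[1, 0] (by simp) (Set.Iic 1)
  rw [interior_Ici] at h0 h1
  rw [interior_Iic] at h2
  rw [stdTriangle, interior_inter, interior_inter]
  exact congrArg₂ _ (congrArg₂ _ h0 h1) h2

lemma isClosed_stdTriangle : IsClosed stdTriangle :=
  ((isClosed_le continuous_const (by fun_prop)).inter
    (isClosed_le continuous_const (by fun_prop))).inter (isClosed_le (by fun_prop) continuous_const)

lemma convex_stdTriangle : Convex ℝ stdTriangle := by
  rintro x ⟨⟨hx0, hx1⟩, hx2⟩ y ⟨⟨hy0, hy1⟩, hy2⟩ a b ha hb hab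
  simp only [Set.mem_ofPred_eq] at *
  refine ⟨⟨?_, ?_⟩, ?_⟩ <;>
    simp only [Set.mem_ofPred_eq, PiLp.add_apply, PiLp.smul_apply, smul_eq_mul]
  · positivity
  · positivity
  · nlinarith

lemma isBounded_stdTriangle : Bornology.IsBounded stdTriangle := by
  refine (Metric.isBounded_iff_subset_closedBall 0).2 ⟨2, ?_⟩
  rintro x ⟨⟨hx0, hx1⟩, hx2⟩
  simp only [Set.mem_ofPred_eq] at *
  rw [mem_closedBall_zero_iff]
  have h := EuclideanSpace.real_norm_sq_eq x
  rw [Fin.sum_univ_two] at h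
  nlinarith [norm_nonneg x]

/-- The boundary of a nondegenerate triangle bounds a disk. -/
lemma isDiskBoundary_triangle {a b c : E3}
    (h : ∀ s t : ℝ, s • (b - a) + t • (c - a) = 0 → s = 0 ∧ t = 0) :
    IsDiskBoundary (segment ℝ a b ∪ segment ℝ b c ∪ segment ℝ c a) := by
  have hne : (interior stdTriangle).Nonempty := by
    refine ⟨!₂[1 / 4, 1 / 4], ?_⟩
    rw [interior_stdTriangle]
    refine ⟨⟨?_, ?_⟩, ?_⟩ <;> norm_num
  obtain ⟨e, -, -, he⟩ := exists_homeomorph_image_interior_closure_frontier_eq_unitBall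
    convex_stdTriangle hne isBounded_stdTriangle
  let A : EuclideanSpace ℝ (Fin 2) → E3 := fun x => a + x 0 • (b - a) + x 1 • (c - a)
  have hA : Continuous A := by fun_prop
  have hAi : Function.Injective A := by
    intro x y hxy
    have hxy' : (x 0 - y 0) • (b - a) + (x 1 - y 1) • (c - a) = A x - A y := by
      simp only [A]; module
    rw [hxy, sub_self] at hxy'
    obtain ⟨h0, h1⟩ := h _ _ hxy'
    ext i
    fin_cases i
    · exact sub_eq_zero.1 h0
    · exact sub_eq_zero.1 h1
  refine ⟨A ∘ e.symm, (hA.comp e.symm.continuous).continuousOn,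
    (hAi.comp e.symm.injective).injOn, ?_⟩
  have he' : e.symm '' Metric.sphere 0 1 = frontier stdTriangle := by
    rw [← he, ← Set.image_comp]
    simp
  rw [Set.image_comp, he', isClosed_stdTriangle.frontier_eq, interior_stdTriangle]
  ext z
  constructor
  · rintro ⟨x, ⟨⟨⟨hx0, hx1⟩, hx2⟩, hx⟩, rfl⟩
    simp only [Set.mem_inter_iff, Set.mem_ofPred_eq, not_and, not_lt] at hx0 hx1 hx2 hx
    rcases hx0.eq_or_lt with h0 | h0
    · refine Or.inr ⟨x 1, 1 - x 1, hx1, by linarith, by ring, ?_⟩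
      simp only [A, ← h0]; module
    rcases hx1.eq_or_lt with h1 | h1
    · refine Or.inl (Or.inl ⟨1 - x 0, x 0, by linarith, hx0, by ring, ?_⟩)
      simp only [A, ← h1]; module
    have h2 := hx ⟨h0, h1⟩
    refine Or.inl (Or.inr ⟨x 0, x 1, hx0, hx1, by linarith, ?_⟩)
    have h3 : x 0 = 1 - x 1 := by linarith
    simp only [A, h3]; module
  · have key : ∀ s t : ℝ, 0 ≤ s → 0 ≤ t → s + t ≤ 1 → (s = 0 ∨ t = 0 ∨ s + t = 1) →
        a + s • (b - a) + t • (c - a) ∈ A '' (stdTriangle \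
          ({x | 0 < x 0} ∩ {x | 0 < x 1} ∩ {x | x 0 + x 1 < 1})) := by
      intro s t hs ht hst hor
      refine ⟨!₂[s, t], ⟨⟨⟨by simpa using hs, by simpa using ht⟩, by simpa using hst⟩, ?_⟩,
        by simp [A]⟩
      rintro ⟨⟨h0, h1⟩, h2⟩
      simp at h0 h1 h2
      rcases hor with h | h | h <;> linarith
    rintro ((⟨s, t, hs, ht, hst, rfl⟩ | ⟨s, t, hs, ht, hst, rfl⟩) | ⟨s, t, hs, ht, hst, rfl⟩)
    · convert key t 0 ht le_rfl (by linarith) (by simp) using 1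
      obtain rfl : s = 1 - t := by linarith
      module
    · convert key s t hs ht hst.le (by simp [hst]) using 1
      obtain rfl : s = 1 - t := by linarith
      module
    · convert key 0 s le_rfl hs (by linarith) (by simp) using 1
      obtain rfl : t = 1 - s := by linarith
      module

/-- Pulling an edge to a new vertex preserves unknottedness when each remaining edge is separated
by a plane from the triangle swept out. -/
lemma IsDiskBoundary.subdivide_polygon_edge {ι : Type*} [Fintype ι] [Nonempty ι] {a b : ι → E3}
    {p r : E3} (h : IsDiskBoundary ((⋃ i, segment ℝ (a i) (b i)) ∪ segment ℝ p r)) (q : E3)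
    (f : ι → E3 →ₗ[ℝ] ℝ) (k : ι → ℝ)
    (hf : ∀ i, k i ≤ f i (a i) ∧ k i ≤ f i (b i) ∧ f i p ≤ k i ∧ f i r ≤ k i ∧
      f i p + f i r < 2 * k i ∧ f i q < k i)
    (hpk : ∃ i, f i p = k i) (hrk : ∃ i, f i r = k i) :
    IsDiskBoundary ((⋃ i, segment ℝ (a i) (b i)) ∪ (segment ℝ p q ∪ segment ℝ q r)) := by
  refine h.subdivide_edge q f k (fun x hx => ?_) (fun i => (hf i).2.2.1) (fun i => (hf i).2.2.2.1)
    (fun i => (hf i).2.2.2.2.1) (fun i => (hf i).2.2.2.2.2) hpk hrk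
  obtain ⟨i, hi⟩ := Set.mem_iUnion.1 hx
  exact ⟨i, (convex_halfSpace_ge (f i).isLinear (k i)).segment_subset (hf i).1 (hf i).2.1 hi⟩

lemma isUnknotted_trapChain : IsUnknotted 7 trapChain := by
  have h₀ : IsDiskBoundary (segment ℝ (trapChain 1) (trapChain 2) ∪
      segment ℝ (trapChain 2) (trapChain 4) ∪ segment ℝ (trapChain 4) (trapChain 1)) := by
    refine isDiskBoundary_triangle fun s t h => ?_
    have h₁ := congrArg (fun x : E3 => x 1) h
    have h₂ := congrArg (fun x : E3 => x 2) h
    norm_num [trapChain] at h₁ h₂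
    exact ⟨h₁, h₂⟩
  have h₁ := IsDiskBoundary.subdivide_polygon_edge (p := trapChain 2) (r := trapChain 4)
    (a := ![trapChain 1, trapChain 4]) (b := ![trapChain 2, trapChain 1])
    (by convert h₀ using 1; ext x; simp [Fin.exists_fin_succ]; tauto) (trapChain 3)
    ![lin 0 (-1) (-3), lin 0 (-1) (-1)] ![2, 1]
    (by norm_num [Fin.forall_fin_succ, trapChain]) (by norm_num [Fin.exists_fin_succ, trapChain])
    (by norm_num [Fin.exists_fin_succ, trapChain])
  have h₂ := IsDiskBoundary.subdivide_polygon_edge (p := trapChain 4) (r := trapChain 1)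
    (a := ![trapChain 1, trapChain 2, trapChain 3]) (b := ![trapChain 2, trapChain 3, trapChain 4])
    (by convert h₁ using 1; ext x; simp [Fin.exists_fin_succ]; tauto) (trapChain 6)
    ![lin 0 1 (-3), lin (-1) 0 0, lin 0 (-1) 1] ![2, -10006, 1]
    (by norm_num [Fin.forall_fin_succ, trapChain]) (by norm_num [Fin.exists_fin_succ, trapChain])
    (by norm_num [Fin.exists_fin_succ, trapChain])
  have h₃ := IsDiskBoundary.subdivide_polygon_edge (p := trapChain 6) (r := trapChain 1)
    (a := ![trapChain 1, trapChain 2, trapChain 3, trapChain 4])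
    (b := ![trapChain 2, trapChain 3, trapChain 4, trapChain 6])
    (by convert h₂ using 1; ext x; simp [Fin.exists_fin_succ]; tauto) (trapChain 0)
    ![lin 0 1 (-3), lin (-1) (-4) (-2), lin 0 (-2) 1, lin 1 (-1) 0] ![2, -10008, 2, 39999]
    (by norm_num [Fin.forall_fin_succ, trapChain]) (by norm_num [Fin.exists_fin_succ, trapChain])
    (by norm_num [Fin.exists_fin_succ, trapChain])
  have h₄ := IsDiskBoundary.subdivide_polygon_edge (p := trapChain 4) (r := trapChain 6)
    (a := ![trapChain 0, trapChain 1, trapChain 2, trapChain 3, trapChain 6])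
    (b := ![trapChain 1, trapChain 2, trapChain 3, trapChain 4, trapChain 0])
    (by convert h₃ using 1; ext x; simp [Fin.exists_fin_succ]; tauto) (trapChain 5)
    ![lin (-1) (-20044) 10022, lin 0 0 (-1), lin (-1) 20016 10008, lin 0 (-1) 1, lin 0 1 1]
    ![2, 1, 2, 1, 1]
    (by norm_num [Fin.forall_fin_succ, trapChain]) (by norm_num [Fin.exists_fin_succ, trapChain])
    (by norm_num [Fin.exists_fin_succ, trapChain])
  change IsDiskBoundary _
  convert h₄ using 1
  ext x
  simp only [Set.mem_ofPred_eq, Nat.exists_lt_succ_right, Set.mem_union, Set.mem_iUnion]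
  simp [Fin.exists_fin_succ]
  tauto

/-- There exists a simple closed polygonal chain in ℝ³ that is
unknotted (its image bounds an embedded topological disk) yet locked (it cannot
be convexified by any motion). -/
theorem exists_unknotted_locked_closed_chain :
    ∃ (n : ℕ) (v : ℕ → E3),
      IsSimpleClosedChain n v ∧ IsUnknotted n v ∧ ¬ CanBeConvexified n v :=
  ⟨7, trapChain, isSimpleClosedChain_trapChain, isUnknotted_trapChain,
    not_canBeConvexified_trapChain⟩
end
end

section
/- Every simple closed polygonal chain lying in a plane of ℝ³ (a planar simple polygon) can be convexified, i.e., there is a motion in ℝ³ — a continuous, simplicity-preserving, edge-length-preserving deformation — whose final configuration is a planar convex polygon. -/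
noncomputable section

open Set Filter Topology

/-! ### Closed chains as periodic sequences -/

lemma apply_mod_of_periodic {α : Type*} {n : ℕ} {v : ℕ → α} (hp : ∀ i, v (i + n) = v i) (i : ℕ) :
    v (i % n) = v i := by
  have : Function.Periodic v n := hp
  exact this.map_mod_nat i

section EdgePoint

variable {V W : Type*} [NormedAddCommGroup V] [NormedSpace ℝ V]
  [NormedAddCommGroup W] [NormedSpace ℝ W]

/-- The point with parameter `s` on the edge from `v i` to `v (i + 1)`. -/
def edgePoint (v : ℕ → V) (i : ℕ) (s : ℝ) : V := (1 - s) • v i + s • v (i + 1)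

@[simp] lemma edgePoint_zero (v : ℕ → V) (i : ℕ) : edgePoint v i 0 = v i := by
  simp [edgePoint]

@[simp] lemma edgePoint_one (v : ℕ → V) (i : ℕ) : edgePoint v i 1 = v (i + 1) := by
  simp [edgePoint]

lemma edgePoint_add_period {n : ℕ} {v : ℕ → V} (hp : ∀ i, v (i + n) = v i) (i : ℕ) (s : ℝ) :
    edgePoint v (i + n) s = edgePoint v i s := by
  simp only [edgePoint, hp, add_right_comm i n 1]

lemma edgePoint_mem_segment (v : ℕ → V) (i : ℕ) {s : ℝ} (hs : s ∈ Icc (0 : ℝ) 1) :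
    edgePoint v i s ∈ segment ℝ (v i) (v (i + 1)) :=
  ⟨1 - s, s, by linarith [hs.2], hs.1, by ring, rfl⟩

lemma exists_edgePoint_of_mem_segment {v : ℕ → V} {i : ℕ} {x : V}
    (hx : x ∈ segment ℝ (v i) (v (i + 1))) : ∃ s ∈ Icc (0 : ℝ) 1, edgePoint v i s = x := by
  obtain ⟨a, b, ha, hb, hab, rfl⟩ := hx
  exact ⟨b, ⟨hb, by linarith⟩, by rw [edgePoint, ← hab]; simp⟩

/-- A closed chain of period `n` has separated edges: consecutive edges are not folded onto each
other, and edges that are not consecutive are disjoint. -/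
def EdgesSeparated (n : ℕ) (v : ℕ → V) : Prop :=
  (∀ i < n, ∀ s ∈ Icc (0 : ℝ) 1, edgePoint v i s ≠ edgePoint v (i + 1) s) ∧
  (∀ i < n, ∀ m < n, 2 ≤ m → m + 2 ≤ n → ∀ p ∈ Icc (0 : ℝ) 1 ×ˢ Icc (0 : ℝ) 1,
    edgePoint v i p.1 ≠ edgePoint v (i + m) p.2)

/-- No distance between two points of the chain is smaller in `w` than in `v`. -/
def Expands (v : ℕ → V) (w : ℕ → W) : Prop :=
  ∀ i j, ∀ s ∈ Icc (0 : ℝ) 1, ∀ t ∈ Icc (0 : ℝ) 1,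
    ‖edgePoint v i s - edgePoint v j t‖ ≤ ‖edgePoint w i s - edgePoint w j t‖

lemma Expands.edgesSeparated {n : ℕ} {v : ℕ → V} {w : ℕ → W} (h : Expands v w)
    (hv : EdgesSeparated n v) : EdgesSeparated n w := by
  have key : ∀ i j, ∀ s ∈ Icc (0 : ℝ) 1, ∀ t ∈ Icc (0 : ℝ) 1,
      edgePoint v i s ≠ edgePoint v j t → edgePoint w i s ≠ edgePoint w j t := by
    intro i j s hs t ht hne heq
    have h1 := h i j s hs t ht
    rw [heq, sub_self, norm_zero] at h1
    exact hne (sub_eq_zero.1 (norm_le_zero_iff.1 h1))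
  exact ⟨fun i hi s hs => key _ _ _ hs _ hs (hv.1 i hi s hs),
    fun i hi m hm h2 h3 p hp => key _ _ _ hp.1 _ hp.2 (hv.2 i hi m hm h2 h3 p hp)⟩

lemma continuous_edgePoint (i : ℕ) :
    Continuous fun q : (ℕ → V) × ℝ => edgePoint q.1 i q.2 := by
  unfold edgePoint
  fun_prop

lemma EdgesSeparated.eventually {n : ℕ} {v : ℕ → V} (hv : EdgesSeparated n v) :
    ∀ᶠ u in 𝓝 v, EdgesSeparated n u := by
  have h1 : ∀ᶠ u in 𝓝 v, ∀ i < n, ∀ s ∈ Icc (0 : ℝ) 1,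
      edgePoint u i s ≠ edgePoint u (i + 1) s := by
    refine (eventually_all_finite (finite_lt_nat n)).2 fun i hi => ?_
    refine isCompact_Icc.eventually_forall_of_forall_eventually fun s hs => ?_
    exact (isOpen_ne_fun (continuous_edgePoint i) (continuous_edgePoint (i + 1))).mem_nhds
      (hv.1 i hi s hs)
  have h2 : ∀ᶠ u in 𝓝 v, ∀ i < n, ∀ m < n, 2 ≤ m → m + 2 ≤ n →
      ∀ p ∈ Icc (0 : ℝ) 1 ×ˢ Icc (0 : ℝ) 1, edgePoint u i p.1 ≠ edgePoint u (i + m) p.2 := by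
    refine (eventually_all_finite (finite_lt_nat n)).2 fun i hi =>
      (eventually_all_finite (finite_lt_nat n)).2 fun m hm => ?_
    simp only [eventually_imp_distrib_left]
    intro h2 h3
    refine (isCompact_Icc.prod isCompact_Icc).eventually_forall_of_forall_eventually
      fun p hp => ?_
    have c1 : Continuous fun q : (ℕ → V) × (ℝ × ℝ) => edgePoint q.1 i q.2.1 := by
      unfold edgePoint; fun_prop
    have c2 : Continuous fun q : (ℕ → V) × (ℝ × ℝ) => edgePoint q.1 (i + m) q.2.2 := by
      unfold edgePoint; fun_prop
    exact (isOpen_ne_fun c1 c2).mem_nhds (hv.2 i hi m hm h2 h3 p hp)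
  exact h1.and h2

section Periodic

variable {n : ℕ} {v : ℕ → V}

lemma edgePoint_mod_of_periodic (hp : ∀ i, v (i + n) = v i) (i : ℕ) (s : ℝ) :
    edgePoint v (i % n) s = edgePoint v i s := by
  have : Function.Periodic (fun i => edgePoint v i s) n := fun i => edgePoint_add_period hp i s
  exact this.map_mod_nat i

lemma EdgesSeparated.edgePoint_ne_succ (hv : EdgesSeparated n v) (hn : 3 ≤ n)
    (hp : ∀ i, v (i + n) = v i) (i : ℕ) {s : ℝ} (hs : s ∈ Icc (0 : ℝ) 1) :
    edgePoint v i s ≠ edgePoint v (i + 1) s := by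
  have := hv.1 (i % n) (Nat.mod_lt _ (by omega)) s hs
  rwa [edgePoint_mod_of_periodic hp, ← edgePoint_mod_of_periodic hp (i % n + 1),
    Nat.mod_add_mod, edgePoint_mod_of_periodic hp] at this

lemma EdgesSeparated.edgePoint_ne_add (hv : EdgesSeparated n v)
    (hp : ∀ i, v (i + n) = v i) (i : ℕ) {m : ℕ} (h2 : 2 ≤ m) (hm : m + 2 ≤ n)
    {s t : ℝ} (hs : s ∈ Icc (0 : ℝ) 1) (ht : t ∈ Icc (0 : ℝ) 1) :
    edgePoint v i s ≠ edgePoint v (i + m) t := by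
  have := hv.2 (i % n) (Nat.mod_lt _ (by omega)) m (by omega) h2 hm (s, t) ⟨hs, ht⟩
  rwa [edgePoint_mod_of_periodic hp, ← edgePoint_mod_of_periodic hp (i % n + m),
    Nat.mod_add_mod, edgePoint_mod_of_periodic hp] at this

lemma EdgesSeparated.succ_ne (hv : EdgesSeparated n v) (hn : 3 ≤ n)
    (hp : ∀ i, v (i + n) = v i) (i : ℕ) : v (i + 1) ≠ v i := by
  simpa using (hv.edgePoint_ne_succ hn hp i (s := 0) (by simp)).symm

/-- Consecutive edges are not antiparallel. -/
lemma EdgesSeparated.smul_add_smul_ne_zero (hv : EdgesSeparated n v) (hn : 3 ≤ n)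
    (hp : ∀ i, v (i + n) = v i) (i : ℕ) {a b : ℝ} (ha : 0 ≤ a) (hb : 0 ≤ b) (hab : 0 < a + b) :
    a • (v (i + 1) - v i) + b • (v (i + 2) - v (i + 1)) ≠ 0 := by
  intro h
  refine hv.edgePoint_ne_succ hn hp i (s := b / (a + b)) ⟨by positivity, ?_⟩ ?_
  · rw [div_le_one hab]; linarith
  · have h3 : (a + b)⁻¹ • (a • (v (i + 1) - v i) + b • (v (i + 2) - v (i + 1))) = 0 := by
      rw [h, smul_zero]
    rw [eq_comm, ← sub_eq_zero, ← h3]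
    have e1 : 1 - b / (a + b) = (a + b)⁻¹ * a := by field_simp; ring
    have e2 : b / (a + b) = (a + b)⁻¹ * b := by field_simp
    simp only [edgePoint, e1]
    rw [e2]
    simp only [add_assoc, one_add_one_eq_two]
    module

end Periodic

end EdgePoint

/-- The configuration space of separated closed chains of period `n` with edge lengths `ℓ`. -/
def chainSpace (n : ℕ) (ℓ : ℕ → ℝ) : Set (ℕ → E3) :=
  {γ | (∀ i, γ (i + n) = γ i) ∧ EdgesSeparated n γ ∧ ∀ i, ‖γ (i + 1) - γ i‖ = ℓ i}

/-- A chain whose consecutive edges meet properly. -/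
lemma EdgesSeparated.segment_inter_succ {n : ℕ} {v : ℕ → E3} (hv : EdgesSeparated n v)
    (hn : 3 ≤ n) (hp : ∀ i, v (i + n) = v i) (i : ℕ) :
    segment ℝ (v i) (v (i + 1)) ∩ segment ℝ (v (i + 1)) (v (i + 2)) = {v (i + 1)} := by
  refine Subset.antisymm ?_ ?_
  · rintro x ⟨h1, h2⟩
    obtain ⟨s, hs, rfl⟩ := exists_edgePoint_of_mem_segment h1
    obtain ⟨t, ht, h⟩ := exists_edgePoint_of_mem_segment (v := v) (i := i + 1) h2
    by_contra hne
    have hs1 : s ≠ 1 := by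
      rintro rfl; simp at hne
    have hs' : 0 < 1 - s := by
      have := hs.2
      rcases this.lt_or_eq with h | h
      · linarith
      · exact absurd h hs1
    refine hv.smul_add_smul_ne_zero hn hp i hs'.le ht.1 (by linarith [ht.1]) ?_
    rw [← sub_eq_zero] at h
    rw [← h]
    simp only [edgePoint, add_assoc, one_add_one_eq_two]
    module
  · rintro x rfl
    exact ⟨right_mem_segment _ _ _, left_mem_segment _ _ _⟩

lemma EdgesSeparated.isSimpleClosedChain {n : ℕ} {v : ℕ → E3} (hv : EdgesSeparated n v)
    (hn : 3 ≤ n) (hp : ∀ i, v (i + n) = v i) : IsSimpleClosedChain n v := by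
  have hv0 : v n = v 0 := by simpa using hp 0
  have hv1 : v (n + 1) = v 1 := by simpa [add_comm] using hp 1
  have hmod : ∀ i, v (i % n) = v i := apply_mod_of_periodic hp
  have hne : ∀ i j, i < j → j < n → v i ≠ v j := by
    intro i j hij hj
    by_cases h1 : j = i + 1
    · subst h1; exact (hv.succ_ne hn hp i).symm
    by_cases h2 : i = 0 ∧ j = n - 1
    · obtain ⟨rfl, rfl⟩ := h2
      have := hv.succ_ne hn hp (n - 1)
      rw [Nat.sub_add_cancel (by omega), hv0] at this
      exact this
    · have := hv.edgePoint_ne_add hp i (m := j - i) (by omega) (by omega) (s := 0) (t := 0)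
        (by simp) (by simp)
      simpa [Nat.add_sub_cancel' hij.le] using this
  refine ⟨hn, ?_, ?_⟩
  · intro i j hi hj hij
    rcases lt_or_gt_of_ne hij with h | h
    · exact hne i j h hj
    · exact (hne j i h hi).symm
  · intro i j hij hj
    rw [hmod, hmod]
    split_ifs with h1 h2
    · subst h1
      exact hv.segment_inter_succ hn hp i
    · obtain ⟨rfl, rfl⟩ := h2
      have := hv.segment_inter_succ hn hp (n - 1)
      rw [show n - 1 + 2 = n + 1 by omega, show n - 1 + 1 = n by omega, hv0, hv1] at this
      rw [show n - 1 + 1 = n by omega, hv0, inter_comm]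
      exact this
    · rw [eq_empty_iff_forall_notMem]
      rintro x ⟨hx1, hx2⟩
      obtain ⟨s, hs, rfl⟩ := exists_edgePoint_of_mem_segment hx1
      obtain ⟨t, ht, h⟩ := exists_edgePoint_of_mem_segment hx2
      have := hv.edgePoint_ne_add hp i (m := j - i) (by omega) (by omega) hs ht
      rw [Nat.add_sub_cancel' hij.le] at this
      exact this h.symm

lemma IsSimpleClosedChain.edgesSeparated {n : ℕ} {v : ℕ → E3} (hv : IsSimpleClosedChain n v)
    (hp : ∀ i, v (i + n) = v i) : EdgesSeparated n v := by
  obtain ⟨hn, hinj, hseg⟩ := hv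
  have hv0 : v n = v 0 := by simpa using hp 0
  have hv1 : v (n + 1) = v 1 := by simpa [add_comm] using hp 1
  have hmod : ∀ i, v (i % n) = v i := apply_mod_of_periodic hp
  simp only [hmod] at hseg
  have hadj : ∀ i < n, segment ℝ (v i) (v (i + 1)) ∩ segment ℝ (v (i + 1)) (v (i + 2)) =
      {v (i + 1)} := by
    intro i hi
    by_cases h : i + 1 < n
    · simpa using hseg i (i + 1) (by omega) h
    · obtain rfl : i = n - 1 := by omega
      have := hseg 0 (n - 1) (by omega) (by omega)
      rw [if_neg (by omega), if_pos ⟨rfl, rfl⟩] at this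
      rw [show n - 1 + 2 = n + 1 by omega, show n - 1 + 1 = n by omega, hv0, hv1]
      rw [show n - 1 + 1 = n by omega, hv0, inter_comm] at this
      exact this
  have hsucc : ∀ i < n, v i ≠ v (i + 1) := by
    intro i hi
    rw [← hmod (i + 1)]
    refine hinj i _ hi (Nat.mod_lt _ (by omega)) ?_
    by_cases h : i + 1 < n
    · rw [Nat.mod_eq_of_lt h]; omega
    · obtain rfl : i = n - 1 := by omega
      rw [show n - 1 + 1 = n by omega, Nat.mod_self]; omega
  refine ⟨fun i hi s hs heq => ?_, fun i hi m hm h2 h3 p hpp heq => ?_⟩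
  · have hmem : edgePoint v i s ∈ ({v (i + 1)} : Set E3) := by
      rw [← hadj i hi]
      exact ⟨edgePoint_mem_segment v i hs, heq ▸ edgePoint_mem_segment v (i + 1) hs⟩
    have h1 : edgePoint v i s = v (i + 1) := hmem
    have h2 : edgePoint v (i + 1) s = v (i + 1) := heq ▸ h1
    have e1 : (1 - s) • (v i - v (i + 1)) = 0 := by
      rw [← sub_eq_zero.2 h1, edgePoint]; module
    have e2 : s • (v (i + 2) - v (i + 1)) = 0 := by
      rw [← sub_eq_zero.2 h2, edgePoint]; module
    have hs1 : 1 - s = 0 := (smul_eq_zero.1 e1).resolve_right (sub_ne_zero.2 (hsucc i hi))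
    have hs0 : s ≠ 0 := by intro h; rw [h] at hs1; norm_num at hs1
    have h4 : v (i + 2) = v (i + 1) := sub_eq_zero.1 ((smul_eq_zero.1 e2).resolve_left hs0)
    have h5 := hsucc ((i + 1) % n) (Nat.mod_lt _ (by omega))
    rw [hmod, ← hmod ((i + 1) % n + 1), Nat.mod_add_mod, hmod] at h5
    exact h5 h4.symm
  · have hlt : ∀ a b : ℕ, a + 2 ≤ b → b < n → ¬ (a = 0 ∧ b = n - 1) → ∀ s ∈ Icc (0 : ℝ) 1,
        ∀ t ∈ Icc (0 : ℝ) 1, edgePoint v a s ≠ edgePoint v b t := by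
      intro a b hab hb hne s hs t ht h
      have := hseg a b (by omega) hb
      rw [if_neg (by omega), if_neg hne, eq_empty_iff_forall_notMem] at this
      exact this (edgePoint v a s) ⟨edgePoint_mem_segment v a hs, h ▸ edgePoint_mem_segment v b ht⟩
    by_cases h : i + m < n
    · exact hlt i (i + m) (by omega) h (by omega) _ hpp.1 _ hpp.2 heq
    · have hj : edgePoint v (i + m) p.2 = edgePoint v (i + m - n) p.2 := by
        rw [← edgePoint_add_period hp (i + m - n), Nat.sub_add_cancel (by omega)]
      rw [hj] at heq
      exact hlt (i + m - n) i (by omega) hi (by omega) _ hpp.2 _ hpp.1 heq.symm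

/-! ### Plane geometry in `ℂ` and frames of space -/

/-- The cross product of two vectors of the plane. -/
def cross (a b : ℂ) : ℝ := a.re * b.im - a.im * b.re

/-- An orthonormal frame of space. -/
structure Frame where
  /-- the origin -/
  p : E3
  /-- the first axis -/
  a : E3
  /-- the second axis -/
  b : E3
  /-- the normal axis -/
  c : E3
  orthonormal : Orthonormal ℝ ![a, b, c]

namespace Frame

variable (F : Frame)

/-- The point at height `h` above the point `z` of the coordinate plane. -/
def pt (z : ℂ) (h : ℝ) : E3 := F.p + z.re • F.a + z.im • F.b + h • F.c

/-- A planar chain, placed in the coordinate plane of the frame. -/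
def lift (w : ℕ → ℂ) : ℕ → E3 := fun k => F.pt (w k) 0

/-- The frame with the second axis reversed. -/
def conj : Frame where
  p := F.p
  a := F.a
  b := -F.b
  c := F.c
  orthonormal := by
    have h := F.orthonormal
    rw [orthonormal_vecCons_iff, orthonormal_vecCons_iff] at h ⊢
    simpa [Fin.forall_fin_two] using h

lemma inner_eq : inner ℝ F.a F.a = 1 ∧ inner ℝ F.b F.b = 1 ∧ inner ℝ F.c F.c = 1 ∧
    inner ℝ F.a F.b = 0 ∧ inner ℝ F.a F.c = 0 ∧ inner ℝ F.b F.c = 0 := by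
  have h := F.orthonormal
  have h1 := fun i j => (orthonormal_iff_ite.1 h) i j
  refine ⟨by simpa using h1 0 0, by simpa using h1 1 1, by simpa using h1 2 2,
    by simpa using h1 0 1, by simpa using h1 0 2, by simpa using h1 1 2⟩

lemma norm_pt_sub_pt_sq (z z' : ℂ) (h h' : ℝ) :
    ‖F.pt z h - F.pt z' h'‖ ^ 2 = (z.re - z'.re) ^ 2 + (z.im - z'.im) ^ 2 + (h - h') ^ 2 := by
  obtain ⟨haa, hbb, hcc, hab, hac, hbc⟩ := F.inner_eq
  have : F.pt z h - F.pt z' h' =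
      (z.re - z'.re) • F.a + (z.im - z'.im) • F.b + (h - h') • F.c := by
    unfold pt; module
  rw [this, ← real_inner_self_eq_norm_sq]
  simp only [inner_add_left, inner_add_right, inner_smul_left, inner_smul_right, haa, hbb, hcc,
    hab, hac, hbc, real_inner_comm F.a F.b, real_inner_comm F.a F.c, real_inner_comm F.b F.c,
    RCLike.conj_to_real]
  ring

lemma norm_pt_zero_sub (z z' : ℂ) : ‖F.pt z 0 - F.pt z' 0‖ = ‖z - z'‖ := by
  rw [← sq_eq_sq₀ (norm_nonneg _) (norm_nonneg _), norm_pt_sub_pt_sq, Complex.sq_norm,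
    Complex.normSq_apply]
  simp; ring

lemma pt_combo (z z' : ℂ) (h h' s : ℝ) :
    (1 - s) • F.pt z h + s • F.pt z' h' =
      F.pt ((1 - s) • z + s • z') ((1 - s) * h + s * h') := by
  simp only [pt, Complex.add_re, Complex.add_im, Complex.smul_re, Complex.smul_im, smul_eq_mul]
  module

lemma edgePoint_lift (w : ℕ → ℂ) (i : ℕ) (s : ℝ) :
    edgePoint (F.lift w) i s = F.pt (edgePoint w i s) 0 := by
  simp [edgePoint, lift, pt_combo]

lemma continuous_lift : Continuous F.lift := by
  unfold lift pt
  fun_prop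

lemma expands_lift (w : ℕ → ℂ) : Expands w (F.lift w) := by
  intro i j s _ t _
  rw [edgePoint_lift, edgePoint_lift, norm_pt_zero_sub]

lemma lift_mem_chainSpace {n : ℕ} {w : ℕ → ℂ} {ℓ : ℕ → ℝ} (hp : ∀ i, w (i + n) = w i)
    (hw : EdgesSeparated n w) (hl : ∀ i, ‖w (i + 1) - w i‖ = ℓ i) :
    F.lift w ∈ chainSpace n ℓ :=
  ⟨fun i => by simp [lift, hp], (F.expands_lift w).edgesSeparated hw,
    fun i => by rw [← hl i]; exact F.norm_pt_zero_sub _ _⟩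

lemma lift_conj (w : ℕ → ℂ) :
    F.conj.lift (fun k => (starRingEnd ℂ) (w k)) = F.lift w := by
  funext k
  simp [lift, pt, conj]

/-- The image of the point `z` of the coordinate plane under the rotation by the angle `θ`
about the line through `o` with direction `d`. -/
def turn (o d : ℂ) (θ : ℝ) (z : ℂ) : E3 :=
  F.pt (o + d * ⟨((starRingEnd ℂ) d * (z - o)).re,
    Real.cos θ * ((starRingEnd ℂ) d * (z - o)).im⟩)
    (Real.sin θ * ((starRingEnd ℂ) d * (z - o)).im)

end Frame

/-- The reflection of the point `z` in the line through `o` with direction `d`. -/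
def reflectLine (o d z : ℂ) : ℂ := o + d * (starRingEnd ℂ) ((starRingEnd ℂ) d * (z - o))

lemma cross_eq_im (a b : ℂ) : cross a b = ((starRingEnd ℂ) a * b).im := by
  simp [cross]; ring

lemma eq_add_mul_conj_mul {o d : ℂ} (hd : ‖d‖ = 1) (z : ℂ) :
    o + d * ((starRingEnd ℂ) d * (z - o)) = z := by
  have : d * (starRingEnd ℂ) d = 1 := by
    rw [Complex.mul_conj, Complex.normSq_eq_norm_sq, hd]; norm_num
  rw [← mul_assoc, this]; ring

lemma cross_edgePoint_sub (o d : ℂ) (w : ℕ → ℂ) (i : ℕ) (s : ℝ) :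
    cross d (edgePoint w i s - o) =
      (1 - s) * cross d (w i - o) + s * cross d (w (i + 1) - o) := by
  simp [cross, edgePoint]; ring

lemma norm_sub_sq_of_norm_eq_one {d : ℂ} (hd : ‖d‖ = 1) (z z' : ℂ) :
    ‖z - z'‖ ^ 2 = (((starRingEnd ℂ) d * z).re - ((starRingEnd ℂ) d * z').re) ^ 2 +
      (((starRingEnd ℂ) d * z).im - ((starRingEnd ℂ) d * z').im) ^ 2 := by
  have h1 : ‖z - z'‖ = ‖(starRingEnd ℂ) d * z - (starRingEnd ℂ) d * z'‖ := by
    rw [← mul_sub, norm_mul, RCLike.norm_conj, hd, one_mul]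
  rw [h1, Complex.sq_norm, Complex.normSq_apply]
  simp only [Complex.sub_re, Complex.sub_im]; ring

lemma norm_sub_sq_of_axis {d : ℂ} (hd : ‖d‖ = 1) (o z z' : ℂ) :
    ‖z - z'‖ ^ 2 = (((starRingEnd ℂ) d * (z - o)).re - ((starRingEnd ℂ) d * (z' - o)).re) ^ 2 +
      (((starRingEnd ℂ) d * (z - o)).im - ((starRingEnd ℂ) d * (z' - o)).im) ^ 2 := by
  rw [← norm_sub_sq_of_norm_eq_one hd, sub_sub_sub_cancel_right]

namespace Frame

variable (F : Frame) {o d : ℂ} {θ : ℝ}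

lemma norm_pt_axis_sub_sq (hd : ‖d‖ = 1) (x x' : ℂ) (h h' : ℝ) :
    ‖F.pt (o + d * x) h - F.pt (o + d * x') h'‖ ^ 2 =
      (x.re - x'.re) ^ 2 + (x.im - x'.im) ^ 2 + (h - h') ^ 2 := by
  rw [norm_pt_sub_pt_sq]
  have h2 : d.re ^ 2 + d.im ^ 2 = 1 := by
    have := Complex.sq_norm d
    rw [hd, Complex.normSq_apply] at this
    linarith
  simp only [Complex.add_re, Complex.add_im, Complex.mul_re, Complex.mul_im]
  linear_combination ((x.re - x'.re) ^ 2 + (x.im - x'.im) ^ 2) * h2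

lemma norm_turn_sub_turn (hd : ‖d‖ = 1) (z z' : ℂ) :
    ‖F.turn o d θ z - F.turn o d θ z'‖ = ‖z - z'‖ := by
  rw [← sq_eq_sq₀ (norm_nonneg _) (norm_nonneg _), turn, turn, norm_pt_axis_sub_sq F hd,
    norm_sub_sq_of_axis hd o]
  linear_combination (((starRingEnd ℂ) d * (z - o)).im - ((starRingEnd ℂ) d * (z' - o)).im) ^ 2 *
    Real.sin_sq_add_cos_sq θ

lemma norm_turn_sub_pt_sq (hd : ‖d‖ = 1) (z z' : ℂ) :
    ‖F.turn o d θ z - F.pt z' 0‖ ^ 2 =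
      ‖z - z'‖ ^ 2 + 2 * (1 - Real.cos θ) * (cross d (z - o) * cross d (z' - o)) := by
  rw [turn]
  nth_rw 1 [← eq_add_mul_conj_mul (o := o) hd z']
  rw [norm_pt_axis_sub_sq F hd, norm_sub_sq_of_axis hd o, cross_eq_im, cross_eq_im]
  linear_combination (((starRingEnd ℂ) d * (z - o)).im) ^ 2 * Real.sin_sq_add_cos_sq θ

lemma norm_sub_le_turn_sub_pt (hd : ‖d‖ = 1) {z z' : ℂ} (hz : 0 ≤ cross d (z - o))
    (hz' : 0 ≤ cross d (z' - o)) : ‖z - z'‖ ≤ ‖F.turn o d θ z - F.pt z' 0‖ := by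
  rw [← sq_le_sq₀ (norm_nonneg _) (norm_nonneg _), norm_turn_sub_pt_sq F hd]
  nlinarith [mul_nonneg (sub_nonneg.2 (Real.cos_le_one θ)) (mul_nonneg hz hz')]

lemma turn_combo (z z' : ℂ) (s : ℝ) :
    (1 - s) • F.turn o d θ z + s • F.turn o d θ z' = F.turn o d θ ((1 - s) • z + s • z') := by
  simp only [turn, pt_combo]
  congr 1
  · apply Complex.ext <;> simp <;> ring
  · simp; ring

lemma turn_of_cross_eq_zero (hd : ‖d‖ = 1) {z : ℂ} (hz : cross d (z - o) = 0) :
    F.turn o d θ z = F.pt z 0 := by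
  rw [cross_eq_im] at hz
  rw [turn, hz, mul_zero, mul_zero]
  have h : (⟨((starRingEnd ℂ) d * (z - o)).re, 0⟩ : ℂ) = (starRingEnd ℂ) d * (z - o) :=
    Complex.ext rfl hz.symm
  rw [h, eq_add_mul_conj_mul hd]

lemma turn_zero (hd : ‖d‖ = 1) (z : ℂ) : F.turn o d 0 z = F.pt z 0 := by
  rw [turn, Real.sin_zero, Real.cos_zero, one_mul, zero_mul, Complex.eta,
    eq_add_mul_conj_mul hd]

lemma turn_pi (z : ℂ) : F.turn o d Real.pi z = F.pt (reflectLine o d z) 0 := by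
  rw [turn, Real.sin_pi, Real.cos_pi, zero_mul, reflectLine]
  congr 3
  apply Complex.ext <;> simp <;> ring

lemma continuous_turn (o d z : ℂ) : Continuous fun θ => F.turn o d θ z := by
  simp only [turn, pt, Complex.add_re, Complex.mul_re, Complex.add_im, Complex.mul_im]
  fun_prop

end Frame

/-! ### Flips -/

/-- The chain of period `n` in which the vertices with index in `[i, j]` are reflected in the
line through `w i` with direction `d`. -/
def flipChain (n i j : ℕ) (d : ℂ) (w : ℕ → ℂ) : ℕ → ℂ := fun k =>
  if i ≤ k % n ∧ k % n ≤ j then reflectLine (w i) d (w k) else w k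

/-- The chain of period `n` in which the vertices with index in `[i, j]` are rotated by `θ` about
the line through `w i` with direction `d`. -/
def Frame.turnChain (F : Frame) (n i j : ℕ) (d : ℂ) (w : ℕ → ℂ) (θ : ℝ) : ℕ → E3 := fun k =>
  if i ≤ k % n ∧ k % n ≤ j then F.turn (w i) d θ (w k) else F.pt (w k) 0

section Flip

variable {n i j : ℕ} {d : ℂ} {w : ℕ → ℂ}

lemma Frame.edgePoint_turnChain (F : Frame) (hd : ‖d‖ = 1) (hp : ∀ k, w (k + n) = w k)
    (hij : i < j) (hj : j < n) (hline : cross d (w j - w i) = 0) (θ : ℝ) (k : ℕ) (s : ℝ) :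
    edgePoint (F.turnChain n i j d w θ) k s =
      if i ≤ k % n ∧ k % n < j then F.turn (w i) d θ (edgePoint w k s)
      else F.pt (edgePoint w k s) 0 := by
  have hfix : ∀ l, l % n = i ∨ l % n = j → F.turn (w i) d θ (w l) = F.pt (w l) 0 := by
    intro l hl
    apply F.turn_of_cross_eq_zero hd
    rw [← apply_mod_of_periodic hp l]
    rcases hl with h | h <;> rw [h]
    · simp [cross]
    · exact hline
  have hk : k % n < n := Nat.mod_lt _ (by omega)
  have hk1 : (k + 1) % n = if k % n + 1 = n then 0 else k % n + 1 := by
    rw [← Nat.mod_add_mod]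
    split_ifs with h
    · rw [h, Nat.mod_self]
    · exact Nat.mod_eq_of_lt (by omega)
  have hpt : F.pt (edgePoint w k s) 0 = (1 - s) • F.pt (w k) 0 + s • F.pt (w (k + 1)) 0 := by
    simp [Frame.pt_combo, edgePoint]
  have e : ∀ l, F.turnChain n i j d w θ l =
      if i < l % n ∧ l % n < j then F.turn (w i) d θ (w l) else F.pt (w l) 0 := by
    intro l
    unfold Frame.turnChain
    split_ifs with h1 h2 h2
    · rfl
    · exact hfix l (by omega)
    · omega
    · rfl
  split_ifs with h
  · rw [edgePoint, Frame.turnChain, Frame.turnChain, if_pos (by omega), if_pos, F.turn_combo]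
    · rfl
    · rw [hk1, if_neg (by omega)]; omega
  · rw [edgePoint, e, e, if_neg (by omega), if_neg, hpt]
    rw [hk1]
    split_ifs <;> omega

lemma Frame.expands_turnChain (F : Frame) (hd : ‖d‖ = 1) (hp : ∀ k, w (k + n) = w k)
    (hij : i < j) (hj : j < n) (hline : cross d (w j - w i) = 0)
    (hside : ∀ k, 0 ≤ cross d (w k - w i)) (θ : ℝ) :
    Expands w (F.turnChain n i j d w θ) := by
  intro k l s hs t ht
  have hpos : ∀ k, ∀ s ∈ Icc (0 : ℝ) 1, 0 ≤ cross d (edgePoint w k s - w i) := by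
    intro k s hs
    rw [cross_edgePoint_sub]
    exact add_nonneg (mul_nonneg (by linarith [hs.2]) (hside _)) (mul_nonneg hs.1 (hside _))
  rw [F.edgePoint_turnChain hd hp hij hj hline, F.edgePoint_turnChain hd hp hij hj hline]
  split_ifs
  · rw [F.norm_turn_sub_turn hd]
  · exact F.norm_sub_le_turn_sub_pt hd (hpos _ _ hs) (hpos _ _ ht)
  · rw [norm_sub_rev, norm_sub_rev (F.pt _ _)]
    exact F.norm_sub_le_turn_sub_pt hd (hpos _ _ ht) (hpos _ _ hs)
  · rw [F.norm_pt_zero_sub]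

lemma Frame.norm_turnChain_succ_sub (F : Frame) (hd : ‖d‖ = 1) (hp : ∀ k, w (k + n) = w k)
    (hij : i < j) (hj : j < n) (hline : cross d (w j - w i) = 0) (θ : ℝ) (k : ℕ) :
    ‖F.turnChain n i j d w θ (k + 1) - F.turnChain n i j d w θ k‖ = ‖w (k + 1) - w k‖ := by
  have h0 := F.edgePoint_turnChain hd hp hij hj hline θ k 0
  have h1 := F.edgePoint_turnChain hd hp hij hj hline θ k 1
  rw [edgePoint_zero, edgePoint_zero] at h0
  rw [edgePoint_one, edgePoint_one] at h1
  rw [h0, h1]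
  split_ifs
  · exact F.norm_turn_sub_turn hd _ _
  · exact F.norm_pt_zero_sub _ _

lemma Frame.turnChain_pi (F : Frame) : F.turnChain n i j d w Real.pi =
    F.lift (flipChain n i j d w) := by
  funext k
  unfold Frame.turnChain Frame.lift flipChain
  split_ifs
  · exact F.turn_pi _
  · rfl

lemma flipChain_add_period (hp : ∀ k, w (k + n) = w k) (k : ℕ) :
    flipChain n i j d w (k + n) = flipChain n i j d w k := by
  simp [flipChain, hp]

lemma Frame.joinedIn_flipChain (F : Frame) (hw : EdgesSeparated n w) (hd : ‖d‖ = 1)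
    (hp : ∀ k, w (k + n) = w k) (hij : i < j) (hj : j < n) (hline : cross d (w j - w i) = 0)
    (hside : ∀ k, 0 ≤ cross d (w k - w i)) {ℓ : ℕ → ℝ} (hl : ∀ k, ‖w (k + 1) - w k‖ = ℓ k) :
    JoinedIn (chainSpace n ℓ) (F.lift w) (F.lift (flipChain n i j d w)) := by
  refine JoinedIn.ofLine (f := fun t : ℝ => F.turnChain n i j d w (t * Real.pi)) ?_ ?_ ?_ ?_
  · refine Continuous.continuousOn (continuous_pi fun k => ?_)
    unfold Frame.turnChain
    split_ifs
    · exact (F.continuous_turn _ _ _).comp (by fun_prop)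
    · exact continuous_const
  · funext k
    simp only [zero_mul, Frame.turnChain, Frame.lift, F.turn_zero hd, ite_self]
  · simp only [one_mul, F.turnChain_pi]
  · rintro _ ⟨t, -, rfl⟩
    exact ⟨fun k => by simp [Frame.turnChain, hp],
      (F.expands_turnChain hd hp hij hj hline hside _).edgesSeparated hw,
      fun k => by rw [F.norm_turnChain_succ_sub hd hp hij hj hline, hl]⟩

lemma expands_flipChain (F : Frame) (hd : ‖d‖ = 1)
    (hp : ∀ k, w (k + n) = w k) (hij : i < j) (hj : j < n) (hline : cross d (w j - w i) = 0)
    (hside : ∀ k, 0 ≤ cross d (w k - w i)) : Expands w (flipChain n i j d w) := by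
  intro k l s hs t ht
  have := F.expands_turnChain hd hp hij hj hline hside Real.pi k l s hs t ht
  rwa [F.turnChain_pi, F.edgePoint_lift, F.edgePoint_lift, F.norm_pt_zero_sub] at this

lemma norm_sub_lt_flipChain (F : Frame) (hd : ‖d‖ = 1) (hj : j < n)
    {k l : ℕ} (hik : i < k) (hkj : k < j) (hl : l < n) (hl' : l < i ∨ j < l)
    (hk0 : 0 < cross d (w k - w i)) (hl0 : 0 < cross d (w l - w i)) :
    ‖w k - w l‖ < ‖flipChain n i j d w k - flipChain n i j d w l‖ := by
  have h1 : flipChain n i j d w k = reflectLine (w i) d (w k) := by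
    rw [flipChain, Nat.mod_eq_of_lt (by omega), if_pos (by omega)]
  have h2 : flipChain n i j d w l = w l := by
    rw [flipChain, Nat.mod_eq_of_lt (by omega), if_neg (by omega)]
  rw [h1, h2, ← F.norm_pt_zero_sub (reflectLine _ _ _), ← F.turn_pi,
    ← sq_lt_sq₀ (norm_nonneg _) (norm_nonneg _), F.norm_turn_sub_pt_sq hd, Real.cos_pi]
  nlinarith [mul_pos hk0 hl0]

end Flip

/-! ### Closing up a perturbed polygon -/

/-- The inner product of the first two side vectors of a closed triangle whose side lengths are
those of `A`, `B`, `C`. -/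
def sideInner (A B C : ℂ) : ℝ := (‖C‖ ^ 2 - ‖A‖ ^ 2 - ‖B‖ ^ 2) / 2

/-- The second side vector of a closed triangle whose first side vector is `A`, whose other side
lengths are those of `B` and `C`, and whose orientation is the sign `σ`. -/
def closingSide (σ : ℝ) (A B C : ℂ) : ℂ :=
  ⟨sideInner A B C, σ * √(‖A‖ ^ 2 * ‖B‖ ^ 2 - sideInner A B C ^ 2)⟩ / (starRingEnd ℂ) A

/-- Side vectors with the lengths of `A`, `B`, `C` form a nondegenerate triangle. -/
def IsTriangle (A B C : ℂ) : Prop :=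
  A ≠ 0 ∧ B ≠ 0 ∧ C ≠ 0 ∧ sideInner A B C ^ 2 < ‖A‖ ^ 2 * ‖B‖ ^ 2

section ClosingSide

variable {σ : ℝ} {A B C : ℂ}

lemma IsTriangle.norm_closingSide (h : IsTriangle A B C) (hσ : σ ^ 2 = 1) :
    ‖closingSide σ A B C‖ = ‖B‖ := by
  obtain ⟨hA, -, -, hlt⟩ := h
  have hA' : 0 < ‖A‖ := norm_pos_iff.2 hA
  rw [closingSide, norm_div, RCLike.norm_conj, div_eq_iff hA'.ne',
    ← sq_eq_sq₀ (norm_nonneg _) (by positivity), Complex.sq_norm, Complex.normSq_apply]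
  simp only
  have := Real.sq_sqrt (sub_nonneg.2 hlt.le)
  linear_combination (√(‖A‖ ^ 2 * ‖B‖ ^ 2 - sideInner A B C ^ 2)) ^ 2 * hσ + this

lemma IsTriangle.norm_add_closingSide (h : IsTriangle A B C) (hσ : σ ^ 2 = 1) :
    ‖A + closingSide σ A B C‖ = ‖C‖ := by
  have h1 := h.norm_closingSide hσ
  have h2 : ((starRingEnd ℂ) A * closingSide σ A B C).re = sideInner A B C := by
    rw [closingSide, mul_div_cancel₀]
    simpa using h.1
  rw [← sq_eq_sq₀ (norm_nonneg _) (norm_nonneg _)] at h1 ⊢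
  rw [sideInner] at h2
  rw [Complex.sq_norm, Complex.normSq_apply] at h1 ⊢
  have h3 := Complex.sq_norm A
  rw [Complex.normSq_apply] at h3
  simp only [Complex.mul_re, Complex.conj_re, Complex.conj_im] at h2
  simp only [Complex.add_re, Complex.add_im]
  linear_combination h1 - h3 + 2 * h2

lemma sideInner_of_add_eq_zero (h : A + B + C = 0) :
    sideInner A B C = A.re * B.re + A.im * B.im := by
  obtain rfl : C = -(A + B) := by linear_combination h
  rw [sideInner, norm_neg, Complex.sq_norm, Complex.sq_norm, Complex.sq_norm, Complex.normSq_apply,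
    Complex.normSq_apply, Complex.normSq_apply]
  simp only [Complex.add_re, Complex.add_im]
  ring

lemma norm_sq_mul_sub_sideInner_sq (h : A + B + C = 0) :
    ‖A‖ ^ 2 * ‖B‖ ^ 2 - sideInner A B C ^ 2 = cross A B ^ 2 := by
  rw [sideInner_of_add_eq_zero h, Complex.sq_norm, Complex.sq_norm, Complex.normSq_apply,
    Complex.normSq_apply, cross]
  ring

lemma isTriangle_of_add_eq_zero (h : A + B + C = 0) (hc : cross A B ≠ 0) : IsTriangle A B C := by
  refine ⟨?_, ?_, ?_, ?_⟩
  · rintro rfl; simp [cross] at hc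
  · rintro rfl; simp [cross] at hc
  · rintro rfl
    obtain rfl : B = -A := by linear_combination h
    apply hc; simp [cross]; ring
  · have := norm_sq_mul_sub_sideInner_sq h
    have := sq_pos_of_ne_zero hc
    linarith

lemma closingSide_of_add_eq_zero (h : A + B + C = 0) (hσ : σ ^ 2 = 1) (hc : 0 < σ * cross A B) :
    closingSide σ A B C = B := by
  have hA : (starRingEnd ℂ) A ≠ 0 := by
    have : A ≠ 0 := by rintro rfl; simp [cross] at hc
    simpa using this
  have h1 : √(‖A‖ ^ 2 * ‖B‖ ^ 2 - sideInner A B C ^ 2) = σ * cross A B := by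
    rw [norm_sq_mul_sub_sideInner_sq h,
      show cross A B ^ 2 = (σ * cross A B) ^ 2 by rw [mul_pow, hσ, one_mul], Real.sqrt_sq hc.le]
  rw [closingSide, div_eq_iff hA, h1, ← mul_assoc, ← sq, hσ, one_mul, sideInner_of_add_eq_zero h]
  apply Complex.ext <;> simp [cross] <;> ring

lemma continuousAt_closingSide (hA : A ≠ 0) :
    ContinuousAt (fun q : ℂ × ℂ × ℂ => closingSide σ q.1 q.2.1 q.2.2) (A, B, C) := by
  unfold closingSide
  refine ContinuousAt.div ?_ (by fun_prop) (by simpa using hA)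
  have h : ∀ x y : ℝ, (⟨x, y⟩ : ℂ) = x + y * Complex.I := fun x y => by
    apply Complex.ext <;> simp
  simp only [h, sideInner]
  fun_prop

lemma IsTriangle.eventually (h : IsTriangle A B C) :
    ∀ᶠ q : ℂ × ℂ × ℂ in 𝓝 (A, B, C), IsTriangle q.1 q.2.1 q.2.2 := by
  obtain ⟨h1, h2, h3, h4⟩ := h
  have c : Continuous fun q : ℂ × ℂ × ℂ => sideInner q.1 q.2.1 q.2.2 := by
    unfold sideInner; fun_prop
  refine (ContinuousAt.eventually_ne (g := fun q : ℂ × ℂ × ℂ => q.1) (by fun_prop) h1).and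
    ((ContinuousAt.eventually_ne (g := fun q : ℂ × ℂ × ℂ => q.2.1) (by fun_prop) h2).and
    ((ContinuousAt.eventually_ne (g := fun q : ℂ × ℂ × ℂ => q.2.2) (by fun_prop) h3).and ?_))
  exact ContinuousAt.eventually_lt (by fun_prop) (by fun_prop) h4

end ClosingSide

/-- The `l`-th edge of the chain `w`, rotated by the angle `θ l`. -/
def rotEdge (w : ℕ → ℂ) (θ : ℕ → ℝ) (l : ℕ) : ℂ :=
  (w (l + 1) - w l) * Complex.exp (θ l * Complex.I)

/-- The sum of the rotated edges with index in `[x, y)`. -/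
def rotSum (w : ℕ → ℂ) (x y : ℕ) (θ : ℕ → ℝ) : ℂ := ∑ l ∈ Finset.Ico x y, rotEdge w θ l

/-- The rotations that make the three subchains with vertices in `[0, b]`, `[b, c]`, `[c, n]`
close up again after the edges are rotated by the angles `θ`. -/
def closingFactor (n b c : ℕ) (σ : ℝ) (w : ℕ → ℂ) (θ : ℕ → ℝ) (l : ℕ) : ℂ :=
  if l < b then 1
  else if l < c then
    closingSide σ (rotSum w 0 b θ) (rotSum w b c θ) (rotSum w c n θ) / rotSum w b c θ
  else -(rotSum w 0 b θ + closingSide σ (rotSum w 0 b θ) (rotSum w b c θ) (rotSum w c n θ)) /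
    rotSum w c n θ

/-- The closed chain obtained by rotating the edges of `w` by the angles `θ` and then rotating the
three subchains with vertices in `[0, b]`, `[b, c]`, `[c, n]` so as to close the chain. -/
def perturb (n b c : ℕ) (σ : ℝ) (w : ℕ → ℂ) (θ : ℕ → ℝ) : ℕ → ℂ := fun k =>
  w 0 + ∑ l ∈ Finset.range (k % n), closingFactor n b c σ w θ l * rotEdge w θ l

section Perturb

variable {n b c : ℕ} {σ : ℝ} {w : ℕ → ℂ} {θ : ℕ → ℝ}

lemma norm_rotEdge (w : ℕ → ℂ) (θ : ℕ → ℝ) (l : ℕ) : ‖rotEdge w θ l‖ = ‖w (l + 1) - w l‖ := by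
  rw [rotEdge, norm_mul, Complex.norm_exp_ofReal_mul_I, mul_one]

lemma continuous_rotSum (w : ℕ → ℂ) (x y : ℕ) : Continuous (rotSum w x y) := by
  unfold rotSum rotEdge; fun_prop

lemma rotSum_zero (w : ℕ → ℂ) {x y : ℕ} (h : x ≤ y) : rotSum w x y 0 = w y - w x := by
  simp only [rotSum, rotEdge, Pi.zero_apply, Complex.ofReal_zero, zero_mul, Complex.exp_zero,
    mul_one]
  exact Finset.sum_Ico_sub w h

lemma norm_closingFactor (h : IsTriangle (rotSum w 0 b θ) (rotSum w b c θ) (rotSum w c n θ))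
    (hσ : σ ^ 2 = 1) (l : ℕ) : ‖closingFactor n b c σ w θ l‖ = 1 := by
  unfold closingFactor
  split_ifs
  · simp
  · rw [norm_div, h.norm_closingSide hσ, div_self (norm_ne_zero_iff.2 h.2.1)]
  · rw [norm_div, norm_neg, h.norm_add_closingSide hσ, div_self (norm_ne_zero_iff.2 h.2.2.1)]

lemma sum_closingFactor_mul_rotEdge (hbc : b ≤ c) (hcn : c ≤ n)
    (h : IsTriangle (rotSum w 0 b θ) (rotSum w b c θ) (rotSum w c n θ)) :
    ∑ l ∈ Finset.range n, closingFactor n b c σ w θ l * rotEdge w θ l = 0 := by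
  rw [Finset.range_eq_Ico, ← Finset.sum_Ico_consecutive _ (Nat.zero_le c) hcn,
    ← Finset.sum_Ico_consecutive _ (Nat.zero_le b) hbc]
  have h1 : ∑ l ∈ Finset.Ico 0 b, closingFactor n b c σ w θ l * rotEdge w θ l =
      rotSum w 0 b θ := by
    refine Finset.sum_congr rfl fun l hl => ?_
    rw [closingFactor, if_pos (Finset.mem_Ico.1 hl).2, one_mul]
  have h2 : ∑ l ∈ Finset.Ico b c, closingFactor n b c σ w θ l * rotEdge w θ l =
      closingSide σ (rotSum w 0 b θ) (rotSum w b c θ) (rotSum w c n θ) := by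
    rw [← div_mul_cancel₀ (closingSide σ _ _ _) h.2.1]
    conv_rhs => rw [rotSum.eq_def w b c, Finset.mul_sum, ← rotSum.eq_def w b c]
    refine Finset.sum_congr rfl fun l hl => ?_
    have := Finset.mem_Ico.1 hl
    rw [closingFactor, if_neg (by omega), if_pos (by omega)]
  have h3 : ∑ l ∈ Finset.Ico c n, closingFactor n b c σ w θ l * rotEdge w θ l =
      -(rotSum w 0 b θ + closingSide σ (rotSum w 0 b θ) (rotSum w b c θ) (rotSum w c n θ)) := by
    rw [← div_mul_cancel₀ (-(_ + closingSide σ _ _ _)) h.2.2.1]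
    conv_rhs => rw [rotSum.eq_def w c n, Finset.mul_sum, ← rotSum.eq_def w c n]
    refine Finset.sum_congr rfl fun l hl => ?_
    have := Finset.mem_Ico.1 hl
    rw [closingFactor, if_neg (by omega), if_neg (by omega)]
  rw [h1, h2, h3]
  ring

lemma perturb_add_period (k : ℕ) : perturb n b c σ w θ (k + n) = perturb n b c σ w θ k := by
  simp [perturb]

lemma perturb_of_le (hbc : b ≤ c) (hcn : c ≤ n)
    (h : IsTriangle (rotSum w 0 b θ) (rotSum w b c θ) (rotSum w c n θ)) {k : ℕ} (hk : k ≤ n) :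
    perturb n b c σ w θ k =
      w 0 + ∑ l ∈ Finset.range k, closingFactor n b c σ w θ l * rotEdge w θ l := by
  rcases hk.lt_or_eq with hk | rfl
  · rw [perturb, Nat.mod_eq_of_lt hk]
  · rw [perturb, Nat.mod_self, sum_closingFactor_mul_rotEdge hbc hcn h]
    simp

lemma perturb_sub_perturb (hbc : b ≤ c) (hcn : c ≤ n)
    (h : IsTriangle (rotSum w 0 b θ) (rotSum w b c θ) (rotSum w c n θ)) {i k : ℕ} (hik : i ≤ k)
    (hk : k ≤ n) : perturb n b c σ w θ k - perturb n b c σ w θ i =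
      ∑ l ∈ Finset.Ico i k, closingFactor n b c σ w θ l * rotEdge w θ l := by
  rw [perturb_of_le hbc hcn h hk, perturb_of_le hbc hcn h (hik.trans hk), add_sub_add_left_eq_sub,
    Finset.sum_Ico_eq_sub _ hik]

lemma perturb_succ_sub (hbc : b ≤ c) (hcn : c ≤ n)
    (h : IsTriangle (rotSum w 0 b θ) (rotSum w b c θ) (rotSum w c n θ)) {k : ℕ} (hk : k < n) :
    perturb n b c σ w θ (k + 1) - perturb n b c σ w θ k =
      closingFactor n b c σ w θ k * rotEdge w θ k := by
  rw [perturb_sub_perturb hbc hcn h (Nat.le_succ k) hk]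
  simp

lemma norm_perturb_succ_sub (hp : ∀ k, w (k + n) = w k) (hσ : σ ^ 2 = 1) (hbc : b ≤ c)
    (hcn : c < n) (h : IsTriangle (rotSum w 0 b θ) (rotSum w b c θ) (rotSum w c n θ)) (k : ℕ) :
    ‖perturb n b c σ w θ (k + 1) - perturb n b c σ w θ k‖ = ‖w (k + 1) - w k‖ := by
  have hper : Function.Periodic (fun k => ‖perturb n b c σ w θ (k + 1) - perturb n b c σ w θ k‖) n :=
    fun k => by simp only [add_right_comm k n 1, perturb_add_period]
  have hper' : Function.Periodic (fun k => ‖w (k + 1) - w k‖) n :=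
    fun k => by simp only [add_right_comm k n 1, hp]
  have h1 := hper.map_mod_nat k
  have h2 := hper'.map_mod_nat k
  rw [← h1, ← h2, perturb_succ_sub hbc hcn.le h (Nat.mod_lt _ (by omega)), norm_mul,
    norm_closingFactor h hσ, norm_rotEdge, one_mul]

lemma continuousAt_perturb
    (h : IsTriangle (rotSum w 0 b θ) (rotSum w b c θ) (rotSum w c n θ)) :
    ContinuousAt (perturb n b c σ w) θ := by
  have c1 := (continuous_rotSum w 0 b).continuousAt (x := θ)
  have c2 := (continuous_rotSum w b c).continuousAt (x := θ)
  have c3 := (continuous_rotSum w c n).continuousAt (x := θ)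
  have c4 : ContinuousAt
      (fun θ => closingSide σ (rotSum w 0 b θ) (rotSum w b c θ) (rotSum w c n θ)) θ :=
    ContinuousAt.comp (f := fun θ => (rotSum w 0 b θ, rotSum w b c θ, rotSum w c n θ))
      (continuousAt_closingSide h.1) (c1.prodMk (c2.prodMk c3))
  rw [continuousAt_pi]
  intro k
  unfold perturb
  refine continuousAt_const.add (tendsto_finsetSum _ fun l _ => ?_)
  refine ContinuousAt.mul ?_ (Continuous.continuousAt (by unfold rotEdge; fun_prop))
  unfold closingFactor
  split_ifs
  · exact continuousAt_const
  · exact c4.div c2 h.2.1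
  · exact (c1.add c4).neg.div c3 h.2.2.1

lemma perturb_eq_of_rotEdge {u : ℕ → ℂ} (hpu : ∀ k, u (k + n) = u k) (h0 : u 0 = w 0)
    (hbc : b ≤ c) (hcn : c ≤ n) (hrot : ∀ l, rotEdge w θ l = u (l + 1) - u l) (hσ : σ ^ 2 = 1)
    (hc : 0 < σ * cross (u b - u 0) (u c - u b)) : perturb n b c σ w θ = u := by
  have hs : ∀ x y, x ≤ y → rotSum w x y θ = u y - u x := fun x y hxy => by
    rw [rotSum, Finset.sum_congr rfl fun l _ => hrot l]
    exact Finset.sum_Ico_sub u hxy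
  have hun : u n = u 0 := by simpa using hpu 0
  have hsum : rotSum w 0 b θ + rotSum w b c θ + rotSum w c n θ = 0 := by
    rw [hs _ _ (Nat.zero_le b), hs _ _ hbc, hs _ _ hcn, hun]; ring
  rw [← hs _ _ (Nat.zero_le b), ← hs _ _ hbc] at hc
  have htri := isTriangle_of_add_eq_zero hsum (right_ne_zero_of_mul hc.ne')
  have hside := closingSide_of_add_eq_zero hsum hσ hc
  have hf : ∀ l, closingFactor n b c σ w θ l = 1 := by
    intro l
    unfold closingFactor
    rw [hside]
    split_ifs
    · rfl
    · exact div_self htri.2.1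
    · rw [show -(rotSum w 0 b θ + rotSum w b c θ) = rotSum w c n θ by linear_combination -hsum]
      exact div_self htri.2.2.1
  funext k
  rw [perturb, ← apply_mod_of_periodic hpu k,
    Finset.sum_congr rfl fun l _ => by rw [hf l, one_mul, hrot l], Finset.sum_range_sub, h0]
  ring

end Perturb

section Local

variable {n b c : ℕ} {σ : ℝ} {w : ℕ → ℂ} {ℓ : ℕ → ℝ}

lemma perturb_zero (hp : ∀ k, w (k + n) = w k) (hσ : σ ^ 2 = 1) (hbc : b ≤ c) (hcn : c ≤ n)
    (hc : 0 < σ * cross (w b - w 0) (w c - w b)) : perturb n b c σ w 0 = w :=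
  perturb_eq_of_rotEdge hp rfl hbc hcn (fun l => by simp [rotEdge]) hσ hc

lemma eventually_isTriangle (hp : ∀ k, w (k + n) = w k) (hbc : b ≤ c) (hcn : c ≤ n)
    (hc : 0 < σ * cross (w b - w 0) (w c - w b)) :
    ∀ᶠ θ in 𝓝 (0 : ℕ → ℝ), IsTriangle (rotSum w 0 b θ) (rotSum w b c θ) (rotSum w c n θ) := by
  have h0 : IsTriangle (rotSum w 0 b 0) (rotSum w b c 0) (rotSum w c n 0) := by
    rw [rotSum_zero w (Nat.zero_le b), rotSum_zero w hbc, rotSum_zero w hcn]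
    refine isTriangle_of_add_eq_zero ?_ (right_ne_zero_of_mul hc.ne')
    have : w n = w 0 := by simpa using hp 0
    rw [this]; ring
  exact ((continuous_rotSum w 0 b).prodMk
    ((continuous_rotSum w b c).prodMk (continuous_rotSum w c n))).continuousAt.eventually
      h0.eventually

/-- Small perturbations can be reached by a motion. -/
lemma Frame.eventually_joinedIn_perturb (F : Frame) (hw : EdgesSeparated n w)
    (hp : ∀ k, w (k + n) = w k) (hσ : σ ^ 2 = 1) (hbc : b ≤ c) (hcn : c < n)
    (hc : 0 < σ * cross (w b - w 0) (w c - w b)) (hl : ∀ k, ‖w (k + 1) - w k‖ = ℓ k) :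
    ∀ᶠ θ in 𝓝 (0 : ℕ → ℝ),
      JoinedIn (chainSpace n ℓ) (F.lift w) (F.lift (perturb n b c σ w θ)) := by
  have htri := eventually_isTriangle hp hbc hcn.le hc
  have hzero := perturb_zero hp hσ hbc hcn.le hc
  have hcont : Tendsto (perturb n b c σ w) (𝓝 0) (𝓝 w) := by
    have := (continuousAt_perturb (σ := σ) htri.self_of_nhds).tendsto
    rwa [hzero] at this
  have hgood := htri.and (hcont.eventually hw.eventually)
  have hall : ∀ᶠ θ in 𝓝 (0 : ℕ → ℝ), ∀ t ∈ Icc (0 : ℝ) 1,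
      IsTriangle (rotSum w 0 b (t • θ)) (rotSum w b c (t • θ)) (rotSum w c n (t • θ)) ∧
        EdgesSeparated n (perturb n b c σ w (t • θ)) := by
    refine isCompact_Icc.eventually_forall_of_forall_eventually fun t _ => ?_
    have : Tendsto (fun q : (ℕ → ℝ) × ℝ => q.2 • q.1) (𝓝 (0, t)) (𝓝 0) := by
      have := (Continuous.tendsto (f := fun q : (ℕ → ℝ) × ℝ => q.2 • q.1) (by fun_prop) (0, t))
      simpa using this
    exact this.eventually hgood
  filter_upwards [hall] with θ hθ
  refine JoinedIn.ofLine (f := fun t : ℝ => F.lift (perturb n b c σ w (t • θ))) ?_ ?_ ?_ ?_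
  · intro t ht
    refine ContinuousAt.continuousWithinAt ?_
    refine F.continuous_lift.continuousAt.comp ?_
    exact ContinuousAt.comp (f := fun t : ℝ => t • θ) (continuousAt_perturb (hθ t ht).1)
      (by fun_prop)
  · simp only [zero_smul, hzero]
  · simp only [one_smul]
  · rintro _ ⟨t, ht, rfl⟩
    exact F.lift_mem_chainSpace (fun k => perturb_add_period k) (hθ t ht).2 fun k => by
      rw [norm_perturb_succ_sub hp hσ hbc hcn (hθ t ht).1, hl]

/-- Nearby planar chains with the same edge lengths and the same first vertex can be joined. -/
lemma Frame.eventually_joinedIn (F : Frame) (hn : 3 ≤ n) (hw : EdgesSeparated n w)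
    (hp : ∀ k, w (k + n) = w k) (hbc : b ≤ c) (hcn : c < n)
    (hc : cross (w b - w 0) (w c - w b) ≠ 0) (hl : ∀ k, ‖w (k + 1) - w k‖ = ℓ k) :
    ∀ᶠ u in 𝓝 w, (∀ k, u (k + n) = u k) → u 0 = w 0 → (∀ k, ‖u (k + 1) - u k‖ = ℓ k) →
      JoinedIn (chainSpace n ℓ) (F.lift w) (F.lift u) := by
  obtain ⟨σ, hσ, hσc⟩ : ∃ σ : ℝ, σ ^ 2 = 1 ∧ 0 < σ * cross (w b - w 0) (w c - w b) := by
    rcases lt_or_gt_of_ne hc with h | h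
    · exact ⟨-1, by norm_num, by linarith⟩
    · exact ⟨1, by norm_num, by linarith⟩
  have hne : ∀ l, w (l + 1) - w l ≠ 0 := fun l => sub_ne_zero.2 (hw.succ_ne hn hp l)
  have hlim : Tendsto (fun (u : ℕ → ℂ) (l : ℕ) => Complex.arg ((u (l + 1) - u l) / (w (l + 1) - w l)))
      (𝓝 w) (𝓝 0) := by
    rw [tendsto_pi_nhds]
    intro l
    have h1 : Tendsto (fun u : ℕ → ℂ => (u (l + 1) - u l) / (w (l + 1) - w l)) (𝓝 w) (𝓝 1) := by
      have := Continuous.tendsto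
        (f := fun u : ℕ → ℂ => (u (l + 1) - u l) / (w (l + 1) - w l)) (by fun_prop) w
      rwa [div_self (hne l)] at this
    have h2 := (Complex.continuousAt_arg Complex.one_mem_slitPlane).tendsto.comp h1
    rwa [Complex.arg_one] at h2
  have hor : ∀ᶠ u in 𝓝 w, 0 < σ * cross (u b - u 0) (u c - u b) := by
    have : Continuous fun u : ℕ → ℂ => σ * cross (u b - u 0) (u c - u b) := by
      unfold cross; fun_prop
    exact this.continuousAt.eventually_const_lt hσc
  filter_upwards [hor, hlim.eventually (F.eventually_joinedIn_perturb hw hp hσ hbc hcn hσc hl)]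
    with u hu hjoin hpu h0 hlu
  rwa [perturb_eq_of_rotEdge hpu h0 hbc hcn.le _ hσ hu] at hjoin
  intro l
  have hnorm : ‖(u (l + 1) - u l) / (w (l + 1) - w l)‖ = 1 := by
    rw [norm_div, hlu, hl, ← hl l, div_self (norm_ne_zero_iff.2 (hne l))]
  have := Complex.norm_mul_exp_arg_mul_I ((u (l + 1) - u l) / (w (l + 1) - w l))
  rw [hnorm, Complex.ofReal_one, one_mul] at this
  rw [rotEdge, this, mul_div_cancel₀ _ (hne l)]

end Local

/-! ### Maximally expanded chains -/

lemma cross_sub_right (d x y : ℂ) : cross d (x - y) = cross d x - cross d y := by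
  simp [cross]; ring

lemma cross_add_right (d x y : ℂ) : cross d (x + y) = cross d x + cross d y := by
  simp [cross]; ring

lemma cross_smul_left (r : ℝ) (x y : ℂ) : cross (r • x) y = r * cross x y := by
  simp [cross]; ring

lemma cross_smul_right (r : ℝ) (x y : ℂ) : cross x (r • y) = r * cross x y := by
  simp [cross]; ring

@[simp] lemma cross_same (x : ℂ) : cross x x = 0 := by
  simp [cross]; ring

@[simp] lemma cross_zero_right (x : ℂ) : cross x 0 = 0 := by
  simp [cross]

lemma cross_swap (x y : ℂ) : cross y x = -cross x y := by
  simp [cross]; ring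

lemma exists_eq_smul_of_cross_eq_zero {x y : ℂ} (hx : x ≠ 0) (h : cross x y = 0) :
    ∃ r : ℝ, y = r • x := by
  have h0 : x.re ^ 2 + x.im ^ 2 ≠ 0 := by
    intro h0
    apply hx
    apply Complex.ext
    · exact pow_eq_zero_iff two_ne_zero |>.1 (by nlinarith [sq_nonneg x.re, sq_nonneg x.im])
    · exact pow_eq_zero_iff two_ne_zero |>.1 (by nlinarith [sq_nonneg x.re, sq_nonneg x.im])
  unfold cross at h
  refine ⟨(x.re * y.re + x.im * y.im) / (x.re ^ 2 + x.im ^ 2), ?_⟩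
  apply Complex.ext
  · simp only [Complex.smul_re, smul_eq_mul]
    field_simp
    linear_combination -x.im * h
  · simp only [Complex.smul_im, smul_eq_mul]
    field_simp
    linear_combination x.re * h

section Noncollinear

variable {n : ℕ} {w : ℕ → ℂ}

lemma exists_mod_add_eq (hn : 0 < n) (i k : ℕ) : ∃ m < n, (i + m) % n = k % n := by
  refine ⟨(k % n + (n - i % n)) % n, Nat.mod_lt _ hn, ?_⟩
  have h1 : i % n < n := Nat.mod_lt _ hn
  rw [Nat.add_mod_mod, ← Nat.mod_add_mod, show i % n + (k % n + (n - i % n)) = k % n + n by omega,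
    Nat.add_mod_right, Nat.mod_mod]

/-- Every vertex of a closed chain is reached from the vertex `i` in less than `n` steps. -/
lemma exists_add_eq_of_periodic (hn : 0 < n) (hp : ∀ k, w (k + n) = w k) (i k : ℕ) :
    ∃ m < n, w (i + m) = w k := by
  obtain ⟨m, hm, h⟩ := exists_mod_add_eq hn i k
  exact ⟨m, hm, by rw [← apply_mod_of_periodic hp, h, apply_mod_of_periodic hp]⟩

/-- A separated closed chain is not contained in a line. -/
lemma EdgesSeparated.exists_cross_ne_zero (hw : EdgesSeparated n w) (hn : 3 ≤ n)
    (hp : ∀ k, w (k + n) = w k) {d : ℂ} (hd : d ≠ 0) (o : ℂ) : ∃ k < n, cross d (w k - o) ≠ 0 := by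
  by_contra! hcon
  have hall : ∀ k, cross d (w k - o) = 0 := fun k => by
    rw [← apply_mod_of_periodic hp k]; exact hcon _ (Nat.mod_lt _ (by omega))
  choose r hr using fun k => exists_eq_smul_of_cross_eq_zero hd (hall k)
  obtain ⟨k, -, hk⟩ := Finset.exists_max_image (Finset.range n) r ⟨0, by simp; omega⟩
  have hinj : ∀ i j, w i = w j → r i = r j := by
    intro i j hij
    have : (r i - r j) • d = 0 := by rw [sub_smul, ← hr, ← hr, hij, sub_self]
    exact sub_eq_zero.1 ((smul_eq_zero.1 this).resolve_right hd)
  have hmax : ∀ i, r i ≤ r k := fun i => by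
    rw [hinj i (i % n) (apply_mod_of_periodic hp i).symm]
    exact hk _ (Finset.mem_range.2 (Nat.mod_lt _ (by omega)))
  have hkn : r (k + n - 1 + 1) = r k := hinj _ _ (by rw [Nat.sub_add_cancel (by omega), hp])
  have he : ∀ i, w (i + 1) - w i = (r (i + 1) - r i) • d := fun i => by
    rw [sub_smul, ← hr, ← hr]; ring
  have hne : r (k + n - 1) ≠ r k := by
    intro h
    have := he (k + n - 1)
    rw [hkn, h, sub_self, zero_smul, sub_eq_zero] at this
    exact hw.succ_ne hn hp _ this
  have hlt := lt_of_le_of_ne (hmax (k + n - 1)) hne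
  refine hw.smul_add_smul_ne_zero hn hp (k + n - 1) (a := r k - r (k + n - 1 + 2))
    (b := r k - r (k + n - 1)) (sub_nonneg.2 (hmax _)) (by linarith) ?_ ?_
  · linarith [hmax (k + n - 1 + 2)]
  · rw [he, show k + n - 1 + 2 = k + n - 1 + 1 + 1 by omega, he, hkn]
    module

lemma EdgesSeparated.exists_cross_edge_zero_ne (hw : EdgesSeparated n w) (hn : 3 ≤ n)
    (hp : ∀ k, w (k + n) = w k) : ∃ c < n, 1 ≤ c ∧ cross (w 1 - w 0) (w c - w 1) ≠ 0 := by
  obtain ⟨c, hc, h⟩ := hw.exists_cross_ne_zero hn hp (sub_ne_zero.2 (hw.succ_ne hn hp 0)) (w 1)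
  rw [zero_add] at h
  refine ⟨c, hc, Nat.one_le_iff_ne_zero.2 ?_, h⟩
  rintro rfl
  apply h
  simp [cross]; ring

end Noncollinear

/-- A chain none of whose flips about a supporting line moves two vertices apart: whenever a line
supports the chain at two vertices, one of the two arcs between them lies on that line. -/
def FlipRigid (n : ℕ) (w : ℕ → ℂ) : Prop :=
  ∀ i m : ℕ, ∀ d : ℂ, 0 < m → m < n → d ≠ 0 → cross d (w (i + m) - w i) = 0 →
    (∀ k, 0 ≤ cross d (w k - w i)) →
    (∀ k, 0 < k → k < m → cross d (w (i + k) - w i) = 0) ∨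
    (∀ k, m < k → k < n → cross d (w (i + k) - w i) = 0)

lemma flipRigid_of_lt {n : ℕ} {w : ℕ → ℂ} (hp : ∀ k, w (k + n) = w k)
    (h : ∀ i j : ℕ, ∀ d : ℂ, i < j → j < n → ‖d‖ = 1 → cross d (w j - w i) = 0 →
      (∀ k, 0 ≤ cross d (w k - w i)) →
      (∀ k, i < k → k < j → cross d (w k - w i) = 0) ∨
      (∀ k, k < n → k < i ∨ j < k → cross d (w k - w i) = 0)) : FlipRigid n w := by
  intro i m d hm hmn hd hline hside
  have hd' : 0 < ‖d‖ := norm_pos_iff.2 hd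
  obtain ⟨u, hu, hdu⟩ : ∃ u : ℂ, ‖u‖ = 1 ∧ d = ‖d‖ • u :=
    ⟨‖d‖⁻¹ • d, by rw [norm_smul, norm_inv, norm_norm, inv_mul_cancel₀ hd'.ne'],
      by rw [smul_smul, mul_inv_cancel₀ hd'.ne', one_smul]⟩
  have hzero : ∀ x, cross d x = 0 ↔ cross u x = 0 := fun x => by
    rw [hdu, cross_smul_left, mul_eq_zero, or_iff_right hd'.ne']
  have hmod : ∀ k, w (i + k) = w (i % n + k) := fun k => by
    rw [← apply_mod_of_periodic hp (i + k), ← Nat.mod_add_mod, apply_mod_of_periodic hp]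
  have hi : i % n < n := Nat.mod_lt _ (by omega)
  have hw : ∀ k, n ≤ k → w k = w (k - n) := fun k hk => by
    rw [← hp (k - n), Nat.sub_add_cancel hk]
  have hside' : ∀ k, 0 ≤ cross u (w k - w i) := fun k => by
    have := hside k
    rw [hdu, cross_smul_left] at this
    exact nonneg_of_mul_nonneg_right this hd'
  simp only [hzero] at hline ⊢
  simp only [hmod] at hline ⊢
  rw [← apply_mod_of_periodic hp i] at hline hside' ⊢
  generalize i % n = a at *
  rcases lt_or_ge (a + m) n with hlt | hge
  · rcases h a (a + m) u (by omega) hlt hu hline hside' with h1 | h1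
    · exact Or.inl fun k hk hkm => h1 _ (by omega) (by omega)
    · refine Or.inr fun k hk hkn => ?_
      rcases lt_or_ge (a + k) n with h2 | h2
      · exact h1 _ h2 (by omega)
      · rw [hw _ h2]; exact h1 _ (by omega) (by omega)
  · rw [hw _ hge] at hline
    have hbase : ∀ x, cross u (x - w (a + m - n)) = cross u (x - w a) := fun x => by
      rw [cross_sub_right] at hline ⊢
      rw [cross_sub_right]; linarith
    have := h (a + m - n) a u (by omega) hi hu (by rw [hbase]; simp) (by simpa only [hbase])
    simp only [hbase] at this
    rcases this with h1 | h1
    · refine Or.inr fun k hk hkn => ?_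
      rw [hw _ (by omega)]; exact h1 _ (by omega) (by omega)
    · refine Or.inl fun k hk hkm => ?_
      rcases lt_or_ge (a + k) n with h2 | h2
      · exact h1 _ h2 (by omega)
      · rw [hw _ h2]; exact h1 _ (by omega) (by omega)

section Maximizer

variable {n : ℕ} {v : ℕ → ℂ}

/-- The planar chains that can be reached from `v` and are expanded with respect to `v`. -/
def expandedChains (F : Frame) (n : ℕ) (v : ℕ → ℂ) : Set (ℕ → ℂ) :=
  {w | (∀ k, w (k + n) = w k) ∧ w 0 = v 0 ∧ (∀ k, ‖w (k + 1) - w k‖ = ‖v (k + 1) - v k‖) ∧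
    Expands v w ∧ JoinedIn (chainSpace n fun k => ‖v (k + 1) - v k‖) (F.lift v) (F.lift w)}

lemma Expands.trans {u v w : ℕ → ℂ} (h : Expands u v) (h' : Expands v w) : Expands u w :=
  fun i j s hs t ht => (h i j s hs t ht).trans (h' i j s hs t ht)

lemma isClosed_expands (v : ℕ → ℂ) : IsClosed {w : ℕ → ℂ | Expands v w} := by
  simp only [Expands, ofPred_forall]
  refine isClosed_iInter fun i => isClosed_iInter fun j => isClosed_iInter fun s =>
    isClosed_iInter fun _ => isClosed_iInter fun t => isClosed_iInter fun _ => ?_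
  refine isClosed_le continuous_const ?_
  unfold edgePoint
  fun_prop

lemma isCompact_expandedChains (F : Frame) (hn : 3 ≤ n) (hv : EdgesSeparated n v) :
    IsCompact (expandedChains F n v) := by
  have hclosed : IsClosed (expandedChains F n v) := by
    refine isClosed_of_closure_subset fun w hw => ?_
    have hfr := mem_closure_iff_frequently.1 hw
    have hmem : ∀ {C : Set (ℕ → ℂ)}, IsClosed C → (∀ u ∈ expandedChains F n v, u ∈ C) → w ∈ C :=
      fun hC h => closure_minimal h hC hw
    have hp : ∀ k, w (k + n) = w k := fun k =>
      hmem (C := {u | u (k + n) = u k}) (isClosed_eq (by fun_prop) (by fun_prop)) fun u hu => hu.1 k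
    have h0 : w 0 = v 0 :=
      hmem (C := {u | u 0 = v 0}) (isClosed_eq (by fun_prop) (by fun_prop)) fun u hu => hu.2.1
    have hl : ∀ k, ‖w (k + 1) - w k‖ = ‖v (k + 1) - v k‖ := fun k =>
      hmem (C := {u | ‖u (k + 1) - u k‖ = ‖v (k + 1) - v k‖})
        (isClosed_eq (by fun_prop) (by fun_prop)) fun u hu => hu.2.2.1 k
    have hexp : Expands v w := hmem (isClosed_expands v) fun u hu => hu.2.2.2.1
    have hsep := hexp.edgesSeparated hv
    obtain ⟨c, hcn, hc1, hc⟩ := hsep.exists_cross_edge_zero_ne hn hp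
    obtain ⟨u, hu, hju⟩ := (hfr.and_eventually
      (F.eventually_joinedIn hn hsep hp hc1 hcn hc hl)).exists
    exact ⟨hp, h0, hl, hexp,
      hu.2.2.2.2.trans (hju hu.1 (hu.2.1.trans h0.symm) hu.2.2.1).symm⟩
  refine (isCompact_univ_pi fun k => isCompact_closedBall (v 0)
    (∑ l ∈ Finset.range k, ‖v (l + 1) - v l‖)).of_isClosed_subset hclosed fun w hw k _ => ?_
  rw [mem_closedBall_iff_norm, ← hw.2.1, ← Finset.sum_range_sub w k]
  refine (norm_sum_le _ _).trans (Finset.sum_le_sum fun l _ => (hw.2.2.1 l).le)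

/-- Every separated planar chain can be moved to a separated planar chain that is rigid under
flips. -/
lemma exists_flipRigid (F : Frame) (hn : 3 ≤ n) (hv : EdgesSeparated n v)
    (hp : ∀ k, v (k + n) = v k) :
    ∃ w : ℕ → ℂ, (∀ k, w (k + n) = w k) ∧ (∀ k, ‖w (k + 1) - w k‖ = ‖v (k + 1) - v k‖) ∧
      EdgesSeparated n w ∧ FlipRigid n w ∧
      JoinedIn (chainSpace n fun k => ‖v (k + 1) - v k‖) (F.lift v) (F.lift w) := by
  have hne : (expandedChains F n v).Nonempty :=
    ⟨v, hp, rfl, fun _ => rfl, fun _ _ _ _ _ _ => le_rfl,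
      JoinedIn.refl (F.lift_mem_chainSpace hp hv fun _ => rfl)⟩
  obtain ⟨w, hw, hmax⟩ := (isCompact_expandedChains F hn hv).exists_isMaxOn hne
    (f := fun w => ∑ i ∈ Finset.range n, ∑ j ∈ Finset.range n, ‖w i - w j‖)
    (Continuous.continuousOn (by fun_prop))
  obtain ⟨hpw, h0, hl, hexp, hjoin⟩ := hw
  have hsep := hexp.edgesSeparated hv
  refine ⟨w, hpw, hl, hsep, flipRigid_of_lt hpw ?_, hjoin⟩
  intro i j d hij hj hd hline hside
  by_contra! hcon
  obtain ⟨⟨k, hik, hkj, hk⟩, l, hln, hl', hl0⟩ := hcon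
  have hexp' := expands_flipChain F hd hpw hij hj hline hside
  have hjoin' := F.joinedIn_flipChain hsep hd hpw hij hj hline hside hl
  have hmem : flipChain n i j d w ∈ expandedChains F n v := by
    refine ⟨flipChain_add_period hpw, ?_, fun q => ?_, hexp.trans hexp', hjoin.trans hjoin'⟩
    · rw [flipChain, Nat.zero_mod]
      split_ifs with h
      · obtain rfl : i = 0 := by omega
        simp [reflectLine, h0]
      · exact h0
    · rw [← F.norm_pt_zero_sub]
      exact hjoin'.target_mem.2.2 q
  have hle : ∀ p q, ‖w p - w q‖ ≤ ‖flipChain n i j d w p - flipChain n i j d w q‖ :=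
    fun p q => by simpa using hexp' p q 0 (by simp) 0 (by simp)
  have hlt := norm_sub_lt_flipChain F hd hj hik hkj hln hl'
    (lt_of_le_of_ne (hside k) hk.symm) (lt_of_le_of_ne (hside l) hl0.symm)
  refine (not_le.2 ?_) (isMaxOn_iff.1 hmax _ hmem)
  refine Finset.sum_lt_sum (fun p _ => Finset.sum_le_sum fun q _ => hle p q)
    ⟨k, Finset.mem_range.2 (by omega), Finset.sum_lt_sum (fun q _ => hle k q)
      ⟨l, Finset.mem_range.2 hln, hlt⟩⟩

end Maximizer

/-! ### Flip-rigid chains are weakly convex -/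

/-- The real inner product of two complex numbers. -/
def dot (a b : ℂ) : ℝ := a.re * b.re + a.im * b.im

lemma dot_self_pos {d : ℂ} (hd : d ≠ 0) : 0 < dot d d := by
  have h : Complex.normSq d = dot d d := by simp [Complex.normSq_apply, dot]
  exact h ▸ Complex.normSq_pos.2 hd

lemma dot_smul_right (r : ℝ) (x y : ℂ) : dot x (r • y) = r * dot x y := by
  simp [dot]; ring

lemma dot_self_mul_cross (d x y : ℂ) :
    dot d d * cross x y = dot d x * cross d y - cross d x * dot d y := by
  simp [dot, cross]; ring

section WeaklyConvex

variable {n : ℕ} {w : ℕ → ℂ}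

/-- All vertices lie weakly to the left of the edge `i`. -/
def SupportsEdge (w : ℕ → ℂ) (i : ℕ) : Prop :=
  ∀ k, 0 ≤ cross (w (i + 1) - w i) (w k - w i)

/-- Rotating a supporting ray about `p` until it hits another vertex. -/
lemma exists_supporting_ray (hn : 0 < n) (hp : ∀ k, w (k + n) = w k) {p d : ℂ} (hd : d ≠ 0)
    (hside : ∀ k, 0 ≤ cross d (w k - p))
    (hline : ∀ k, cross d (w k - p) = 0 → dot d (w k - p) ≤ 0)
    (hex : ∃ k < n, cross d (w k - p) ≠ 0) :
    ∃ m, 0 < cross d (w m - p) ∧ ∀ k, 0 ≤ cross (w m - p) (w k - p) := by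
  obtain ⟨k₀, hk₀, hne⟩ := hex
  have hne' : ((Finset.range n).filter fun k => 0 < cross d (w k - p)).Nonempty :=
    ⟨k₀, by simpa using ⟨hk₀, lt_of_le_of_ne (hside k₀) hne.symm⟩⟩
  obtain ⟨m, hm, hmax⟩ := Finset.exists_max_image _
    (fun k => dot d (w k - p) / cross d (w k - p)) hne'
  have hm0 : 0 < cross d (w m - p) := (Finset.mem_filter.1 hm).2
  refine ⟨m, hm0, fun k => ?_⟩
  refine nonneg_of_mul_nonneg_right ?_ (dot_self_pos hd)
  rw [dot_self_mul_cross]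
  rcases (hside k).eq_or_lt with h0 | hpos
  · rw [← h0]
    nlinarith [hline k h0.symm]
  · have h := hmax (k % n) (Finset.mem_filter.2
      ⟨Finset.mem_range.2 (Nat.mod_lt _ hn), by rwa [apply_mod_of_periodic hp]⟩)
    simp only [apply_mod_of_periodic hp] at h
    rw [div_le_div_iff₀ hpos hm0] at h
    linarith

lemma supportsEdge_or_of_line {i : ℕ} {d o : ℂ} (hd : d ≠ 0)
    (h0 : cross d (w i - o) = 0) (h1 : cross d (w (i + 1) - o) = 0)
    (hside : ∀ k, 0 ≤ cross d (w k - o)) :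
    SupportsEdge w i ∨ ∀ k, cross (w (i + 1) - w i) (w k - w i) ≤ 0 := by
  have hline : cross d (w (i + 1) - w i) = 0 := by
    rw [cross_sub_right] at h0 h1 ⊢; linarith
  obtain ⟨r, hr⟩ := exists_eq_smul_of_cross_eq_zero hd hline
  have hside' : ∀ k, 0 ≤ cross d (w k - w i) := fun k => by
    have := hside k
    rw [cross_sub_right] at h0 this ⊢; linarith
  rcases le_total 0 r with h | h
  · exact Or.inl fun k => by rw [hr, cross_smul_left]; exact mul_nonneg h (hside' k)
  · exact Or.inr fun k => by
      rw [hr, cross_smul_left]; exact mul_nonpos_of_nonpos_of_nonneg h (hside' k)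

lemma exists_supportsEdge_or (hn : 3 ≤ n) (hw : EdgesSeparated n w) (hp : ∀ k, w (k + n) = w k)
    (hr : FlipRigid n w) :
    ∃ i, SupportsEdge w i ∨ ∀ k, cross (w (i + 1) - w i) (w k - w i) ≤ 0 := by
  obtain ⟨j, -, hj⟩ := Finset.exists_min_image (Finset.range n)
    (fun k => toLex ((w k).im, -(w k).re)) ⟨0, by simp; omega⟩
  have hmin : ∀ k, (w j).im < (w k).im ∨ (w j).im = (w k).im ∧ (w k).re ≤ (w j).re := fun k => by
    have := hj (k % n) (Finset.mem_range.2 (Nat.mod_lt _ (by omega)))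
    rw [apply_mod_of_periodic hp, Prod.Lex.toLex_le_toLex] at this
    simpa using this
  have hc1 : ∀ z : ℂ, cross 1 z = z.im := fun z => by simp [cross]
  obtain ⟨q, hq, hside⟩ := exists_supporting_ray (p := w j) (d := 1) (by omega) hp one_ne_zero
    (fun k => by rw [hc1, Complex.sub_im]; rcases hmin k with h | h <;> linarith)
    (fun k hk => by
      rw [hc1, Complex.sub_im] at hk
      simp only [dot, Complex.one_re, Complex.one_im, Complex.sub_re]
      rcases hmin k with h | h <;> linarith)
    (hw.exists_cross_ne_zero hn hp one_ne_zero _)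
  obtain ⟨m, hm, hmq⟩ := exists_add_eq_of_periodic (by omega) hp j q
  have hd : w q - w j ≠ 0 := by
    intro h; rw [h] at hq; simp at hq
  have hm0 : 0 < m := Nat.pos_of_ne_zero fun h => hd (by rw [← hmq, h]; simp)
  rcases hr j m _ hm0 hm hd (by rw [hmq]; simp) hside with h | h
  · refine ⟨j, supportsEdge_or_of_line hd (o := w j) (by simp) ?_ hside⟩
    rcases (show 1 ≤ m from hm0).eq_or_lt with rfl | h1
    · rw [hmq]; simp
    · exact h 1 one_pos h1
  · have hjn : j + (n - 1) + 1 = j + n := by omega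
    refine ⟨j + (n - 1), supportsEdge_or_of_line hd (o := w j) ?_ ?_ hside⟩
    · rcases (show m ≤ n - 1 by omega).eq_or_lt with rfl | h1
      · rw [hmq]; simp
      · exact h _ h1 (by omega)
    · rw [hjn, hp]; simp

lemma exists_pos_nonpos_succ {f : ℕ → ℝ} {a b : ℕ} (hab : a ≤ b) (ha : 0 < f a) (hb : f b ≤ 0) :
    ∃ l, a ≤ l ∧ l < b ∧ 0 < f l ∧ f (l + 1) ≤ 0 := by
  by_contra! h
  have : ∀ l, a ≤ l → l ≤ b → 0 < f l := fun l hl => by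
    induction l, hl using Nat.le_induction with
    | base => exact fun _ => ha
    | succ l hl ih => exact fun hlb => h l hl (by omega) (ih (by omega))
  linarith [this b hab le_rfl]

lemma SupportsEdge.succ (hn : 3 ≤ n) (hw : EdgesSeparated n w) (hp : ∀ k, w (k + n) = w k)
    (hr : FlipRigid n w) {i : ℕ} (hi : SupportsEdge w i) : SupportsEdge w (i + 1) := by
  set d := w (i + 1) - w i with hd_def
  have hd : d ≠ 0 := sub_ne_zero.2 (hw.succ_ne hn hp i)
  have hside : ∀ k, 0 ≤ cross d (w k - w (i + 1)) := fun k => by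
    have h : 0 ≤ cross d (w k - w i) := hi k
    rw [show w k - w i = w k - w (i + 1) + d by rw [hd_def]; ring, cross_add_right] at h
    simpa using h
  have hback : w (i + 1 + (n - 1)) - w (i + 1) = (-1 : ℝ) • d := by
    rw [show i + 1 + (n - 1) = i + n by omega, hp, hd_def]; simp
  by_cases hflat : cross d (w (i + 1 + 1) - w (i + 1)) = 0
  · obtain ⟨r, hr'⟩ := exists_eq_smul_of_cross_eq_zero hd hflat
    have hr0 : 0 < r := by
      by_contra! hr0
      refine hw.smul_add_smul_ne_zero hn hp i (a := -r) (b := 1) (by linarith) (by norm_num)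
        (by linarith) ?_
      rw [show i + 2 = i + 1 + 1 by omega, hr', ← hd_def]
      module
    intro k
    rw [hr', cross_smul_left]
    exact mul_nonneg hr0.le (hside k)
  have hline : ∀ k, cross d (w k - w (i + 1)) = 0 → dot d (w k - w (i + 1)) ≤ 0 := by
    intro k hk
    by_contra! hdot
    obtain ⟨m, hm, hmk⟩ := exists_add_eq_of_periodic (by omega) hp (i + 1) k
    rw [← hmk] at hk hdot
    have hm0 : m ≠ 0 := by rintro rfl; simp [dot] at hdot
    have hm1 : m ≠ 1 := by rintro rfl; exact hflat hk
    have hon : ∀ l, m ≤ l → l < n → cross d (w (i + 1 + l) - w (i + 1)) = 0 := by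
      intro l hml hln
      rcases hml.eq_or_lt with rfl | hml
      · exact hk
      rcases hr (i + 1) m d (by omega) hm hd hk hside with h | h
      · exact absurd (h 1 one_pos (by omega)) hflat
      · exact h l hml hln
    obtain ⟨l, hml, hln, hpos, hneg⟩ := exists_pos_nonpos_succ
      (f := fun l => dot d (w (i + 1 + l) - w (i + 1))) (show m ≤ n - 1 by omega) hdot
      (by simp only [hback, dot_smul_right]; linarith [dot_self_pos hd])
    obtain ⟨a, ha⟩ := exists_eq_smul_of_cross_eq_zero hd (hon l hml (by omega))
    obtain ⟨b, hb⟩ := exists_eq_smul_of_cross_eq_zero hd (hon (l + 1) (by omega) (by omega))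
    simp only [ha, hb, dot_smul_right] at hpos hneg
    have ha0 : 0 < a := by
      by_contra! h
      linarith [mul_nonpos_of_nonpos_of_nonneg h (dot_self_pos hd).le]
    have hb0 : b ≤ 0 := by
      by_contra! h
      linarith [mul_pos h (dot_self_pos hd)]
    have hab : 0 < a - b := by linarith
    refine hw.edgePoint_ne_add hp (i + 1) (m := l) (by omega) (by omega) (s := 0) (by simp)
      (t := a / (a - b)) ⟨by positivity, (div_le_one hab).2 (by linarith)⟩ ?_
    rw [edgePoint_zero, edgePoint, ← sub_eq_zero]
    have h1 : w (i + 1 + l) = w (i + 1) + a • d := by rw [← ha]; ring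
    have h2 : w (i + 1 + l + 1) = w (i + 1) + b • d := by rw [← hb, add_assoc (i + 1)]; ring
    rw [h1, h2]
    have h3 : (1 - a / (a - b)) * a + a / (a - b) * b = 0 := by field_simp; ring
    calc _ = -(((1 - a / (a - b)) * a + a / (a - b) * b) • d) := by module
      _ = 0 := by rw [h3]; simp
  obtain ⟨q, hq, hqside⟩ := exists_supporting_ray (by omega) hp hd hside hline
    (hw.exists_cross_ne_zero hn hp hd _)
  obtain ⟨m, hm, hmq⟩ := exists_add_eq_of_periodic (by omega) hp (i + 1) q
  have hd' : w q - w (i + 1) ≠ 0 := by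
    intro h; rw [h] at hq; simp at hq
  have hm0 : 0 < m := Nat.pos_of_ne_zero fun h => hd' (by rw [← hmq, h]; simp)
  have hnext : cross (w q - w (i + 1)) (w (i + 1 + 1) - w (i + 1)) = 0 := by
    rcases (show 1 ≤ m from hm0).eq_or_lt with rfl | h1
    · rw [hmq]; simp
    rcases hr (i + 1) m _ hm0 hm hd' (by rw [hmq]; simp) hqside with h | h
    · exact h 1 one_pos h1
    · exfalso
      rcases (show m ≤ n - 1 by omega).eq_or_lt with rfl | h1
      · rw [← hmq, hback, cross_smul_right] at hq; simp at hq
      · have := h _ h1 (by omega)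
        rw [hback, cross_smul_right, cross_swap] at this
        linarith
  obtain ⟨r, hr'⟩ := exists_eq_smul_of_cross_eq_zero hd' hnext
  have hr0 : 0 ≤ r := by
    have := hside (i + 1 + 1)
    rw [hr', cross_smul_right] at this
    exact nonneg_of_mul_nonneg_left this hq
  intro k
  rw [hr', cross_smul_left]
  exact mul_nonneg hr0 (hqside k)

lemma apply_add_mul_of_periodic (hp : ∀ k, w (k + n) = w k) (k l : ℕ) : w (k + l * n) = w k := by
  induction l with
  | zero => simp
  | succ l ih => rw [Nat.succ_mul, ← add_assoc, hp, ih]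

lemma SupportsEdge.all (hn : 3 ≤ n) (hw : EdgesSeparated n w) (hp : ∀ k, w (k + n) = w k)
    (hr : FlipRigid n w) {i : ℕ} (hi : SupportsEdge w i) (j : ℕ) : SupportsEdge w j := by
  have hge : ∀ l, SupportsEdge w (i + l) := fun l => by
    induction l with
    | zero => exact hi
    | succ l ih => exact ih.succ hn hw hp hr
  have h := hge (j + i * n - i)
  rw [Nat.add_sub_cancel' (by nlinarith)] at h
  intro k
  have := h k
  rwa [add_right_comm, apply_add_mul_of_periodic hp,
    apply_add_mul_of_periodic hp] at this

end WeaklyConvex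

section Conj

open ComplexConjugate

variable {n : ℕ} {w : ℕ → ℂ}

lemma cross_conj (x y : ℂ) : cross (conj x) (conj y) = -cross x y := by
  simp [cross]; ring

lemma EdgesSeparated.conj (hw : EdgesSeparated n w) : EdgesSeparated n fun k => conj (w k) := by
  refine Expands.edgesSeparated (v := w) (fun i j s _ t _ => le_of_eq ?_) hw
  rw [← Complex.norm_conj]
  simp [edgePoint]

lemma FlipRigid.conj (hr : FlipRigid n w) : FlipRigid n fun k => conj (w k) := by
  intro i m d hm hmn hd hline hside
  have key : ∀ x y : ℂ, cross d (conj x - conj y) = cross (-conj d) (x - y) := fun x y => by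
    simp [cross]; ring
  simp only [key] at hline hside ⊢
  exact hr i m _ hm hmn (by simpa using hd) hline hside

/-- Every separated planar chain can be moved to a separated weakly convex planar chain. -/
lemma exists_supportsEdge {v : ℕ → ℂ} (F : Frame) (hn : 3 ≤ n) (hv : EdgesSeparated n v)
    (hp : ∀ k, v (k + n) = v k) :
    ∃ (G : Frame) (w : ℕ → ℂ), (∀ k, w (k + n) = w k) ∧
      (∀ k, ‖w (k + 1) - w k‖ = ‖v (k + 1) - v k‖) ∧
      EdgesSeparated n w ∧ FlipRigid n w ∧ (∀ i, SupportsEdge w i) ∧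
      JoinedIn (chainSpace n fun k => ‖v (k + 1) - v k‖) (F.lift v) (G.lift w) := by
  obtain ⟨w, hpw, hl, hw, hr, hj⟩ := exists_flipRigid F hn hv hp
  obtain ⟨i, hi | hi⟩ := exists_supportsEdge_or hn hw hpw hr
  · exact ⟨F, w, hpw, hl, hw, hr, hi.all hn hw hpw hr, hj⟩
  · have hpc : ∀ k, conj (w (k + n)) = conj (w k) := fun k => by rw [hpw]
    refine ⟨F.conj, fun k => conj (w k), hpc, fun k => ?_, hw.conj, hr.conj,
      SupportsEdge.all (i := i) hn hw.conj hpc hr.conj fun k => ?_, by rwa [F.lift_conj]⟩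
    · rw [← map_sub, Complex.norm_conj, hl]
    · rw [← map_sub, ← map_sub, cross_conj]
      linarith [hi k]

end Conj

/-! ### Making a weakly convex chain strictly convex -/

/-- The edges `i` and `l` have the same direction. -/
def SameDirection (w : ℕ → ℂ) (i l : ℕ) : Prop :=
  ∃ r : ℝ, 0 < r ∧ w (l + 1) - w l = r • (w (i + 1) - w i)

section Corners

variable {n : ℕ} {w : ℕ → ℂ}

lemma SameDirection.refl (w : ℕ → ℂ) (i : ℕ) : SameDirection w i i := ⟨1, one_pos, by simp⟩

lemma SameDirection.cross_eq_zero {i j k : ℕ} (h : SameDirection w i j)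
    (h' : SameDirection w i k) : cross (w (j + 1) - w j) (w (k + 1) - w k) = 0 := by
  obtain ⟨r, -, h⟩ := h
  obtain ⟨s, -, h'⟩ := h'
  rw [h, h', cross_smul_left, cross_smul_right, cross_same, mul_zero, mul_zero]

lemma exists_sub_eq_smul_of_sameDirection {i j : ℕ} (hij : i < j)
    (h : ∀ l, i ≤ l → l < j → SameDirection w i l) :
    ∃ r : ℝ, 0 < r ∧ w j - w i = r • (w (i + 1) - w i) := by
  induction j, hij using Nat.le_induction with
  | base => exact ⟨1, one_pos, by simp⟩
  | succ j hij ih =>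
    obtain ⟨r, hr, hr'⟩ := ih fun l hl hlj => h l hl (by omega)
    obtain ⟨s, hs, hs'⟩ := h j (by omega) (by omega)
    exact ⟨r + s, add_pos hr hs, by rw [add_smul, ← hr', ← hs']; ring⟩

/-- Edges on the supporting line of an edge point in its direction. -/
lemma sameDirection_of_cross_eq_zero (hn : 3 ≤ n) (hw : EdgesSeparated n w)
    (hp : ∀ k, w (k + n) = w k) (hs : ∀ i, SupportsEdge w i) {i l : ℕ}
    (h0 : cross (w (i + 1) - w i) (w l - w i) = 0)
    (h1 : cross (w (i + 1) - w i) (w (l + 1) - w i) = 0) : SameDirection w i l := by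
  have hd : w (i + 1) - w i ≠ 0 := sub_ne_zero.2 (hw.succ_ne hn hp i)
  have h2 : cross (w (i + 1) - w i) (w (l + 1) - w l) = 0 := by
    rw [cross_sub_right] at h0 h1 ⊢; linarith
  obtain ⟨r, hr⟩ := exists_eq_smul_of_cross_eq_zero hd h2
  refine ⟨r, ?_, hr⟩
  by_contra! hr0
  have hr1 : r < 0 := lt_of_le_of_ne hr0 fun h => hw.succ_ne hn hp l <| by
    rw [h, zero_smul, sub_eq_zero] at hr; exact hr
  obtain ⟨k, -, hk⟩ := hw.exists_cross_ne_zero hn hp hd (w i)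
  have h3 := hs l k
  have h4 := lt_of_le_of_ne (hs i k) hk.symm
  have h5 : cross (w (i + 1) - w i) (w k - w l) = cross (w (i + 1) - w i) (w k - w i) := by
    rw [cross_sub_right] at h0 ⊢; rw [cross_sub_right]; linarith
  rw [hr, cross_smul_left, h5] at h3
  nlinarith

/-- If a vertex lies on the supporting line of an edge, then all the edges of one of the arcs
between them have the direction of that edge. -/
lemma sameDirection_or_of_cross_eq_zero (hn : 3 ≤ n) (hw : EdgesSeparated n w)
    (hp : ∀ k, w (k + n) = w k) (hr : FlipRigid n w) (hs : ∀ i, SupportsEdge w i) {i m : ℕ}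
    (hm : 0 < m) (hmn : m < n) (h : cross (w (i + 1) - w i) (w (i + m) - w i) = 0) :
    (∀ l, l < m → SameDirection w i (i + l)) ∨
    (∀ l, m ≤ l → l < n → SameDirection w i (i + l)) := by
  have hd : w (i + 1) - w i ≠ 0 := sub_ne_zero.2 (hw.succ_ne hn hp i)
  rcases hr i m _ hm hmn hd h (hs i) with h' | h'
  · have h1 : ∀ l, l ≤ m → cross (w (i + 1) - w i) (w (i + l) - w i) = 0 := fun l hl => by
      rcases Nat.eq_zero_or_pos l with rfl | hl0
      · simp
      rcases hl.eq_or_lt with rfl | hl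
      · exact h
      · exact h' l hl0 hl
    exact Or.inl fun l hl => sameDirection_of_cross_eq_zero hn hw hp hs (h1 l hl.le) (h1 (l + 1) hl)
  · have h1 : ∀ l, m ≤ l → l ≤ n → cross (w (i + 1) - w i) (w (i + l) - w i) = 0 := by
      intro l hl hln
      rcases hl.eq_or_lt with rfl | hl
      · exact h
      rcases hln.eq_or_lt with rfl | hln
      · rw [hp]; simp
      · exact h' l hl hln
    exact Or.inr fun l hl hln => sameDirection_of_cross_eq_zero hn hw hp hs (h1 l hl hln.le)
      (h1 (l + 1) (by omega) hln)

/-- The first vertex after the edge `i` at which the chain turns. -/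
lemma exists_next_corner (hn : 3 ≤ n) (hw : EdgesSeparated n w)
    (hp : ∀ k, w (k + n) = w k) (hs : ∀ i, SupportsEdge w i) (i : ℕ) :
    ∃ j, i < j ∧ j < i + n ∧ (∀ l, i ≤ l → l < j → SameDirection w i l) ∧
      0 < cross (w (i + 1) - w i) (w (j + 1) - w j) := by
  have hex : ∃ j, i < j ∧ cross (w (i + 1) - w i) (w (j + 1) - w i) ≠ 0 := by
    obtain ⟨k, -, hk⟩ := hw.exists_cross_ne_zero hn hp
      (sub_ne_zero.2 (hw.succ_ne hn hp i)) (w i)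
    obtain ⟨m, -, hm⟩ := exists_add_eq_of_periodic (by omega) hp (i + 2) k
    exact ⟨i + m + 1, by omega, by rwa [show i + m + 1 + 1 = i + 2 + m by omega, hm]⟩
  classical
  have hj := Nat.find_spec hex
  have hmin := fun {m} => Nat.find_min hex (m := m)
  generalize Nat.find hex = j at hj hmin
  have hon : ∀ l, i ≤ l → l ≤ j → cross (w (i + 1) - w i) (w l - w i) = 0 := by
    intro l hl hlj
    rcases hl.eq_or_lt with rfl | hl
    · simp
    rcases (show i + 1 ≤ l from hl).eq_or_lt with rfl | hl
    · simp
    by_contra hne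
    exact hmin (m := l - 1) (by omega) ⟨by omega, by rwa [Nat.sub_add_cancel (by omega)]⟩
  refine ⟨j, hj.1, ?_, fun l hl hlj => sameDirection_of_cross_eq_zero hn hw hp hs
    (hon l hl hlj.le) (hon (l + 1) (by omega) hlj), ?_⟩
  · by_contra! hge
    apply hj.2
    have := hon (j + 1 - n) (by omega) (by omega)
    rwa [← hp (j + 1 - n), Nat.sub_add_cancel (by omega)] at this
  · have h1 := hon j hj.1.le le_rfl
    have h2 := lt_of_le_of_ne (hs i (j + 1)) hj.2.symm
    rw [cross_sub_right] at h1 h2 ⊢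
    linarith

end Corners

section Shift

lemma EdgesSeparated.shift {V : Type*} [NormedAddCommGroup V] [NormedSpace ℝ V] {n : ℕ}
    {v : ℕ → V} (hv : EdgesSeparated n v) (hn : 3 ≤ n) (hp : ∀ k, v (k + n) = v k) (a : ℕ) :
    EdgesSeparated n fun k => v (k + a) := by
  have key : ∀ i s, edgePoint (fun k => v (k + a)) i s = edgePoint v (i + a) s := fun i s => by
    simp only [edgePoint, add_right_comm]
  refine ⟨fun i _ s hs => ?_, fun i _ m _ h2 hm p hpp => ?_⟩
  · rw [key, key, add_right_comm]
    exact hv.edgePoint_ne_succ hn hp _ hs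
  · rw [key, key, add_right_comm]
    exact hv.edgePoint_ne_add hp _ h2 hm hpp.1 hpp.2

lemma JoinedIn.chainSpace_shift {n : ℕ} {ℓ : ℕ → ℝ} {x y : ℕ → E3} (hn : 3 ≤ n)
    (h : JoinedIn (chainSpace n ℓ) x y) (a : ℕ) :
    JoinedIn (chainSpace n fun k => ℓ (k + a)) (fun k => x (k + a)) fun k => y (k + a) := by
  obtain ⟨γ, hγ⟩ := h
  refine ⟨γ.map (f := fun v : ℕ → E3 => fun k => v (k + a)) (by fun_prop), fun t => ?_⟩
  obtain ⟨h1, h2, h3⟩ := hγ t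
  refine ⟨fun i => ?_, h2.shift hn h1 a, fun i => ?_⟩
  · simp only [Path.map_coe, Function.comp_apply]
    rw [add_right_comm, h1]
  · simp only [Path.map_coe, Function.comp_apply]
    rw [add_right_comm, h3]

lemma FlipRigid.shift {n : ℕ} {w : ℕ → ℂ} (hr : FlipRigid n w) (hp : ∀ k, w (k + n) = w k)
    (a : ℕ) : FlipRigid n fun k => w (k + a) := by
  intro i m d hm hmn hd hline hside
  simp only [add_right_comm i _ a] at hline ⊢
  refine hr (i + a) m d hm hmn hd hline fun k => ?_
  obtain ⟨m, -, hm⟩ := exists_add_eq_of_periodic (by omega) hp a k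
  rw [← hm, add_comm a]
  exact hside m

lemma SupportsEdge.shift {w : ℕ → ℂ} {a i : ℕ}
    (hi : SupportsEdge w (i + a)) : SupportsEdge (fun k => w (k + a)) i := by
  intro k
  simp only [add_right_comm i _ a]
  exact hi _

end Shift

/-- In the chain `u`, all vertices other than the endpoints of an edge lie strictly to the left of
that edge. -/
def StrictlyConvex (n : ℕ) (u : ℕ → ℂ) : Prop :=
  ∀ i m, 2 ≤ m → m < n → 0 < cross (u (i + 1) - u i) (u (i + m) - u i)

lemma cross_mul_rotEdge {κ : ℂ} (hκ : ‖κ‖ = 1) {w : ℕ → ℂ} {i l : ℕ} {r : ℝ}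
    (h : w (l + 1) - w l = r • (w (i + 1) - w i)) (θ : ℕ → ℝ) :
    cross (κ * rotEdge w θ i) (κ * rotEdge w θ l) =
      r * ‖w (i + 1) - w i‖ ^ 2 * Real.sin (θ l - θ i) := by
  have h1 : κ.re * κ.re + κ.im * κ.im = 1 := by
    rw [← Complex.normSq_apply, Complex.normSq_eq_norm_sq, hκ, one_pow]
  rw [rotEdge, rotEdge, h, ← Complex.normSq_eq_norm_sq, Complex.normSq_apply, Real.sin_sub]
  generalize w (i + 1) - w i = x
  simp only [cross, Complex.mul_re, Complex.mul_im, Complex.exp_ofReal_mul_I_re,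
    Complex.exp_ofReal_mul_I_im, Complex.smul_re, Complex.smul_im, smul_eq_mul]
  linear_combination (r * (x.re * x.re + x.im * x.im) *
    (Real.sin (θ l) * Real.cos (θ i) - Real.cos (θ l) * Real.sin (θ i))) * h1

lemma cross_sum_right {ι : Type*} (s : Finset ι) (d : ℂ) (f : ι → ℂ) :
    cross d (∑ l ∈ s, f l) = ∑ l ∈ s, cross d (f l) := by
  classical
  induction s using Finset.induction_on with
  | empty => simp
  | insert a s ha ih => rw [Finset.sum_insert ha, Finset.sum_insert ha, cross_add_right, ih]

section Strict

variable {n b c : ℕ} {σ ε : ℝ} {w : ℕ → ℂ}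

lemma closingFactor_eq {θ : ℕ → ℝ} {i l : ℕ} (hb : i < b ↔ l < b) (hc : i < c ↔ l < c) :
    closingFactor n b c σ w θ l = closingFactor n b c σ w θ i := by
  simp only [closingFactor, hb, hc]

/-- The direction of the edges changes at the vertices `0`, `b` and `c`. -/
structure IsCornerTriple (n b c : ℕ) (w : ℕ → ℂ) : Prop where
  pos : 0 < b
  lt : b < c
  lt_n : c < n
  corner_zero : cross (w (n - 1 + 1) - w (n - 1)) (w 1 - w 0) ≠ 0
  corner_left : cross (w (b - 1 + 1) - w (b - 1)) (w (b + 1) - w b) ≠ 0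
  corner_right : cross (w (c - 1 + 1) - w (c - 1)) (w (c + 1) - w c) ≠ 0
  cross_pos : 0 < cross (w b - w 0) (w c - w b)

lemma IsCornerTriple.closingFactor_eq (h : IsCornerTriple n b c w) {θ : ℕ → ℝ} {i x y l l' : ℕ}
    (hd : ∀ l, x ≤ l → l < y → SameDirection w i l) (hl : x ≤ l) (hly : l < y)
    (hl' : x ≤ l') (hly' : l' < y) :
    closingFactor n b c σ w θ l = closingFactor n b c σ w θ l' := by
  have key : ∀ e, 0 < e → cross (w (e - 1 + 1) - w (e - 1)) (w (e + 1) - w e) ≠ 0 →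
      ¬ (x < e ∧ e < y) := fun e he hne hxy =>
    hne ((hd (e - 1) (by omega) (by omega)).cross_eq_zero (hd e (by omega) (by omega)))
  have hb := key b h.pos h.corner_left
  have hc := key c (h.pos.trans h.lt) h.corner_right
  exact _root_.closingFactor_eq (by omega) (by omega)

lemma IsCornerTriple.exists_joinedIn_strictlyConvex (h : IsCornerTriple n b c w) (F : Frame)
    (hn : 3 ≤ n) (hw : EdgesSeparated n w) (hp : ∀ k, w (k + n) = w k) (hr : FlipRigid n w)
    (hs : ∀ i, SupportsEdge w i) :
    ∃ u : ℕ → ℂ, StrictlyConvex n u ∧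
      JoinedIn (chainSpace n fun k => ‖w (k + 1) - w k‖) (F.lift w) (F.lift u) := by
  have hσ : (1 : ℝ) ^ 2 = 1 := one_pow 2
  have hbc := h.lt.le
  have hcn := h.lt_n
  have hc : 0 < 1 * cross (w b - w 0) (w c - w b) := by rw [one_mul]; exact h.cross_pos
  have hne : ∀ k, w (k + 1) - w k ≠ 0 := fun k => sub_ne_zero.2 (hw.succ_ne hn hp k)
  have hθ : Tendsto (fun ε : ℝ => fun l : ℕ => ε * (l : ℝ)) (𝓝[>] 0) (𝓝 (0 : ℕ → ℝ)) := by
    have : Continuous fun ε : ℝ => fun l : ℕ => ε * (l : ℝ) := by fun_prop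
    have h0 := (this.tendsto 0).mono_left (nhdsWithin_le_nhds (s := Ioi 0))
    convert h0 using 2
    funext l; simp
  have htri := eventually_isTriangle hp hbc hcn.le hc
  have hcont : Tendsto (perturb n b c 1 w) (𝓝 0) (𝓝 w) := by
    have := (continuousAt_perturb (σ := 1) htri.self_of_nhds).tendsto
    rwa [perturb_zero hp hσ hbc hcn.le hc] at this
  have hlim := tendsto_pi_nhds.1 (hcont.comp hθ)
  have hpos : ∀ i ∈ Iio n, ∀ m ∈ Iio n,
      ∀ᶠ ε in 𝓝[>] (0 : ℝ), 0 < cross (w (i + 1) - w i) (w (i + m) - w i) →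
        0 < cross (perturb n b c 1 w (fun l => ε * l) (i + 1) - perturb n b c 1 w (fun l => ε * l) i)
          (perturb n b c 1 w (fun l => ε * l) (i + m) - perturb n b c 1 w (fun l => ε * l) i) := by
    intro i _ m _
    by_cases hcr : 0 < cross (w (i + 1) - w i) (w (i + m) - w i)
    · have hcc : Continuous fun q : ℂ × ℂ => cross q.1 q.2 := by unfold cross; fun_prop
      have ht := hcc.continuousAt.tendsto.comp
        (((hlim (i + 1)).sub (hlim i)).prodMk_nhds ((hlim (i + m)).sub (hlim i)))
      exact (ht.eventually (lt_mem_nhds hcr)).mono fun ε hε _ => hε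
    · exact Eventually.of_forall fun ε h => absurd h hcr
  have hpos' := (finite_Iio n).eventually_all.2 fun i hi =>
    (finite_Iio n).eventually_all.2 (hpos i hi)
  have hsmall : ∀ᶠ ε in 𝓝[>] (0 : ℝ), ε * n < Real.pi := by
    have : Tendsto (fun ε : ℝ => ε * n) (𝓝[>] 0) (𝓝 (0 * n)) :=
      ((continuous_id.mul continuous_const).tendsto 0).mono_left nhdsWithin_le_nhds
    rw [zero_mul] at this
    exact this.eventually (gt_mem_nhds Real.pi_pos)
  obtain ⟨ε, hε, htri', hjoin, hpos'', hπ⟩ := (eventually_mem_nhdsWithin.and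
    ((hθ.eventually htri).and ((hθ.eventually (F.eventually_joinedIn_perturb hw hp hσ hbc hcn hc
      fun _ => rfl)).and (hpos'.and hsmall)))).exists
  have hε0 : 0 < ε := hε
  set θ : ℕ → ℝ := fun l => ε * l with hθ_def
  set u := perturb n b c 1 w θ with hu_def
  have hpu : ∀ k, u (k + n) = u k := perturb_add_period
  have hsin : ∀ x y : ℕ, x < y → y ≤ n → 0 < Real.sin (θ y - θ x) := by
    intro x y hxy hyn
    have h1 : (x : ℝ) < y := by exact_mod_cast hxy
    have h2 : (y : ℝ) ≤ n := by exact_mod_cast hyn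
    have h3 : (0 : ℝ) ≤ x := Nat.cast_nonneg x
    apply Real.sin_pos_of_pos_of_lt_pi
    · simp only [hθ_def]; nlinarith
    · simp only [hθ_def]; nlinarith
  have hnsq : ∀ i, 0 < ‖w (i + 1) - w i‖ ^ 2 := fun i => pow_pos (norm_pos_iff.2 (hne i)) 2
  have hforward : ∀ i j, i + 2 ≤ j → j ≤ n → (∀ l, i ≤ l → l < j → SameDirection w i l) →
      0 < cross (u (i + 1) - u i) (u j - u i) := by
    intro i j hij hj hd
    rw [hu_def, perturb_sub_perturb hbc hcn.le htri' (by omega : i ≤ j) hj,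
      perturb_succ_sub hbc hcn.le htri' (by omega), cross_sum_right,
      ← Finset.add_sum_Ioo_eq_sum_Ico (by omega), cross_same, zero_add]
    refine Finset.sum_pos (fun l hl => ?_) ⟨i + 1, by simp; omega⟩
    obtain ⟨hl1, hl2⟩ := Finset.mem_Ioo.1 hl
    obtain ⟨r, hr0, hr'⟩ := hd l hl1.le hl2
    rw [h.closingFactor_eq (l' := i) hd hl1.le hl2 le_rfl (by omega),
      cross_mul_rotEdge (norm_closingFactor htri' hσ i) hr']
    exact mul_pos (mul_pos hr0 (hnsq i)) (hsin _ _ hl1 (by omega))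
  have hbackward : ∀ i j, j < i → i < n → (∀ l, j ≤ l → l < i + 1 → SameDirection w i l) →
      0 < cross (u (i + 1) - u i) (u j - u i) := by
    intro i j hij hi hd
    rw [← neg_sub (u i) (u j), ← neg_one_smul ℝ, cross_smul_right, neg_one_mul, neg_pos, hu_def,
      perturb_sub_perturb hbc hcn.le htri' hij.le hi.le,
      perturb_succ_sub hbc hcn.le htri' hi, cross_sum_right]
    refine Finset.sum_neg (fun l hl => ?_) ⟨j, by simp; omega⟩
    obtain ⟨hl1, hl2⟩ := Finset.mem_Ico.1 hl
    obtain ⟨r, hr0, hr'⟩ := hd l hl1 (by omega)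
    rw [h.closingFactor_eq (l' := i) hd hl1 (by omega) hij.le (by omega),
      cross_mul_rotEdge (norm_closingFactor htri' hσ i) hr', ← neg_sub (θ i), Real.sin_neg, mul_neg,
      neg_lt_zero]
    exact mul_pos (mul_pos hr0 (hnsq i)) (hsin _ _ hl2 hi.le)
  refine ⟨u, ?_, hjoin⟩
  have hlt : ∀ i < n, ∀ m, 2 ≤ m → m < n → 0 < cross (u (i + 1) - u i) (u (i + m) - u i) := by
    intro i hi m hm hmn
    by_cases hcr : 0 < cross (w (i + 1) - w i) (w (i + m) - w i)
    · exact hpos'' i hi m hmn hcr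
    have hcorner : ¬ (SameDirection w i (n - 1) ∧ SameDirection w i n) := fun ⟨h1, h2⟩ => by
      have h3 := h1.cross_eq_zero h2
      have h0 : w n = w 0 := by simpa using hp 0
      rw [add_comm n, hp, h0] at h3
      exact h.corner_zero h3
    rcases sameDirection_or_of_cross_eq_zero hn hw hp hr hs (by omega) hmn
      (le_antisymm (not_lt.1 hcr) (hs i _)) with hd | hd
    · have hd' : ∀ l, i ≤ l → l < i + m → SameDirection w i l := fun l hl hlm => by
        have := hd (l - i) (by omega)
        rwa [Nat.add_sub_cancel' hl] at this
      refine hforward i (i + m) (by omega) ?_ hd'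
      by_contra! hlt
      exact hcorner ⟨hd' _ (by omega) (by omega), hd' _ (by omega) (by omega)⟩
    · have hd' : ∀ l, i + m ≤ l → l < i + n → SameDirection w i l := fun l hl hlm => by
        have := hd (l - i) (by omega) (by omega)
        rwa [Nat.add_sub_cancel' (by omega)] at this
      have hge : n ≤ i + m := by
        by_contra! hlt
        rcases Nat.eq_zero_or_pos i with rfl | hi0
        · refine hcorner ⟨hd' _ (by omega) (by omega), 1, one_pos, ?_⟩
          have h0 : w n = w 0 := by simpa using hp 0
          rw [add_comm n, hp, h0]; simp
        · exact hcorner ⟨hd' _ (by omega) (by omega), hd' _ (by omega) (by omega)⟩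
      have hback := hbackward i (i + m - n) (by omega) hi fun l hl hli => by
        rcases (show l ≤ i by omega).eq_or_lt with rfl | hli
        · exact SameDirection.refl w l
        · obtain ⟨r, hr0, hr'⟩ := hd' (l + n) (by omega) (by omega)
          rw [add_right_comm, hp, hp] at hr'
          exact ⟨r, hr0, hr'⟩
      rwa [← hpu (i + m - n), Nat.sub_add_cancel hge] at hback
  intro i m hm hmn
  have hmod : ∀ k, u (i + k) = u (i % n + k) := fun k => by
    rw [← apply_mod_of_periodic hpu (i + k), ← Nat.mod_add_mod, apply_mod_of_periodic hpu]
  have := hlt (i % n) (Nat.mod_lt _ (by omega)) m hm hmn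
  rwa [← hmod, ← hmod, apply_mod_of_periodic hpu] at this

/-- After a shift of the indices, a weakly convex chain has corners at `0` and at two further
vertices. -/
lemma exists_shift_isCornerTriple (hn : 3 ≤ n) (hw : EdgesSeparated n w)
    (hp : ∀ k, w (k + n) = w k) (hs : ∀ i, SupportsEdge w i) :
    ∃ a b c, IsCornerTriple n b c fun k => w (k + a) := by
  have hcorner : ∀ {i j : ℕ}, i < j → (∀ l, i ≤ l → l < j → SameDirection w i l) →
      0 < cross (w (i + 1) - w i) (w (j + 1) - w j) →
      cross (w (j - 1 + 1) - w (j - 1)) (w (j + 1) - w j) ≠ 0 := by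
    intro i j hij hd hc
    obtain ⟨r, hr, hr'⟩ := hd (j - 1) (by omega) (by omega)
    rw [hr', cross_smul_left]
    exact (mul_pos hr hc).ne'
  obtain ⟨a, ha0, -, hda, hca⟩ := exists_next_corner hn hw hp hs 0
  obtain ⟨b, hab, hbn, hdb, hcb⟩ := exists_next_corner hn hw hp hs a
  obtain ⟨c, hbc, -, hdc, hcc⟩ := exists_next_corner hn hw hp hs b
  have ha := hcorner ha0 hda hca
  have ha' : cross (w (a + n - 1 + 1) - w (a + n - 1)) (w (a + 1) - w a) ≠ 0 := by
    rw [show a + n - 1 = a - 1 + n by omega, add_right_comm, hp, hp]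
    exact ha
  obtain ⟨r, hr, hr'⟩ := exists_sub_eq_smul_of_sameDirection hab hdb
  obtain ⟨s, hs0, hs'⟩ := exists_sub_eq_smul_of_sameDirection hbc hdc
  have hcross : 0 < cross (w b - w a) (w c - w b) := by
    rw [hr', hs', cross_smul_left, cross_smul_right]; positivity
  have hcn : c < a + n := by
    by_contra! hge
    rcases hge.eq_or_lt with rfl | hlt
    · rw [hp, ← neg_sub (w b), ← neg_one_smul ℝ, cross_smul_right] at hcross
      simp at hcross
    · refine ha' ?_
      have := (hdc (a + n - 1) (by omega) (by omega)).cross_eq_zero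
        (hdc (a + n) (by omega) hlt)
      rwa [add_right_comm a n, hp, hp] at this
  refine ⟨a, b - a, c - a, by omega, by omega, by omega, ?_, ?_, ?_, ?_⟩
  · simp only [zero_add]
    rwa [show n - 1 + 1 + a = a + n - 1 + 1 by omega, show n - 1 + a = a + n - 1 by omega,
      add_comm 1 a]
  · have := hcorner hab hdb hcb
    rwa [show b - a - 1 + 1 + a = b - 1 + 1 by omega, show b - a - 1 + a = b - 1 by omega,
      show b - a + 1 + a = b + 1 by omega, show b - a + a = b by omega]
  · have := hcorner hbc hdc hcc
    rwa [show c - a - 1 + 1 + a = c - 1 + 1 by omega, show c - a - 1 + a = c - 1 by omega,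
      show c - a + 1 + a = c + 1 by omega, show c - a + a = c by omega]
  · simp only [zero_add]
    rwa [show b - a + a = b by omega, show c - a + a = c by omega]

end Strict

/-- Every separated planar chain can be moved to a strictly convex planar chain. -/
lemma exists_strictlyConvex {n : ℕ} {v : ℕ → ℂ} (F : Frame) (hn : 3 ≤ n)
    (hv : EdgesSeparated n v) (hp : ∀ k, v (k + n) = v k) :
    ∃ (G : Frame) (u : ℕ → ℂ), StrictlyConvex n u ∧
      JoinedIn (chainSpace n fun k => ‖v (k + 1) - v k‖) (F.lift v) (G.lift u) := by
  obtain ⟨G, w, hpw, hl, hw, hr, hs, hj⟩ := exists_supportsEdge F hn hv hp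
  obtain ⟨a, b, c, h⟩ := exists_shift_isCornerTriple hn hw hpw hs
  obtain ⟨u, hu, hju⟩ := h.exists_joinedIn_strictlyConvex G hn (hw.shift hn hpw a)
    (fun k => by rw [add_right_comm, hpw]) (hr.shift hpw a) fun i => (hs (i + a)).shift
  refine ⟨G, fun k => u (k + (a * n - a)), fun i m h2 hm => ?_, hj.trans ?_⟩
  · simp only [add_right_comm i _ (a * n - a)]
    exact hu _ m h2 hm
  · have hsum : ∀ k, k + (a * n - a) + a = k + a * n := fun k => by
      have : a ≤ a * n := Nat.le_mul_of_pos_right a (by omega)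
      omega
    convert hju.chainSpace_shift hn (a * n - a) using 1
    · congr 1
      funext k
      rw [add_right_comm _ 1 a, hsum, add_right_comm k _ 1, apply_add_mul_of_periodic hpw,
        apply_add_mul_of_periodic hpw, hl]
    · funext k
      simp only [Frame.lift, hsum, apply_add_mul_of_periodic hpw]
    · rfl

/-! ### Convex configurations and motions -/

namespace Frame

variable (F : Frame)

/-- The linear functional that is constant along the direction `d` in the coordinate plane. -/
lemma exists_functional (d : ℂ) :
    ∃ (f : E3 →ₗ[ℝ] ℝ) (r : ℝ), ∀ z : ℂ, f (F.pt z 0) = r - cross d z := by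
  obtain ⟨-, -, -, hab, -, -⟩ := F.inner_eq
  have ha : ‖F.a‖ = 1 := F.orthonormal.1 0
  have hb : ‖F.b‖ = 1 := F.orthonormal.1 1
  have hba : inner ℝ F.b F.a = (0 : ℝ) := by rw [real_inner_comm]; exact hab
  refine ⟨d.im • (innerSL ℝ F.a : E3 →ₗ[ℝ] ℝ) - d.re • (innerSL ℝ F.b : E3 →ₗ[ℝ] ℝ),
    d.im * inner ℝ F.a F.p - d.re * inner ℝ F.b F.p, fun z => ?_⟩
  simp [pt, cross, inner_add_right, inner_smul_right, ha, hb, hab, hba]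
  ring

lemma exists_plane : ∃ S : AffineSubspace ℝ E3, Module.finrank ℝ S.direction = 2 ∧
    ∀ z : ℂ, F.pt z 0 ∈ S := by
  refine ⟨AffineSubspace.mk' F.p (Submodule.span ℝ (range ![F.a, F.b])), ?_, fun z => ?_⟩
  · have h : LinearIndependent ℝ ![F.a, F.b] := by
      have hcomp : ![F.a, F.b] = ![F.a, F.b, F.c] ∘ Fin.castSucc := by
        funext i
        fin_cases i <;> rfl
      rw [hcomp]
      exact F.orthonormal.linearIndependent.comp _ (Fin.castSucc_injective 2)
    rw [AffineSubspace.direction_mk', finrank_span_eq_card h, Fintype.card_fin]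
  · rw [AffineSubspace.mem_mk', vsub_eq_sub,
      show F.pt z 0 - F.p = z.re • F.a + z.im • F.b by unfold pt; module]
    exact Submodule.add_mem _
      (Submodule.smul_mem _ _ (Submodule.subset_span ⟨0, rfl⟩))
      (Submodule.smul_mem _ _ (Submodule.subset_span ⟨1, rfl⟩))

lemma pt_zero_injective : Function.Injective fun z => F.pt z 0 := fun z z' h => by
  rw [← sub_eq_zero, ← norm_eq_zero, ← F.norm_pt_zero_sub]
  simpa [sub_eq_zero] using h

end Frame

/-- Every plane of space is the coordinate plane of a frame. -/
lemma exists_frame {S : AffineSubspace ℝ E3} (hS : Module.finrank ℝ S.direction = 2) {p : E3}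
    (hp : p ∈ S) : ∃ F : Frame, ∀ x ∈ S, ∃ z : ℂ, F.pt z 0 = x := by
  let e := (stdOrthonormalBasis ℝ S.direction).reindex (finCongr hS)
  have hbot : S.directionᗮ ≠ ⊥ := by
    intro h
    have h1 := S.direction.finrank_add_finrank_orthogonal
    rw [h, hS, finrank_bot, finrank_euclideanSpace_fin] at h1
    omega
  obtain ⟨q, hq, hq0⟩ := Submodule.exists_mem_ne_zero_of_ne_bot hbot
  have hn : ‖q‖ ≠ 0 := norm_ne_zero_iff.2 hq0
  have horth : ∀ x : S.direction, inner ℝ (x : E3) q = 0 := fun x =>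
    Submodule.inner_right_of_mem_orthogonal x.2 hq
  have horth' : ∀ x : S.direction, inner ℝ q (x : E3) = 0 := fun x =>
    Submodule.inner_left_of_mem_orthogonal x.2 hq
  have he : ∀ i j, inner ℝ (e i : E3) (e j : E3) = if i = j then (1 : ℝ) else 0 := fun i j =>
    orthonormal_iff_ite.1 e.orthonormal i j
  refine ⟨⟨p, e 0, e 1, ‖q‖⁻¹ • q, ?_⟩, fun x hx => ?_⟩
  · refine ⟨fun i => ?_, fun i j hij => ?_⟩
    · fin_cases i
      · exact e.orthonormal.1 0
      · exact e.orthonormal.1 1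
      · simp [norm_smul, hn]
    · fin_cases i <;> fin_cases j <;>
        simp [he, horth, horth', inner_smul_left, inner_smul_right] at hij ⊢
  · have hx' : x - p ∈ S.direction := S.vsub_mem_direction hx hp
    have h := congrArg Subtype.val (e.sum_repr ⟨x - p, hx'⟩)
    rw [Fin.sum_univ_two] at h
    refine ⟨⟨e.repr ⟨x - p, hx'⟩ 0, e.repr ⟨x - p, hx'⟩ 1⟩, ?_⟩
    simp only [Submodule.coe_add, Submodule.coe_smul] at h
    simp only [Frame.pt]
    rw [add_assoc p, h]
    simp

/-- A strictly convex planar chain, placed in space, is a convex configuration. -/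
lemma StrictlyConvex.isConvexConfiguration {n : ℕ} {u : ℕ → ℂ} (hu : StrictlyConvex n u)
    (hn : 3 ≤ n) (hp : ∀ k, u (k + n) = u k) (F : Frame) :
    IsConvexConfiguration n (F.lift u) := by
  have hindex : ∀ i j, i < n → j < n → j ≠ i → ∃ m, 0 < m ∧ m < n ∧ (i + m) % n = j ∧
      u (i + m) = u j := by
    intro i j hi hj hij
    obtain ⟨m, hm, h⟩ := exists_mod_add_eq (by omega : 0 < n) i j
    rw [Nat.mod_eq_of_lt hj] at h
    refine ⟨m, Nat.pos_of_ne_zero ?_, hm, h, by rw [← apply_mod_of_periodic hp, h]⟩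
    rintro rfl
    rw [add_zero, Nat.mod_eq_of_lt hi] at h
    exact hij h.symm
  have hside : ∀ i m, 0 < m → m < n → 0 ≤ cross (u (i + 1) - u i) (u (i + m) - u i) := by
    intro i m hm hmn
    rcases (show 1 ≤ m from hm).eq_or_lt with rfl | h2
    · simp
    · exact (hu i m h2 hmn).le
  refine ⟨?_, fun i hi => ?_, fun i hi => ?_⟩
  · obtain ⟨S, hS, h⟩ := F.exists_plane
    exact ⟨S, hS, fun i _ => h _⟩
  · have hprev : u (i + (n - 1) + 1) = u i := by rw [← hp i]; congr 1; omega
    obtain ⟨f, r, hf⟩ := F.exists_functional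
      ((u (i + 1) - u i) + (u (i + (n - 1) + 1) - u (i + (n - 1))))
    have hlt : ∀ m, 0 < m → m < n → f (F.lift u (i + m)) < f (F.lift u i) := by
      intro m hm hmn
      have h1 := hside i m hm hmn
      have h3 : u (i + (n - 1) + (m + 1)) = u (i + m) := by rw [← hp (i + m)]; congr 1; omega
      have h2 : 0 ≤ cross (u (i + (n - 1) + 1) - u (i + (n - 1)))
          (u (i + m) - u (i + (n - 1))) := by
        rcases (show m + 1 ≤ n by omega).eq_or_lt with h | h
        · rw [show m = n - 1 by omega]; simp
        · rw [← h3]; exact hside _ _ (by omega) h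
      have h4 : 0 < cross (u (i + 1) - u i) (u (i + m) - u i) +
          cross (u (i + (n - 1) + 1) - u (i + (n - 1))) (u (i + m) - u (i + (n - 1))) := by
        rcases (show 1 ≤ m from hm).eq_or_lt with rfl | hm2
        · have := hu (i + (n - 1)) 2 le_rfl (by omega)
          rw [show (2 : ℕ) = 1 + 1 from rfl, h3] at this
          linarith
        · linarith [hu i m hm2 hmn]
      simp only [Frame.lift, hf]
      rw [hprev] at h4 ⊢
      simp only [cross, Complex.add_re, Complex.add_im, Complex.sub_re, Complex.sub_im] at h4 ⊢
      linarith
    intro hmem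
    have hsub : {x | ∃ j, j < n ∧ j ≠ i ∧ x = F.lift u j} ⊆ {x | f x < f (F.lift u i)} := by
      rintro x ⟨j, hj, hji, rfl⟩
      obtain ⟨m, hm, hmn, -, h⟩ := hindex i j hi hj hji
      have := hlt m hm hmn
      rwa [Frame.lift, h] at this
    have hself : f (F.lift u i) < f (F.lift u i) :=
      convexHull_min hsub (convex_halfSpace_lt f.isLinear _) hmem
    exact hself.false
  · obtain ⟨f, r, hf⟩ := F.exists_functional (u (i + 1) - u i)
    refine ⟨f, ?_, fun j hj hji hji' => ?_⟩
    · simp only [Frame.lift, hf, apply_mod_of_periodic hp, cross]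
      simp only [Complex.sub_re, Complex.sub_im]
      ring
    · obtain ⟨m, hm, hmn, hmj, h⟩ := hindex i j hi hj hji
      have hm1 : m ≠ 1 := by rintro rfl; exact hji' hmj.symm
      have := hu i m (by omega) hmn
      rw [h, cross_sub_right] at this
      simp only [Frame.lift, hf]
      linarith

/-- A path of separated chains is a motion. -/
lemma exists_isClosedChainMotion {n : ℕ} (hn : 3 ≤ n) {v x y : ℕ → E3} (hx : ∀ i < n, x i = v i)
    (h : JoinedIn (chainSpace n fun k => ‖x (k + 1) - x k‖) x y) :
    ∃ γ : ℝ → ℕ → E3, IsClosedChainMotion n v γ ∧ γ 1 = y := by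
  obtain ⟨γ, hγ⟩ := h
  have hmem : ∀ t, γ.extend t ∈ chainSpace n fun k => ‖x (k + 1) - x k‖ := fun t => hγ _
  have hpx : ∀ i, x (i + n) = x i := by
    have := (hγ 0).1
    simpa using this
  refine ⟨γ.extend, ⟨fun i _ => ?_, fun i hi => ?_, fun t _ => ?_, fun t _ i hi => ?_⟩,
    γ.extend_one⟩
  · exact ((continuous_apply i).comp γ.continuous_extend).continuousOn
  · rw [γ.extend_zero, hx i hi]
  · exact (hmem t).2.1.isSimpleClosedChain hn (hmem t).1
  · rw [apply_mod_of_periodic (hmem t).1, (hmem t).2.2, ← hx i hi,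
      ← hx _ (Nat.mod_lt _ (by omega)), apply_mod_of_periodic hpx]

lemma IsSimpleClosedChain.congr {n : ℕ} {v x : ℕ → E3} (hv : IsSimpleClosedChain n v)
    (h : ∀ i < n, x i = v i) : IsSimpleClosedChain n x := by
  obtain ⟨hn, hinj, hseg⟩ := hv
  have hmod : ∀ i, x (i % n) = v (i % n) := fun i => h _ (Nat.mod_lt _ (by omega))
  refine ⟨hn, fun i j hi hj hij => by rw [h i hi, h j hj]; exact hinj i j hi hj hij,
    fun i j hij hj => ?_⟩
  rw [hmod, hmod, h i (by omega), h j hj, h 0 (by omega)]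
  exact hseg i j hij hj

/-- Every simple closed polygonal chain lying in a plane of ℝ³
(a planar simple polygon) can be convexified by a motion in ℝ³. -/
theorem convexifiable_of_planar (n : ℕ) (v : ℕ → E3)
    (hsimple : IsSimpleClosedChain n v)
    (S : AffineSubspace ℝ E3) (hS : Module.finrank ℝ S.direction = 2)
    (hplanar : ∀ i, i < n → v i ∈ S) :
    CanBeConvexified n v := by
  have hn : 3 ≤ n := hsimple.1
  obtain ⟨F, hF⟩ := exists_frame hS (hplanar 0 (by omega))
  choose z hz using fun k => hF _ (hplanar (k % n) (Nat.mod_lt k (by omega)))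
  have hlift : ∀ i < n, F.lift z i = v i := fun i hi => by
    rw [Frame.lift, hz, Nat.mod_eq_of_lt hi]
  have hpz : ∀ k, z (k + n) = z k := fun k => F.pt_zero_injective (by simp [hz])
  have hsep : EdgesSeparated n z := by
    have h := (hsimple.congr hlift).edgesSeparated fun k => by simp only [Frame.lift, hpz]
    refine Expands.edgesSeparated (fun i j s _ t _ => le_of_eq ?_) h
    rw [F.edgePoint_lift, F.edgePoint_lift, F.norm_pt_zero_sub]
  obtain ⟨G, u, hu, hj⟩ := exists_strictlyConvex F hn hsep hpz
  have hpu : ∀ k, u (k + n) = u k := fun k => G.pt_zero_injective (hj.target_mem.1 k)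
  obtain ⟨γ, hγ, hγ1⟩ := exists_isClosedChainMotion hn hlift (y := G.lift u) (by
    simpa only [Frame.lift, F.norm_pt_zero_sub] using hj)
  exact ⟨γ, hγ, by rw [hγ1]; exact hu.isConvexConfiguration hn hpu G⟩
end
end
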